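/- Let R : P₂ → ℝ be Lebesgue measurable and C ∈ ℝ. There exists a Lebesgue measurable L : (0,1) → ℝ solving the perturbed Spence-Abel system almost everywhere with data (R, C) if and only if R satisfies the 6-term equation almost everywhere and the symmetry equation almost everywhere. -/

import Mathlib

open MeasureTheory Set

/-- The parameter space `P₂ = {(x,y) : 0 < x < y < 1}`. -/
def P2 : Set (ℝ × ℝ) := {p | 0 < p.1 ∧ p.1 < p.2 ∧ p.2 < 1}

/-- The parameter space `P₃ = {(x,y,z) : 0 < x < y < z < 1}`. -/
def P3 : Set (ℝ × ℝ × ℝ) := {p | 0 < p.1 ∧ p.1 < p.2.1 ∧ p.2.1 < p.2.2 ∧ p.2.2 < 1}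

/-- `L` solves the perturbed Spence–Abel system almost everywhere with data `(R, C)`. -/
def SolvesAE (R : ℝ × ℝ → ℝ) (C : ℝ) (L : ℝ → ℝ) : Prop :=
  (∀ᵐ p ∂(volume.restrict P2),
    L p.1 - L p.2 - L (p.1 / p.2) - L ((p.2 - 1) / (p.1 - 1))
      + L (p.1 * (p.2 - 1) / (p.2 * (p.1 - 1))) = R p) ∧
  (∀ᵐ x ∂(volume.restrict (Set.Ioo (0:ℝ) 1)), L (1 - x) = C - L x)

/-- `R` satisfies the 6-term equation almost everywhere on `P₃`. -/
def SixTermAE (R : ℝ × ℝ → ℝ) : Prop :=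
  ∀ᵐ p ∂(volume.restrict P3),
    R (p.1, p.2.1) - R (p.1, p.2.2) + R (p.2.1, p.2.2)
      - R (p.1 / p.2.2, p.2.1 / p.2.2)
      - R ((p.2.2 - 1) / (p.1 - 1), (p.2.2 - 1) / (p.2.1 - 1))
      + R (p.1 * (p.2.2 - 1) / (p.2.2 * (p.1 - 1)),
           p.2.1 * (p.2.2 - 1) / (p.2.2 * (p.2.1 - 1))) = 0

/-- `R` satisfies the symmetry equation almost everywhere on `P₂`. -/
def SymmAE (R : ℝ × ℝ → ℝ) : Prop :=
  ∀ᵐ p ∂(volume.restrict P2), R (1 - p.2, (1 - p.2) / (1 - p.1)) = R p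


/-- five-term expression -/
noncomputable def d5 (L : ℝ → ℝ) (p : ℝ × ℝ) : ℝ :=
  L p.1 - L p.2 - L (p.1 / p.2) - L ((1 - p.2) / (1 - p.1))
    + L (p.1 * (1 - p.2) / (p.2 * (1 - p.1)))

/-- six-term expression -/
noncomputable def d6 (R : ℝ × ℝ → ℝ) (v x y : ℝ) : ℝ :=
  R (v, x) - R (v, y) + R (x, y) - R (v / y, x / y)
    - R ((1 - y) / (1 - v), (1 - y) / (1 - x))
    + R (v * (1 - y) / (y * (1 - v)), x * (1 - y) / (y * (1 - x)))

lemma flip_div (x y : ℝ) : (y - 1) / (x - 1) = (1 - y) / (1 - x) := by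
  rw [← neg_sub 1 y, ← neg_sub 1 x, neg_div_neg_eq]

lemma flip_div2 (x y : ℝ) : x * (y - 1) / (y * (x - 1)) = x * (1 - y) / (y * (1 - x)) := by
  rw [← neg_sub 1 y, ← neg_sub 1 x, mul_neg, mul_neg, neg_div_neg_eq]

lemma flip_div3 (x z : ℝ) : x * (z - 1) / (z * (x - 1)) = x * (1 - z) / (z * (1 - x)) := 
  flip_div2 x z

lemma solvesAE_iff (R : ℝ × ℝ → ℝ) (C : ℝ) (L : ℝ → ℝ) : SolvesAE R C L ↔
    (∀ᵐ p ∂(volume.restrict P2), d5 L p = R p) ∧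
  (∀ᵐ x ∂(volume.restrict (Set.Ioo (0:ℝ) 1)), L (1 - x) = C - L x) := by
  unfold SolvesAE d5
  simp only [flip_div2, flip_div]

lemma sixTermAE_iff (R : ℝ × ℝ → ℝ) : SixTermAE R ↔
    ∀ᵐ p ∂(volume.restrict P3), d6 R p.1 p.2.1 p.2.2 = 0 := by
  unfold SixTermAE d6
  simp only [flip_div2, flip_div]

lemma d6_d5 (L : ℝ → ℝ) (v x y : ℝ) (hv : 0 < v) (hx : v < x) (hy : x < y) (h1 : y < 1) :
    d6 (d5 L) v x y = 0 := by
  have a1 : (1 - v) ≠ 0 := by linarith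
  have a2 : (1 - x) ≠ 0 := by linarith
  have a3 : (1 - y) ≠ 0 := by linarith
  have a4 : y - x ≠ 0 := by linarith
  have a5 : y - v ≠ 0 := by linarith
  have a6 : x - v ≠ 0 := by linarith
  have a7 : v ≠ 0 := by linarith
  have a8 : x ≠ 0 := by linarith
  have a9 : y ≠ 0 := by linarith
  have b1 : 1 - v / y = (y - v) / y := by field_simp
  have b2 : 1 - x / y = (y - x) / y := by field_simp
  have b3 : 1 - (1 - y) / (1 - v) = (y - v) / (1 - v) := by field_simp; ring
  have b4 : 1 - (1 - y) / (1 - x) = (y - x) / (1 - x) := by field_simp; ring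
  have b5 : 1 - v * (1 - y) / (y * (1 - v)) = (y - v) / (y * (1 - v)) := by field_simp; ring
  have b6 : 1 - x * (1 - y) / (y * (1 - x)) = (y - x) / (y * (1 - x)) := by field_simp; ring
  have c1 : v / y / (x / y) = v / x := by field_simp
  have c2 : (y - x) / y / ((y - v) / y) = (y - x) / (y - v) := by field_simp
  have c3 : v / y * ((y - x) / y) / (x / y * ((y - v) / y)) = v * (y - x) / (x * (y - v)) := by
    field_simp
  have c4 : (1 - y) / (1 - v) / ((1 - y) / (1 - x)) = (1 - x) / (1 - v) := by field_simp
  have c5 : (y - x) / (1 - x) / ((y - v) / (1 - v)) = (y - x) * (1 - v) / ((1 - x) * (y - v)) := by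
    field_simp
  have c6 : (1 - y) / (1 - v) * ((y - x) / (1 - x)) / ((1 - y) / (1 - x) * ((y - v) / (1 - v)))
     = (y - x) / (y - v) := by field_simp
  have c7 : v * (1 - y) / (y * (1 - v)) / (x * (1 - y) / (y * (1 - x)))
     = v * (1 - x) / (x * (1 - v)) := by field_simp
  have c8 : (y - x) / (y * (1 - x)) / ((y - v) / (y * (1 - v)))
     = (y - x) * (1 - v) / ((1 - x) * (y - v)) := by field_simp
  have c9 : v * (1 - y) / (y * (1 - v)) * ((y - x) / (y * (1 - x))) /
     (x * (1 - y) / (y * (1 - x)) * ((y - v) / (y * (1 - v)))) = v * (y - x) / (x * (y - v)) := by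
    field_simp
  unfold d6 d5
  simp only [b1, b2, b3, b4, b5, b6, c1, c2, c3, c4, c5, c6, c7, c8, c9]
  ring

lemma d6_add (R S : ℝ × ℝ → ℝ) (v x y : ℝ) :
    d6 (fun p => R p + S p) v x y = d6 R v x y + d6 S v x y := by
  unfold d6; ring

lemma d6_sub (R S : ℝ × ℝ → ℝ) (v x y : ℝ) :
    d6 (fun p => R p - S p) v x y = d6 R v x y - d6 S v x y := by
  unfold d6; ring

/-! Möbius images stay in the simplex -/

lemma mp_div {v x y : ℝ} (hv : 0 < v) (hx : v < x) (hy : x < y) :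
    (v / y, x / y) ∈ P2 := by
  have : 0 < y := by linarith
  refine ⟨by positivity, ?_, ?_⟩
  · exact (div_lt_div_iff_of_pos_right this).2 hx
  · exact (div_lt_one this).2 hy

lemma mp_phi {v x y : ℝ} (hx : v < x) (hy : x < y) (h1 : y < 1) :
    ((1 - y) / (1 - v), (1 - y) / (1 - x)) ∈ P2 := by
  have e1 : 0 < 1 - v := by linarith
  have e2 : 0 < 1 - x := by linarith
  have e3 : 0 < 1 - y := by linarith
  refine ⟨by positivity, ?_, ?_⟩
  · exact div_lt_div_of_pos_left e3 e2 (by linarith)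
  · exact (div_lt_one e2).2 (by linarith)

lemma mp_psi {v x y : ℝ} (hv : 0 < v) (hx : v < x) (hy : x < y) (h1 : y < 1) :
    (v * (1 - y) / (y * (1 - v)), x * (1 - y) / (y * (1 - x))) ∈ P2 := by
  have e1 : 0 < 1 - v := by linarith
  have e2 : 0 < 1 - x := by linarith
  have e3 : 0 < 1 - y := by linarith
  have e4 : 0 < y := by linarith
  refine ⟨by positivity, ?_, ?_⟩
  · simp only
    rw [div_lt_div_iff₀ (by positivity) (by positivity)]
    have : 0 < (x - v) * (y * (1 - y)) := mul_pos (by linarith) (by positivity)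
    nlinarith
  · simp only
    rw [div_lt_one (by positivity)]; nlinarith

lemma isOpen_P2 : IsOpen P2 := by
  have : P2 = {p : ℝ × ℝ | 0 < p.1} ∩ ({p | p.1 < p.2} ∩ {p | p.2 < 1}) := by
    ext; simp [P2]
  rw [this]
  exact (isOpen_lt (by fun_prop) (by fun_prop)).inter
    ((isOpen_lt (by fun_prop) (by fun_prop)).inter (isOpen_lt (by fun_prop) (by fun_prop)))

lemma isOpen_P3 : IsOpen P3 := by
  have : P3 = {p : ℝ × ℝ × ℝ | 0 < p.1} ∩ ({p | p.1 < p.2.1} ∩ ({p | p.2.1 < p.2.2} ∩ {p | p.2.2 < 1})) := by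
    ext; simp [P3]
  rw [this]
  exact (isOpen_lt (by fun_prop) (by fun_prop)).inter
    ((isOpen_lt (by fun_prop) (by fun_prop)).inter ((isOpen_lt (by fun_prop) (by fun_prop)).inter (isOpen_lt (by fun_prop) (by fun_prop))))

lemma meas_P2 : MeasurableSet P2 := isOpen_P2.measurableSet
lemma meas_P3 : MeasurableSet P3 := isOpen_P3.measurableSet

/-! null sets -/

lemma ae_pull_same {E : Type*} [NormedAddCommGroup E] [NormedSpace ℝ E] [FiniteDimensional ℝ E]
    [MeasurableSpace E] [BorelSpace E] (μ : Measure E) [μ.IsAddHaarMeasure]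
    (F G : E → E) (U V : Set E) (hU : MeasurableSet U)
    (hG : DifferentiableOn ℝ G V) (hm : ∀ p ∈ U, F p ∈ V) (hinv : ∀ p ∈ U, G (F p) = p)
    (Q : E → Prop) (hQ : ∀ᵐ q ∂μ, q ∈ V → Q q) : ∀ᵐ p ∂(μ.restrict U), Q (F p) := by
  rw [ae_restrict_iff' hU]
  have h0 : μ {q | ¬ (q ∈ V → Q q)} = 0 := hQ
  have h1 := addHaar_image_eq_zero_of_differentiableOn_of_addHaar_eq_zero μ
    (f := G) (s := {q | ¬ (q ∈ V → Q q)}) (hG.mono (fun q hq => by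
      simp only [mem_ofPred_eq, not_forall] at hq; exact hq.1)) h0
  refine measure_mono_null ?_ h1
  intro p hp
  simp only [mem_compl_iff, mem_ofPred_eq, not_forall] at hp
  obtain ⟨hpU, hpQ⟩ := hp
  refine ⟨F p, ?_, hinv p hpU⟩
  simp only [mem_ofPred_eq, not_forall]
  exact ⟨hm p hpU, hpQ⟩

lemma ae_lift3 (V : Set (ℝ × ℝ)) (Q : ℝ × ℝ → Prop) (hV : MeasurableSet V)
    (hQ : ∀ᵐ q ∂(volume.restrict V), Q q) :
    ∀ᵐ q : ℝ × ℝ × ℝ, (q.1, q.2.1) ∈ V → Q (q.1, q.2.1) := by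
  rw [ae_restrict_iff' hV] at hQ
  have h1 : Measure.QuasiMeasurePreserving (fun q : ℝ × ℝ × ℝ => (q.1, q.2.1)) volume volume := by
    have a := (MeasureTheory.volume_preserving_prodAssoc (α₁ := ℝ) (β₁ := ℝ) (γ₁ := ℝ)).symm
    have b : Measure.QuasiMeasurePreserving (Prod.fst : (ℝ × ℝ) × ℝ → ℝ × ℝ) volume volume :=
      Measure.quasiMeasurePreserving_fst
    exact b.comp a.quasiMeasurePreserving
  exact h1.ae hQ

lemma ae_lift2 (V : Set ℝ) (Q : ℝ → Prop) (hV : MeasurableSet V)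
    (hQ : ∀ᵐ q ∂(volume.restrict V), Q q) :
    ∀ᵐ q : ℝ × ℝ, q.1 ∈ V → Q q.1 := by
  rw [ae_restrict_iff' hV] at hQ
  have b : Measure.QuasiMeasurePreserving (Prod.fst : ℝ × ℝ → ℝ) volume volume :=
      Measure.quasiMeasurePreserving_fst
  exact b.ae hQ

instance haar3 : (volume : Measure (ℝ × ℝ × ℝ)).IsAddHaarMeasure := by
  haveI : (volume : Measure (ℝ × ℝ)).IsAddHaarMeasure := inferInstance
  exact Measure.prod.instIsAddHaarMeasure (volume : Measure ℝ) (volume : Measure (ℝ × ℝ))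

/-- pull back from `P2` to `P3`. -/
lemma pull32 (F G : ℝ × ℝ × ℝ → ℝ × ℝ × ℝ) (V : Set (ℝ × ℝ × ℝ))
    (hG : DifferentiableOn ℝ G V) (hm : ∀ p ∈ P3, F p ∈ V ∧ ((F p).1, (F p).2.1) ∈ P2)
    (hinv : ∀ p ∈ P3, G (F p) = p)
    (Q : ℝ × ℝ → Prop) (hQ : ∀ᵐ q ∂(volume.restrict P2), Q q) :
    ∀ᵐ p ∂(volume.restrict P3), Q ((F p).1, (F p).2.1) := by
  refine ae_pull_same volume F G P3 (V ∩ {q | (q.1, q.2.1) ∈ P2}) meas_P3 (hG.mono inter_subset_left) hm hinv 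
    (fun q => Q (q.1, q.2.1)) ?_
  filter_upwards [ae_lift3 P2 Q meas_P2 hQ] with q hq h
  exact hq h.2

/-- pull back from `(0,1)` to `P2`. -/
lemma pull21 (F G : ℝ × ℝ → ℝ × ℝ) (V : Set (ℝ × ℝ))
    (hG : DifferentiableOn ℝ G V) (hm : ∀ p ∈ P2, F p ∈ V ∧ (F p).1 ∈ Ioo (0:ℝ) 1)
    (hinv : ∀ p ∈ P2, G (F p) = p)
    (Q : ℝ → Prop) (hQ : ∀ᵐ q ∂(volume.restrict (Ioo (0:ℝ) 1)), Q q) :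
    ∀ᵐ p ∂(volume.restrict P2), Q (F p).1 := by
  refine ae_pull_same volume F G P2 (V ∩ {q | q.1 ∈ Ioo (0:ℝ) 1}) meas_P2 (hG.mono inter_subset_left) hm hinv 
    (fun q => Q q.1) ?_
  filter_upwards [ae_lift2 _ Q measurableSet_Ioo hQ] with q hq h
  exact hq h.2


lemma pl_12 (Q : ℝ × ℝ → Prop) (hQ : ∀ᵐ q ∂(volume.restrict P2), Q q) : ∀ᵐ p ∂(volume.restrict P3), Q (p.1, p.2.1) :=
  pull32 (fun p => p) (fun p => p) univ (by fun_prop)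
    (fun p hp => ⟨trivial, hp.1, hp.2.1, hp.2.2.1.trans hp.2.2.2⟩) (fun p hp => rfl) Q hQ

lemma pl_13 (Q : ℝ × ℝ → Prop) (hQ : ∀ᵐ q ∂(volume.restrict P2), Q q) : ∀ᵐ p ∂(volume.restrict P3), Q (p.1, p.2.2) :=
  pull32 (fun p => (p.1, p.2.2, p.2.1)) (fun p => (p.1, p.2.2, p.2.1)) univ (by fun_prop)
    (fun p hp => ⟨trivial, hp.1, hp.2.1.trans hp.2.2.1, hp.2.2.2⟩) (fun p hp => rfl) Q hQ

lemma pl_23 (Q : ℝ × ℝ → Prop) (hQ : ∀ᵐ q ∂(volume.restrict P2), Q q) : ∀ᵐ p ∂(volume.restrict P3), Q (p.2.1, p.2.2) :=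
  pull32 (fun p => (p.2.1, p.2.2, p.1)) (fun p => (p.2.2, p.1, p.2.1)) univ (by fun_prop)
    (fun p hp => ⟨trivial, hp.1.trans hp.2.1, hp.2.2.1, hp.2.2.2⟩) (fun p hp => rfl) Q hQ

lemma pl_div (Q : ℝ × ℝ → Prop) (hQ : ∀ᵐ q ∂(volume.restrict P2), Q q) : ∀ᵐ p ∂(volume.restrict P3), Q (p.1 / p.2.2, p.2.1 / p.2.2) :=
  pull32 (fun p => (p.1 / p.2.2, p.2.1 / p.2.2, p.2.2))
    (fun p => (p.1 * p.2.2, p.2.1 * p.2.2, p.2.2)) univ (by fun_prop)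
    (fun p hp => ⟨trivial, mp_div hp.1 hp.2.1 hp.2.2.1⟩)
    (fun p hp => by
      have : p.2.2 ≠ 0 := by linarith [hp.1, hp.2.1, hp.2.2.1]
      ext <;> simp [this]) Q hQ

lemma pl_phi (Q : ℝ × ℝ → Prop) (hQ : ∀ᵐ q ∂(volume.restrict P2), Q q) : ∀ᵐ p ∂(volume.restrict P3),
    Q ((1 - p.2.2) / (1 - p.1), (1 - p.2.2) / (1 - p.2.1)) :=
  pull32 (fun p => ((1 - p.2.2) / (1 - p.1), (1 - p.2.2) / (1 - p.2.1), p.2.2))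
    (fun p => (1 - (1 - p.2.2) / p.1, 1 - (1 - p.2.2) / p.2.1, p.2.2))
    {p | p.1 ≠ 0 ∧ p.2.1 ≠ 0}
    (fun p hp => DifferentiableAt.differentiableWithinAt (by
      obtain ⟨h1, h2⟩ := hp
      fun_prop (disch := assumption)))
    (fun p hp => by
      have := mp_phi hp.2.1 hp.2.2.1 hp.2.2.2
      exact ⟨⟨this.1.ne', (this.1.trans this.2.1).ne'⟩, this⟩)
    (fun p hp => by
      obtain ⟨h1, h2, h3, h4⟩ := hp
      have a1 : 1 - p.1 ≠ 0 := by linarith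
      have a2 : 1 - p.2.1 ≠ 0 := by linarith
      have a3 : 1 - p.2.2 ≠ 0 := by linarith
      ext
      · simp only; field_simp; ring
      · simp only; field_simp; ring
      · rfl) Q hQ

lemma pl_psi (Q : ℝ × ℝ → Prop) (hQ : ∀ᵐ q ∂(volume.restrict P2), Q q) : ∀ᵐ p ∂(volume.restrict P3),
    Q (p.1 * (1 - p.2.2) / (p.2.2 * (1 - p.1)), p.2.1 * (1 - p.2.2) / (p.2.2 * (1 - p.2.1))) :=
  pull32 (fun p => (p.1 * (1 - p.2.2) / (p.2.2 * (1 - p.1)), p.2.1 * (1 - p.2.2) / (p.2.2 * (1 - p.2.1)), p.2.2))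
    (fun p => (p.1 * p.2.2 / (1 - p.2.2 + p.1 * p.2.2), p.2.1 * p.2.2 / (1 - p.2.2 + p.2.1 * p.2.2), p.2.2))
    {p | (1 - p.2.2 + p.1 * p.2.2) ≠ 0 ∧ 1 - p.2.2 + p.2.1 * p.2.2 ≠ 0}
    (fun p hp => DifferentiableAt.differentiableWithinAt (by
      obtain ⟨h1, h2⟩ := hp
      fun_prop (disch := assumption)))
    (fun p hp => by
      have := mp_psi hp.1 hp.2.1 hp.2.2.1 hp.2.2.2
      obtain ⟨h1, h2, h3, h4⟩ := hp
      have a3 : 0 < p.2.2 := by linarith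
      have a4 := mul_pos this.1 a3
      have a5 := mul_pos (this.1.trans this.2.1) a3
      simp only at a4 a5
      refine ⟨⟨?_, ?_⟩, this⟩
      · simp only; linarith
      · simp only; linarith)
    (fun p hp => by
      obtain ⟨h1, h2, h3, h4⟩ := hp
      have a1 : 1 - p.1 ≠ 0 := by linarith
      have a2 : 1 - p.2.1 ≠ 0 := by linarith
      have a3 : 1 - p.2.2 ≠ 0 := by linarith
      have a4 : p.2.2 ≠ 0 := by linarith
      have e1 : 1 - p.2.2 + p.1 * (1 - p.2.2) / (p.2.2 * (1 - p.1)) * p.2.2 = (1 - p.2.2) / (1 - p.1) := by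
        field_simp; ring
      have e2 : 1 - p.2.2 + p.2.1 * (1 - p.2.2) / (p.2.2 * (1 - p.2.1)) * p.2.2 = (1 - p.2.2) / (1 - p.2.1) := by
        field_simp; ring
      ext
      · simp only [e1]; field_simp
      · simp only [e2]; field_simp
      · rfl) Q hQ


lemma pq_1 (Q : ℝ → Prop) (hQ : ∀ᵐ q ∂(volume.restrict (Ioo (0:ℝ) 1)), Q q) : ∀ᵐ p ∂(volume.restrict P2), Q p.1 :=
  pull21 (fun p => p) (fun p => p) univ (by fun_prop)
    (fun p hp => ⟨trivial, hp.1, hp.2.1.trans hp.2.2⟩) (fun p hp => rfl) Q hQ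

lemma pq_2 (Q : ℝ → Prop) (hQ : ∀ᵐ q ∂(volume.restrict (Ioo (0:ℝ) 1)), Q q) : ∀ᵐ p ∂(volume.restrict P2), Q p.2 :=
  pull21 (fun p => (p.2, p.1)) (fun p => (p.2, p.1)) univ (by fun_prop)
    (fun p hp => ⟨trivial, hp.1.trans hp.2.1, hp.2.2⟩) (fun p hp => rfl) Q hQ

lemma pq_div (Q : ℝ → Prop) (hQ : ∀ᵐ q ∂(volume.restrict (Ioo (0:ℝ) 1)), Q q) : ∀ᵐ p ∂(volume.restrict P2), Q (p.1 / p.2) :=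
  pull21 (fun p => (p.1 / p.2, p.2)) (fun p => (p.1 * p.2, p.2)) univ (by fun_prop)
    (fun p hp => ⟨trivial, div_pos hp.1 (hp.1.trans hp.2.1),
      (div_lt_one (hp.1.trans hp.2.1)).2 hp.2.1⟩)
    (fun p hp => by
      have : p.2 ≠ 0 := by linarith [hp.1, hp.2.1]
      ext <;> simp [this]) Q hQ

lemma pq_phi (Q : ℝ → Prop) (hQ : ∀ᵐ q ∂(volume.restrict (Ioo (0:ℝ) 1)), Q q) : ∀ᵐ p ∂(volume.restrict P2), Q ((1 - p.2) / (1 - p.1)) :=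
  pull21 (fun p => ((1 - p.2) / (1 - p.1), p.2))
    (fun p => (1 - (1 - p.2) / p.1, p.2)) {p | p.1 ≠ 0}
    (fun p hp => DifferentiableAt.differentiableWithinAt (by
      have h1 : p.1 ≠ 0 := hp
      fun_prop (disch := assumption)))
    (fun p hp => by
      obtain ⟨h1, h2, h3⟩ := hp
      have : 0 < (1 - p.2) / (1 - p.1) := div_pos (by linarith) (by linarith)
      exact ⟨this.ne', this, (div_lt_one (by linarith)).2 (by linarith)⟩)
    (fun p hp => by
      obtain ⟨h1, h2, h3⟩ := hp
      have a1 : 1 - p.1 ≠ 0 := by linarith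
      have a2 : 1 - p.2 ≠ 0 := by linarith
      ext
      · simp only; field_simp; ring
      · rfl) Q hQ

lemma pq_psi (Q : ℝ → Prop) (hQ : ∀ᵐ q ∂(volume.restrict (Ioo (0:ℝ) 1)), Q q) : ∀ᵐ p ∂(volume.restrict P2), Q (p.1 * (1 - p.2) / (p.2 * (1 - p.1))) :=
  pull21 (fun p => (p.1 * (1 - p.2) / (p.2 * (1 - p.1)), p.2))
    (fun p => (p.1 * p.2 / (1 - p.2 + p.1 * p.2), p.2)) {p | 1 - p.2 + p.1 * p.2 ≠ 0}
    (fun p hp => DifferentiableAt.differentiableWithinAt (by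
      have h1 : 1 - p.2 + p.1 * p.2 ≠ 0 := hp
      fun_prop (disch := assumption)))
    (fun p hp => by
      obtain ⟨h1, h2, h3⟩ := hp
      have a1 : 0 < 1 - p.1 := by linarith
      have a2 : 0 < 1 - p.2 := by linarith
      have a3 : 0 < p.2 := by linarith
      have e1 : 1 - p.2 + p.1 * (1 - p.2) / (p.2 * (1 - p.1)) * p.2 = (1 - p.2) / (1 - p.1) := by
        field_simp; ring
      refine ⟨?_, by positivity, ?_⟩
      · simp only [mem_ofPred_eq, e1]; positivity
      · simp only; rw [div_lt_one (by positivity)]; nlinarith)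
    (fun p hp => by
      obtain ⟨h1, h2, h3⟩ := hp
      have a1 : 1 - p.1 ≠ 0 := by linarith
      have a2 : 1 - p.2 ≠ 0 := by linarith
      have a3 : p.2 ≠ 0 := by linarith
      have e1 : 1 - p.2 + p.1 * (1 - p.2) / (p.2 * (1 - p.1)) * p.2 = (1 - p.2) / (1 - p.1) := by
        field_simp; ring
      ext
      · simp only [e1]; field_simp
      · rfl) Q hQ

lemma ae_P3 {Q : ℝ × ℝ × ℝ → Prop} (h : ∀ p ∈ P3, Q p) : ∀ᵐ p ∂(volume.restrict P3), Q p :=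
  (ae_restrict_iff' meas_P3).2 (Filter.Eventually.of_forall h)

lemma ae_P2 {Q : ℝ × ℝ → Prop} (h : ∀ p ∈ P2, Q p) : ∀ᵐ p ∂(volume.restrict P2), Q p :=
  (ae_restrict_iff' meas_P2).2 (Filter.Eventually.of_forall h)

/-- transfer of the six-term equation along a.e. equality -/
lemma d6_congr_ae {R S : ℝ × ℝ → ℝ} (h : ∀ᵐ p ∂(volume.restrict P2), R p = S p) :
    ∀ᵐ p ∂(volume.restrict P3), d6 R p.1 p.2.1 p.2.2 = d6 S p.1 p.2.1 p.2.2 := by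
  filter_upwards [pl_12 _ h, pl_13 _ h, pl_23 _ h, pl_div _ h, pl_phi _ h, pl_psi _ h] with p
    h1 h2 h3 h4 h5 h6
  unfold d6
  rw [h1, h2, h3, h4, h5, h6]

lemma d6_d5_ae (L : ℝ → ℝ) : ∀ᵐ p ∂(volume.restrict P3), d6 (d5 L) p.1 p.2.1 p.2.2 = 0 :=
  ae_P3 fun p hp => d6_d5 L _ _ _ hp.1 hp.2.1 hp.2.2.1 hp.2.2.2

/-- the pull back along the symmetry -/
lemma pl_sym (Q : ℝ × ℝ → Prop) (hQ : ∀ᵐ q ∂(volume.restrict P2), Q q) :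
    ∀ᵐ p ∂(volume.restrict P2), Q (1 - p.2, (1 - p.2) / (1 - p.1)) := by
  rw [ae_restrict_iff' meas_P2] at hQ
  refine ae_pull_same volume (fun p => (1 - p.2, (1 - p.2) / (1 - p.1)))
    (fun p => (1 - p.1 / p.2, 1 - p.1)) P2 P2 meas_P2 ?_ ?_ ?_ Q hQ
  · intro p hp
    apply DifferentiableAt.differentiableWithinAt
    have : p.2 ≠ 0 := by linarith [hp.1, hp.2.1]
    fun_prop (disch := assumption)
  · rintro p ⟨h1, h2, h3⟩
    have a1 : 0 < 1 - p.1 := by linarith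
    refine ⟨by simp only; linarith, ?_, ?_⟩
    · simp only; rw [lt_div_iff₀ a1]; nlinarith
    · simp only; rw [div_lt_one a1]; linarith
  · rintro p ⟨h1, h2, h3⟩
    have a1 : 1 - p.1 ≠ 0 := by linarith
    have a2 : 1 - p.2 ≠ 0 := by linarith
    ext
    · simp only; field_simp; ring
    · simp

lemma d5_sym (L : ℝ → ℝ) (x y : ℝ) (hx : 0 < x) (hy : x < y) (h1 : y < 1) :
    d5 L (1 - y, (1 - y) / (1 - x)) - d5 L (x, y) =
      (L (1 - y) + L y) - (L (1 - x) + L x)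
      - (L (1 - x * (1 - y) / (y * (1 - x))) + L (x * (1 - y) / (y * (1 - x))))
      + (L (1 - x / y) + L (x / y)) := by
  have a2 : (1 - x) ≠ 0 := by linarith
  have a3 : (1 - y) ≠ 0 := by linarith
  have a4 : y - x ≠ 0 := by linarith
  have a8 : x ≠ 0 := by linarith
  have a9 : y ≠ 0 := by linarith
  have b2 : 1 - x / y = (y - x) / y := by field_simp
  have b4 : 1 - (1 - y) / (1 - x) = (y - x) / (1 - x) := by field_simp; ring
  have b6 : 1 - x * (1 - y) / (y * (1 - x)) = (y - x) / (y * (1 - x)) := by field_simp; ring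
  have c1 : (1 - y) / ((1 - y) / (1 - x)) = 1 - x := by field_simp
  have c2 : (y - x) / (1 - x) / y = (y - x) / (y * (1 - x)) := by field_simp
  have c3 : (1 - y) * ((y - x) / (1 - x)) / ((1 - y) / (1 - x) * y) = (y - x) / y := by field_simp
  unfold d5
  simp only [sub_sub_cancel, b2, b4, b6, c1, c2, c3]
  ring

lemma forward (R : ℝ × ℝ → ℝ) (C : ℝ) (L : ℝ → ℝ) (h : SolvesAE R C L) :
    SixTermAE R ∧ SymmAE R := by
  obtain ⟨h1, h2⟩ := (solvesAE_iff R C L).1 h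
  constructor
  · rw [sixTermAE_iff]
    filter_upwards [d6_congr_ae h1, d6_d5_ae L] with p hp hq
    rw [← hp, hq]
  · unfold SymmAE
    filter_upwards [h1, pl_sym _ h1, pq_1 _ h2, pq_2 _ h2, pq_div _ h2, pq_psi _ h2,
      ae_restrict_mem meas_P2] with p e1 e2 e3 e4 e5 e6 hp
    rw [← e1, ← e2]
    have := d5_sym L p.1 p.2 hp.1 hp.2.1 hp.2.2
    rw [e3, e4, e5, e6] at this
    have h : d5 L (p.1, p.2) = d5 L p := rfl
    linarith


lemma prim_hasDeriv {f : ℝ → ℝ} {a b c : ℝ} (hf : ContinuousOn f (Ioo a b)) (hc : c ∈ Ioo a b) {x : ℝ}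
    (hx : x ∈ Ioo a b) : HasDerivAt (fun u => ∫ t in c..u, f t) (f x) x := by
  have hsub : uIcc c x ⊆ Ioo a b := by
    intro t ht
    have := ordConnected_Ioo.uIcc_subset hc hx ht
    exact this
  refine intervalIntegral.integral_hasDerivAt_right (hf.mono hsub).intervalIntegrable ?_
    (hf.continuousAt (isOpen_Ioo.mem_nhds hx))
  exact hf.stronglyMeasurableAtFilter isOpen_Ioo x hx

lemma const_of_deriv {f : ℝ → ℝ} {a b : ℝ} (hf : ∀ x ∈ Ioo a b, HasDerivAt f 0 x) {x y : ℝ}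
    (hx : x ∈ Ioo a b) (hy : y ∈ Ioo a b) : f x = f y := by
  refine isOpen_Ioo.is_const_of_deriv_eq_zero isPreconnected_Ioo
    (fun z hz => (hf z hz).differentiableAt.differentiableWithinAt) 
    (fun z hz => (hf z hz).deriv) hx hy

/-- Möbius images in the interval -/
lemma p2_div {p : ℝ × ℝ} (hp : p ∈ P2) : p.1 / p.2 ∈ Ioo (0:ℝ) 1 :=
  ⟨div_pos hp.1 (hp.1.trans hp.2.1), (div_lt_one (hp.1.trans hp.2.1)).2 hp.2.1⟩

lemma p2_phi {p : ℝ × ℝ} (hp : p ∈ P2) : (1 - p.2) / (1 - p.1) ∈ Ioo (0:ℝ) 1 := by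
  obtain ⟨h1, h2, h3⟩ := hp
  exact ⟨div_pos (by linarith) (by linarith), (div_lt_one (by linarith)).2 (by linarith)⟩

lemma p2_psi {p : ℝ × ℝ} (hp : p ∈ P2) : p.1 * (1 - p.2) / (p.2 * (1 - p.1)) ∈ Ioo (0:ℝ) 1 := by
  have h : p.1 * (1 - p.2) / (p.2 * (1 - p.1)) = p.1 / p.2 * ((1 - p.2) / (1 - p.1)) := by
    rw [div_mul_div_comm]
  rw [h]
  have a := p2_div hp
  have b := p2_phi hp
  exact ⟨mul_pos a.1 b.1, by nlinarith [a.1, a.2, b.1, b.2]⟩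

lemma hd_div1 (x y : ℝ) : HasDerivAt (fun x => x / y) (1 / y) x := by
  simpa using (hasDerivAt_id x).div_const y
lemma hd_div2 (x y : ℝ) (hy : y ≠ 0) : HasDerivAt (fun y => x / y) (- x / y ^ 2) y := by
  have := (hasDerivAt_const y x).div (hasDerivAt_id y) hy
  exact this.congr_deriv (by simp)
lemma hd_phi1 (x y : ℝ) (hx : 1 - x ≠ 0) :
    HasDerivAt (fun x => (1 - y) / (1 - x)) ((1 - y) / (1 - x) ^ 2) x := by
  have := (hasDerivAt_const x (1 - y)).div ((hasDerivAt_id x).const_sub 1) hx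
  exact this.congr_deriv (by simp)
lemma hd_phi2 (x y : ℝ) :
    HasDerivAt (fun y => (1 - y) / (1 - x)) (- 1 / (1 - x)) y := by
  have := ((hasDerivAt_id y).const_sub 1).div_const (1 - x)
  exact this.congr_deriv (by simp)
lemma hd_psi1 (x y : ℝ) (hx : 1 - x ≠ 0) (hy : y ≠ 0) :
    HasDerivAt (fun x => x * (1 - y) / (y * (1 - x))) ((1 - y) / (y * (1 - x) ^ 2)) x := by
  have := ((hasDerivAt_id x).mul_const (1 - y)).div (((hasDerivAt_id x).const_sub 1).const_mul y)
    (mul_ne_zero hy hx)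
  exact this.congr_deriv (by simp only [id_eq]; field_simp; ring)
lemma hd_psi2 (x y : ℝ) (hx : 1 - x ≠ 0) (hy : y ≠ 0) :
    HasDerivAt (fun y => x * (1 - y) / (y * (1 - x))) (- x / (y ^ 2 * (1 - x))) y := by
  have := (((hasDerivAt_id y).const_sub 1).const_mul x).div ((hasDerivAt_id y).mul_const (1 - x))
    (mul_ne_zero hy hx)
  exact this.congr_deriv (by simp only [id_eq]; field_simp; ring)

/-- partial derivatives of the five-term expression -/
lemma d5_deriv1 {L l : ℝ → ℝ} (hL : ∀ x ∈ Ioo (0:ℝ) 1, HasDerivAt L (l x) x) {x y : ℝ} (hp : (x, y) ∈ P2) :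
    HasDerivAt (fun x => d5 L (x, y)) (l x - l (x / y) * (1 / y) - l ((1 - y) / (1 - x)) * ((1 - y) / (1 - x) ^ 2)
      + l (x * (1 - y) / (y * (1 - x))) * ((1 - y) / (y * (1 - x) ^ 2))) x := by
  have h1 := hp.1; have h2 := hp.2.1; have h3 := hp.2.2
  simp only at h1 h2 h3
  have a1 : 1 - x ≠ 0 := by linarith
  have a2 : y ≠ 0 := by linarith
  have e1 := hL x ⟨h1, by linarith⟩
  have e2 := (hL _ (p2_div hp)).comp x (hd_div1 x y)
  have e3 := (hL _ (p2_phi hp)).comp x (hd_phi1 x y a1)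
  have e4 := (hL _ (p2_psi hp)).comp x (hd_psi1 x y a1 a2)
  have := (((e1.sub_const (L y)).sub e2).sub e3).add e4
  exact this

lemma d5_deriv2 {L l : ℝ → ℝ} (hL : ∀ x ∈ Ioo (0:ℝ) 1, HasDerivAt L (l x) x) {x y : ℝ} (hp : (x, y) ∈ P2) :
    HasDerivAt (fun y => d5 L (x, y)) (- l y - l (x / y) * (- x / y ^ 2) - l ((1 - y) / (1 - x)) * (-1 / (1 - x))
      + l (x * (1 - y) / (y * (1 - x))) * (- x / (y ^ 2 * (1 - x)))) y := by
  have h1 := hp.1; have h2 := hp.2.1; have h3 := hp.2.2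
  simp only at h1 h2 h3
  have a1 : 1 - x ≠ 0 := by linarith
  have a2 : y ≠ 0 := by linarith
  have e1 := hL y ⟨by linarith, by linarith⟩
  have e2 := (hL _ (p2_div hp)).comp y (hd_div2 x y a2)
  have e3 := (hL _ (p2_phi hp)).comp y (hd_phi2 x y)
  have e4 := (hL _ (p2_psi hp)).comp y (hd_psi2 x y a1 a2)
  have := (((e1.const_sub (L x)).sub e2).sub e3).add e4
  exact this

noncomputable def rf (t : ℝ) : ℝ := - (Real.log (1 - t) / t + Real.log t / (1 - t))

lemma rf_cont : ContinuousOn rf (Ioo 0 1) := by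
  intro t ht
  apply ContinuousAt.continuousWithinAt
  have h1 : t ≠ 0 := ht.1.ne'
  have h2 : 1 - t ≠ 0 := by linarith [ht.2]
  unfold rf
  fun_prop (disch := assumption)

lemma rf_pos {t : ℝ} (ht : t ∈ Ioo (0:ℝ) 1) : 0 < rf t := by
  have h1 : Real.log t < 0 := Real.log_neg ht.1 ht.2
  have h2 : Real.log (1 - t) < 0 := Real.log_neg (by linarith [ht.2]) (by linarith [ht.1])
  unfold rf
  have := div_neg_of_neg_of_pos h2 ht.1
  have := div_neg_of_neg_of_pos h1 (show 0 < 1 - t by linarith [ht.2])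
  linarith

noncomputable def rho (x : ℝ) : ℝ := ∫ t in (1/2 : ℝ)..x, rf t

lemma rho_hd {x : ℝ} (hx : x ∈ Ioo (0:ℝ) 1) : HasDerivAt rho (rf x) x :=
  prim_hasDeriv rf_cont ⟨by norm_num, by norm_num⟩ hx

lemma rho_d1 {x y : ℝ} (hp : (x, y) ∈ P2) : HasDerivAt (fun x => d5 rho (x, y)) 0 x := by
  have h1 := hp.1; have h2 := hp.2.1; have h3 := hp.2.2
  simp only at h1 h2 h3
  have a2 : (1 - x) ≠ 0 := by linarith
  have a3 : (1 - y) ≠ 0 := by linarith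
  have a4 : y - x ≠ 0 := by linarith
  have a8 : x ≠ 0 := by linarith
  have a9 : y ≠ 0 := by linarith
  have b2 : 1 - x / y = (y - x) / y := by field_simp
  have b4 : 1 - (1 - y) / (1 - x) = (y - x) / (1 - x) := by field_simp; ring
  have b6 : 1 - x * (1 - y) / (y * (1 - x)) = (y - x) / (y * (1 - x)) := by field_simp; ring
  convert d5_deriv1 (fun x hx => rho_hd hx) hp using 1
  unfold rf
  rw [b2, b4, b6, Real.log_div a4 a9, Real.log_div a4 a2, Real.log_div a4 (mul_ne_zero a9 a2),
    Real.log_div a8 a9, Real.log_div a3 a2, Real.log_div (mul_ne_zero a8 a3) (mul_ne_zero a9 a2),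
    Real.log_mul a9 a2, Real.log_mul a8 a3]
  field_simp
  ring

lemma rho_d2 {x y : ℝ} (hp : (x, y) ∈ P2) : HasDerivAt (fun y => d5 rho (x, y)) 0 y := by
  have h1 := hp.1; have h2 := hp.2.1; have h3 := hp.2.2
  simp only at h1 h2 h3
  have a2 : (1 - x) ≠ 0 := by linarith
  have a3 : (1 - y) ≠ 0 := by linarith
  have a4 : y - x ≠ 0 := by linarith
  have a8 : x ≠ 0 := by linarith
  have a9 : y ≠ 0 := by linarith
  have b2 : 1 - x / y = (y - x) / y := by field_simp
  have b4 : 1 - (1 - y) / (1 - x) = (y - x) / (1 - x) := by field_simp; ring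
  have b6 : 1 - x * (1 - y) / (y * (1 - x)) = (y - x) / (y * (1 - x)) := by field_simp; ring
  convert d5_deriv2 (fun x hx => rho_hd hx) hp using 1
  unfold rf
  rw [b2, b4, b6, Real.log_div a4 a9, Real.log_div a4 a2, Real.log_div a4 (mul_ne_zero a9 a2),
    Real.log_div a8 a9, Real.log_div a3 a2, Real.log_div (mul_ne_zero a8 a3) (mul_ne_zero a9 a2),
    Real.log_mul a9 a2, Real.log_mul a8 a3]
  field_simp
  ring

/-- partially constant functions on `P2` are constant -/
lemma const_P2 {F : ℝ × ℝ → ℝ} (h1 : ∀ x x' y, (x, y) ∈ P2 → (x', y) ∈ P2 → F (x, y) = F (x', y))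
    (h2 : ∀ x y y', (x, y) ∈ P2 → (x, y') ∈ P2 → F (x, y) = F (x, y')) {p q : ℝ × ℝ}
    (hp : p ∈ P2) (hq : q ∈ P2) : F p = F q := by
  obtain ⟨x, y⟩ := p
  obtain ⟨x', y'⟩ := q
  have m1 : (min x x', y) ∈ P2 := ⟨lt_min hp.1 hq.1, (min_le_left _ _).trans_lt hp.2.1, hp.2.2⟩
  have m2 : (min x x', y') ∈ P2 := ⟨lt_min hp.1 hq.1, (min_le_right _ _).trans_lt hq.2.1, hq.2.2⟩
  rw [h1 _ _ _ hp m1, h2 _ _ _ m1 m2, h1 _ _ _ m2 hq]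

lemma rho_const {p q : ℝ × ℝ} (hp : p ∈ P2) (hq : q ∈ P2) : d5 rho p = d5 rho q := by
  refine const_P2 ?_ ?_ hp hq
  · intro x x' y h h'
    refine const_of_deriv (f := fun x => d5 rho (x, y)) (a := 0) (b := y) ?_ ⟨h.1, h.2.1⟩ ⟨h'.1, h'.2.1⟩
    intro z hz
    exact rho_d1 ⟨hz.1, hz.2, h.2.2⟩
  · intro x y y' h h'
    refine const_of_deriv (f := fun y => d5 rho (x, y)) (a := x) (b := 1) ?_ ⟨h.2.1, h.2.2⟩ ⟨h'.2.1, h'.2.2⟩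
    intro z hz
    exact rho_d2 ⟨h.1, hz.1, hz.2⟩

lemma rho_mono : StrictMonoOn rho (Ioo 0 1) := by
  refine strictMonoOn_of_deriv_pos (convex_Ioo _ _)
    (fun x hx => (rho_hd hx).continuousAt.continuousWithinAt) ?_
  intro x hx
  rw [interior_Ioo] at hx
  rw [(rho_hd hx).deriv]; exact rf_pos hx

lemma rho_half : rho (1/2) = 0 := by simp [rho]

lemma rho_symm {x : ℝ} (hx : x ∈ Ioo (0:ℝ) 1) : rho (1 - x) = - rho x := by
  have key : ∀ z ∈ Ioo (0:ℝ) 1, HasDerivAt (fun x => rho (1 - x) + rho x) 0 z := by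
    intro z hz
    have hz' : 1 - z ∈ Ioo (0:ℝ) 1 := ⟨by linarith [hz.2], by linarith [hz.1]⟩
    have := ((rho_hd hz').comp z ((hasDerivAt_id z).const_sub 1)).add (rho_hd hz)
    have e : rf (1 - z) * -1 + rf z = 0 := by
      unfold rf; rw [sub_sub_cancel]; ring
    rw [e] at this
    exact this
  have := const_of_deriv key hx (show (1/2:ℝ) ∈ Ioo (0:ℝ) 1 by norm_num)
  norm_num [rho_half] at this
  linarith

/-- a solution of the homogeneous five-term equation with nonzero reflection constant -/
lemma rogers : ∃ (L : ℝ → ℝ) (r : ℝ), r ≠ 0 ∧ ContinuousOn L (Ioo 0 1) ∧ (∀ p ∈ P2, d5 L p = 0) ∧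
    ∀ x ∈ Ioo (0:ℝ) 1, L x + L (1 - x) = r := by
  have hq : ((1/4 : ℝ), (1/2 : ℝ)) ∈ P2 := by refine ⟨?_, ?_, ?_⟩ <;> norm_num
  set r := d5 rho (1/4, 1/2) with hr
  have hneg : r < 0 := by
    have m1 : rho (1/4) < rho ((1/4) / (1/2)) := rho_mono (by norm_num) (by norm_num) (by norm_num)
    have m2 : rho ((1/4) * (1 - 1/2) / ((1/2) * (1 - 1/4))) < rho ((1 - 1/2) / (1 - 1/4)) :=
      rho_mono (by norm_num) (by norm_num) (by norm_num)
    have m3 : rho (1/2) = 0 := rho_half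
    rw [hr]
    simp only [d5]
    linarith
  refine ⟨fun x => rho x + r, 2 * r, by linarith, ?_, ?_, ?_⟩
  · exact fun x hx => ((rho_hd hx).continuousAt.add continuousAt_const).continuousWithinAt
  · intro p hp
    have := rho_const hp hq
    rw [← hr] at this
    simp only [d5] at this ⊢
    linarith
  · intro x hx
    simp only
    rw [rho_symm hx]; ring


lemma ae_const_of_pairs (N : ℝ → ℝ)
    (h : ∀ᵐ p : ℝ × ℝ, 0 < p.1 → 0 < p.2 → p.1 + p.2 < 1 → N p.1 = N p.2) :
    ∃ c, ∀ᵐ x ∂(volume.restrict (Ioo (0:ℝ) 1)), N x = c := by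
  have h1 : ∀ᵐ a : ℝ, ∀ᵐ b : ℝ, 0 < a → 0 < b → a + b < 1 → N a = N b :=
    Measure.ae_ae_of_ae_prod h
  have ex : ∀ k : ℕ, ∃ a : ℝ, a ∈ Ioo (0:ℝ) (1 / (k + 2)) ∧
      ∀ᵐ b : ℝ, 0 < a → 0 < b → a + b < 1 → N a = N b := by
    intro k
    have hpos : (0:ℝ) < 1 / (k + 2) := by positivity
    haveI : (ae (volume.restrict (Ioo (0:ℝ) (1 / (k + 2))))).NeBot := by
      rw [ae_neBot]
      simp [Measure.restrict_eq_zero]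
      positivity
    obtain ⟨a, ha, hb⟩ := ((ae_restrict_of_ae (s := Ioo (0:ℝ) (1 / (k + 2))) h1).and
      (ae_restrict_mem measurableSet_Ioo)).exists
    exact ⟨a, hb, ha⟩
  choose a ha hb using ex
  have hall : ∀ᵐ b : ℝ, ∀ k, 0 < a k → 0 < b → a k + b < 1 → N (a k) = N b := ae_all_iff.2 hb
  have ha2 : ∀ k, a k < 1 / 2 := fun k => (ha k).2.trans_le (by
    apply one_div_le_one_div_of_le <;> linarith [(Nat.cast_nonneg k : (0:ℝ) ≤ k)])
  have hc : ∀ k, N (a k) = N (a 0) := by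
    intro k
    haveI : (ae (volume.restrict (Ioo (0:ℝ) (1 / 2)))).NeBot := by
      rw [ae_neBot]
      simp [Measure.restrict_eq_zero]
    obtain ⟨b, hb1, hb2⟩ := ((ae_restrict_of_ae (s := Ioo (0:ℝ) (1 / 2)) hall).and
      (ae_restrict_mem measurableSet_Ioo)).exists
    rw [hb1 k (ha k).1 hb2.1 (by linarith [ha2 k, hb2.2]), hb1 0 (ha 0).1 hb2.1 (by linarith [ha2 0, hb2.2])]
  refine ⟨N (a 0), ?_⟩
  filter_upwards [ae_restrict_of_ae hall, ae_restrict_mem measurableSet_Ioo] with b hb1 hb2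
  obtain ⟨k, hk⟩ := exists_nat_one_div_lt (show 0 < 1 - b by linarith [hb2.2])
  have : a k < 1 - b := (ha k).2.trans (lt_of_le_of_lt (by
    apply one_div_le_one_div_of_le <;> linarith [(Nat.cast_nonneg k : (0:ℝ) ≤ k)]) hk)
  rw [← hb1 k (ha k).1 hb2.1 (by linarith), hc]

def T2 : Set (ℝ × ℝ) := {p | 0 < p.1 ∧ 0 < p.2 ∧ p.1 + p.2 < 1}

lemma meas_T2 : MeasurableSet T2 := by
  have : T2 = {p : ℝ × ℝ | 0 < p.1} ∩ ({p | 0 < p.2} ∩ {p | p.1 + p.2 < 1}) := by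
    ext; simp [T2]
  rw [this]
  exact ((isOpen_lt (by fun_prop) (by fun_prop)).inter
    ((isOpen_lt (by fun_prop) (by fun_prop)).inter (isOpen_lt (by fun_prop) (by fun_prop)))).measurableSet

/-- The geometric facts about the coordinates `(A, B)`. -/
lemma T2_facts {A B : ℝ} (hA : 0 < A) (hB : 0 < B) (hAB : A + B < 1) :
    (A * B / ((1 - A) * (1 - B)), A / (1 - B)) ∈ P2 ∧
    A * B / ((1 - A) * (1 - B)) / (A / (1 - B)) = B / (1 - A) ∧
    A * B / ((1 - A) * (1 - B)) * (1 - A / (1 - B)) / (A / (1 - B) * (1 - A * B / ((1 - A) * (1 - B)))) = B := by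
  have a1 : 0 < 1 - A := by linarith
  have a2 : 0 < 1 - B := by linarith
  have a3 : 0 < 1 - B - A := by linarith
  have b1 : 1 - A / (1 - B) = (1 - B - A) / (1 - B) := by field_simp
  have b2 : 1 - A * B / ((1 - A) * (1 - B)) = (1 - B - A) / ((1 - A) * (1 - B)) := by
    field_simp; ring
  refine ⟨⟨?_, ?_, ?_⟩, ?_, ?_⟩
  · simp only; positivity
  · simp only; rw [div_lt_div_iff₀ (by positivity) (by positivity)]
    have : 0 < (1 - B - A) * (A * (1 - B)) := by positivity
    nlinarith
  · simp only; rw [div_lt_one a2]; linarith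
  · field_simp
  · rw [b1, b2]; field_simp

lemma pull_T2 (Q : ℝ × ℝ → Prop) (hQ : ∀ᵐ q ∂(volume.restrict P2), Q q) :
    ∀ᵐ p ∂(volume.restrict T2), Q (p.1 * p.2 / ((1 - p.1) * (1 - p.2)), p.1 / (1 - p.2)) := by
  rw [ae_restrict_iff' meas_P2] at hQ
  refine ae_pull_same volume (fun p => (p.1 * p.2 / ((1 - p.1) * (1 - p.2)), p.1 / (1 - p.2)))
    (fun p => (p.2 * (1 - p.1 * (1 - p.2) / (p.2 * (1 - p.1))), p.1 * (1 - p.2) / (p.2 * (1 - p.1)))) T2 P2 meas_T2 ?_ ?_ ?_ Q hQ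
  · rintro p ⟨h1, h2, h3⟩
    apply DifferentiableAt.differentiableWithinAt
    have h : p.2 * (1 - p.1) ≠ 0 := mul_ne_zero (by linarith) (by linarith)
    fun_prop (disch := assumption)
  · rintro p ⟨h1, h2, h3⟩
    exact (T2_facts h1 h2 h3).1
  · rintro p ⟨h1, h2, h3⟩
    have := (T2_facts h1 h2 h3).2.2
    simp only [this]
    have a2 : 1 - p.2 ≠ 0 := by linarith
    ext
    · simp only; field_simp
    · rfl

lemma pull_T2' (Q : ℝ × ℝ → Prop) (hQ : ∀ᵐ q ∂(volume.restrict P2), Q q) :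
    ∀ᵐ p ∂(volume.restrict T2), Q (p.2 * p.1 / ((1 - p.2) * (1 - p.1)), p.2 / (1 - p.1)) := by
  have h := pull_T2 Q hQ
  rw [ae_restrict_iff' meas_T2] at h ⊢
  have hs : MeasurePreserving (Prod.swap : ℝ × ℝ → ℝ × ℝ) volume volume :=
    Measure.measurePreserving_swap
  filter_upwards [hs.quasiMeasurePreserving.ae h] with p hp hpT
  exact hp ⟨hpT.2.1, hpT.1, by have := hpT.2.2; simp only [Prod.swap]; linarith⟩

lemma lemmaB (R : ℝ × ℝ → ℝ) (L : ℝ → ℝ) (h1 : ∀ᵐ p ∂(volume.restrict P2), d5 L p = R p)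
    (h2 : SymmAE R) : ∃ c, ∀ᵐ x ∂(volume.restrict (Ioo (0:ℝ) 1)), L x + L (1 - x) = c := by
  obtain ⟨N, hNd⟩ : ∃ N : ℝ → ℝ, ∀ x, N x = L x + L (1 - x) := ⟨fun x => L x + L (1 - x), fun x => rfl⟩
  have hN : ∀ᵐ p ∂(volume.restrict P2), N p.2 + N (p.1 / p.2)
      - N p.1 = N (p.1 * (1 - p.2) / (p.2 * (1 - p.1))) := by
    unfold SymmAE at h2
    filter_upwards [h1, pl_sym _ h1, h2, ae_restrict_mem meas_P2] with p e1 e2 e3 hp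
    have := d5_sym L p.1 p.2 hp.1 hp.2.1 hp.2.2
    have h : d5 L (p.1, p.2) = d5 L p := rfl
    rw [e2, e3, h, e1] at this
    simp only [hNd]
    linarith
  simp only [← hNd]
  apply ae_const_of_pairs
  have k1 := pull_T2 _ hN
  have k2 := pull_T2' _ hN
  rw [ae_restrict_iff' meas_T2] at k1 k2
  filter_upwards [k1, k2] with p q1 q2 p1 p2 p3
  have f1 := T2_facts p1 p2 p3
  have f2 := T2_facts p2 p1 (by linarith)
  have g1 := q1 ⟨p1, p2, p3⟩
  have g2 := q2 ⟨p1, p2, p3⟩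
  simp only [f1.2.1, f1.2.2] at g1
  simp only [f2.2.1, f2.2.2] at g2
  have : p.2 * p.1 / ((1 - p.2) * (1 - p.1)) = p.1 * p.2 / ((1 - p.1) * (1 - p.2)) := by
    rw [mul_comm p.2, mul_comm (1 - p.2)]
  rw [this] at g2
  linarith

lemma d5_lin (L M : ℝ → ℝ) (k : ℝ) (p : ℝ × ℝ) :
    d5 (fun x => L x + k * M x) p = d5 L p + k * d5 M p := by
  unfold d5; ring

/-- reduction of the backward direction to the pure six-term problem -/
lemma backward (hA : ∀ R : ℝ × ℝ → ℝ, Measurable R →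
      (∀ᵐ p ∂(volume.restrict P3), d6 R p.1 p.2.1 p.2.2 = 0) →
      ∃ L : ℝ → ℝ, AEMeasurable L (volume.restrict (Ioo (0:ℝ) 1)) ∧
        ∀ᵐ p ∂(volume.restrict P2), d5 L p = R p)
    (R : ℝ × ℝ → ℝ) (hR : AEMeasurable R (volume.restrict P2)) (C : ℝ)
    (h6 : SixTermAE R) (hs : SymmAE R) :
    ∃ L : ℝ → ℝ, AEMeasurable L (volume.restrict (Set.Ioo (0:ℝ) 1)) ∧ SolvesAE R C L := by
  obtain ⟨R', hm, he⟩ := hR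
  have h6' : ∀ᵐ p ∂(volume.restrict P3), d6 R' p.1 p.2.1 p.2.2 = 0 := by
    filter_upwards [d6_congr_ae he, (sixTermAE_iff R).1 h6] with p a b
    rw [← a, b]
  obtain ⟨L, hL, hL5⟩ := hA R' hm h6'
  have hL5' : ∀ᵐ p ∂(volume.restrict P2), d5 L p = R p := by
    filter_upwards [hL5, he] with p a b
    rw [a, b]
  obtain ⟨c, hc⟩ := lemmaB R L hL5' hs
  obtain ⟨M, r, hr, hMc, hM5, hMr⟩ := rogers
  refine ⟨fun x => L x + ((C - c) / r) * M x, ?_, ?_⟩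
  · exact hL.add ((hMc.aemeasurable measurableSet_Ioo).const_mul _)
  · rw [solvesAE_iff]
    constructor
    · filter_upwards [hL5', ae_restrict_mem meas_P2] with p a b
      rw [d5_lin, hM5 p b, a]; ring
    · filter_upwards [hc, ae_restrict_mem measurableSet_Ioo] with x a b
      have : M (1 - x) = r - M x := by linarith [hMr x b]
      rw [this]
      have h2 : L (1 - x) = c - L x := by linarith
      rw [h2]; field_simp; ring


lemma hd_zero_of_eventually {f : ℝ → ℝ} {f' x : ℝ} {a b : ℝ} (hx : x ∈ Ioo a b)
    (h : ∀ z ∈ Ioo a b, f z = 0) (hf : HasDerivAt f f' x) : f' = 0 := by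
  have h0 : HasDerivAt f 0 x := by
    refine (hasDerivAt_const x (0:ℝ)).congr_of_eventuallyEq ?_
    filter_upwards [isOpen_Ioo.mem_nhds hx] with z hz using h z hz
  exact hf.unique h0

lemma coc_trivial (w : ℝ → ℝ → ℝ) (hw : ContinuousOn (fun p : ℝ × ℝ => w p.1 p.2) (Ioi 0 ×ˢ Ioi 0))
    (hc : ∀ a b c, 0 < a → 0 < b → 0 < c → w b c - w (a + b) c + w a (b + c) - w a b = 0) :
    ∃ n : ℝ → ℝ, ContinuousOn n (Ioi 0) ∧ ∀ a b, 0 < a → 0 < b → n b - n (a + b) + n a = w a b := by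
  have hw1 : ∀ a, 0 < a → ContinuousOn (fun u => w a u) (Ioi 0) := by
    intro a ha
    exact hw.comp (f := fun u => ((a, u) : ℝ × ℝ)) (by fun_prop) (fun u hu => ⟨ha, hu⟩)
  have hw2 : ∀ b, 0 < b → ContinuousOn (fun u => w u b) (Ioi 0) := by
    intro a ha
    exact hw.comp (f := fun u => ((u, a) : ℝ × ℝ)) (by fun_prop) (fun u hu => ⟨hu, ha⟩)
  have hint : ∀ a p q, 0 < a → 0 < p → 0 < q → IntervalIntegrable (fun u => w a u) volume p q := by
    intro a p q ha hp hq
    refine ((hw1 a ha).mono ?_).intervalIntegrable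
    intro t ht
    exact ordConnected_Ioi.uIcc_subset hp hq ht
  set J : ℝ → ℝ := fun s => ∫ u in (1:ℝ)..2, w s u with hJ
  have hJc : ContinuousOn J (Ioi 0) := by
    have e1 : Continuous (fun p : ℝ × ℝ => w (Real.exp p.1) (max 1 (min p.2 2))) := by
      rw [← continuousOn_univ]
      refine hw.comp (f := fun p : ℝ × ℝ => (Real.exp p.1, max 1 (min p.2 2))) (by fun_prop) ?_
      intro p _
      exact ⟨Real.exp_pos _, lt_of_lt_of_le one_pos (le_max_left (1:ℝ) (min p.2 2))⟩
    have e2 : Continuous (fun z : ℝ => ∫ u in (1:ℝ)..2, w (Real.exp z) (max 1 (min u 2))) :=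
      intervalIntegral.continuous_parametric_intervalIntegral_of_continuous' e1 1 2
    have e3 : ∀ s ∈ Ioi (0:ℝ), J s = (fun z : ℝ => ∫ u in (1:ℝ)..2, w (Real.exp z) (max 1 (min u 2))) (Real.log s) := by
      intro s hs
      simp only [hJ, Real.exp_log hs]
      refine intervalIntegral.integral_congr ?_
      intro u hu
      rw [uIcc_of_le (by norm_num)] at hu
      simp [hu.1, hu.2]
    refine ContinuousOn.congr ?_ e3
    exact e2.comp_continuousOn (Real.continuousOn_log.mono (fun x hx => (ne_of_gt hx)))
  set k : ℝ → ℝ := fun t => w t 2 - w t 1 with hk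
  have hkc : ContinuousOn k (Ioi 0) := (hw2 2 (by norm_num)).sub (hw2 1 one_pos)
  set K : ℝ → ℝ := fun t => ∫ u in (1:ℝ)..t, k u with hK
  have hKd : ∀ t, 0 < t → HasDerivAt K (k t) t := by
    intro t ht
    refine prim_hasDeriv (a := 0) (b := t + 2) (hkc.mono (fun x hx => hx.1)) ⟨one_pos, by linarith⟩ ⟨ht, by linarith⟩
  -- integrated cocycle identity
  have hi : ∀ a b, 0 < a → 0 < b → w a b = J b - J (a + b) + ∫ u in (b + 1)..(b + 2), w a u := by
    intro a b ha hb
    have e : ∫ c in (1:ℝ)..2, w a b = ∫ c in (1:ℝ)..2, (w b c - w (a + b) c + w a (b + c)) := by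
      refine intervalIntegral.integral_congr ?_
      intro c hcc
      rw [uIcc_of_le (by norm_num)] at hcc
      have := hc a b c ha hb (by linarith [hcc.1])
      simp only
      linarith
    have i1 := hint b 1 2 hb one_pos two_pos
    have i2 := hint (a + b) 1 2 (by linarith) one_pos two_pos
    have i3 : IntervalIntegrable (fun c => w a (b + c)) volume 1 2 := by
      have : ContinuousOn (fun c => w a (b + c)) (uIcc 1 2) := by
        refine (hw1 a ha).comp (f := fun c => b + c) (by fun_prop) ?_
        intro c hcc
        rw [uIcc_of_le (by norm_num)] at hcc
        show 0 < b + c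
        linarith [hcc.1]
      exact this.intervalIntegrable
    rw [intervalIntegral.integral_add (i1.sub i2) i3, intervalIntegral.integral_sub i1 i2,
      intervalIntegral.integral_comp_add_left (fun u => w a u) b] at e
    rw [intervalIntegral.integral_const] at e
    norm_num at e
    exact e
  have hE : ∀ a, 0 < a → ∀ b, 0 < b →
      HasDerivAt (fun b => (∫ u in (b + 1)..(b + 2), w a u) - K (a + b) + K b) 0 b := by
    intro a ha b hb
    have p1 : ∀ c, 0 < c → HasDerivAt (fun b => ∫ u in (1:ℝ)..(b + c), w a u) (w a (b + c)) b := by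
      intro c hcc
      have := prim_hasDeriv (a := 0) (b := b + c + 2) (c := 1) (x := b + c) 
        ((hw1 a ha).mono (fun x hx => hx.1)) ⟨one_pos, by linarith⟩ ⟨by linarith, by linarith⟩
      have := this.comp b ((hasDerivAt_id b).add_const c)
      exact this.congr_deriv (by simp)
    have p2 : HasDerivAt (fun b => (∫ u in (1:ℝ)..(b + 2), w a u) - ∫ u in (1:ℝ)..(b + 1), w a u)
      (w a (b + 2) - w a (b + 1)) b := (p1 2 two_pos).sub (p1 1 one_pos)
    have p3 : HasDerivAt (fun b => ∫ u in (b + 1)..(b + 2), w a u) (w a (b + 2) - w a (b + 1)) b := by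
      refine p2.congr_of_eventuallyEq ?_
      filter_upwards [isOpen_Ioi.mem_nhds (show b ∈ Ioi 0 from hb)] with z hz
      have hz : 0 < z := hz
      rw [intervalIntegral.integral_interval_sub_left (hint a _ _ ha one_pos (by linarith))
        (hint a _ _ ha one_pos (by linarith))]
    have p4 : HasDerivAt (fun b => K (a + b)) (k (a + b)) b := by
      have := (hKd (a + b) (by linarith)).comp b ((hasDerivAt_id b).const_add a)
      exact this.congr_deriv (by simp)
    have := (p3.sub p4).add (hKd b hb)
    refine this.congr_deriv ?_
    have c1 := hc a b 1 ha hb one_pos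
    have c2 := hc a b 2 ha hb two_pos
    simp only [hk]; linarith
  set e : ℝ → ℝ := fun a => w a 1 - (J 1 - J (a + 1) + J a) + (K 1 - K (a + 1) + K a) with he
  have hZ : ∀ a b, 0 < a → 0 < b → w a b - (J b - J (a + b) + J a) + (K b - K (a + b) + K a) = e a := by
    intro a b ha hb
    have := const_of_deriv (f := fun b => (∫ u in (b + 1)..(b + 2), w a u) - K (a + b) + K b)
      (a := 0) (b := max b 1 + 1) (fun z hz => hE a ha z hz.1) (x := b) (y := 1)
      ⟨hb, by linarith [le_max_left b 1]⟩ ⟨one_pos, by linarith [le_max_right b 1]⟩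
    have h1 := hi a b ha hb
    have h2 := hi a 1 ha one_pos
    simp only [he]; linarith
  have he0 : ∀ a b, 0 < a → 0 < b → e b = e (a + b) := by
    intro a b ha hb
    have z1 := hZ b 1 hb one_pos
    have z2 := hZ (a + b) 1 (by linarith) one_pos
    have z3 := hZ a (b + 1) ha (by linarith)
    have z4 := hZ a b ha hb
    have := hc a b 1 ha hb one_pos
    rw [show a + (b + 1) = a + b + 1 by ring] at z3
    linarith
  refine ⟨fun t => J t - K t + e 1, ?_, ?_⟩
  · refine (hJc.sub ?_).add continuousOn_const
    exact fun t ht => (hKd t ht).continuousAt.continuousWithinAt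
  · intro a b ha hb
    have : e a = e 1 := by
      have h1 := he0 1 a one_pos ha
      have h2 := he0 a 1 ha one_pos
      rw [h1, h2, add_comm]
    have := hZ a b ha hb
    simp only; linarith


/-- if `G (x) + G (ψ) = G (x / y) + G (φ)` then `G` is constant -/
lemma G_const (G : ℝ → ℝ) (h : ∀ x y, (x, y) ∈ P2 → G x - G (x / y) - G ((1 - y) / (1 - x))
    + G (x * (1 - y) / (y * (1 - x))) = 0) {a b : ℝ} (ha : a ∈ Ioo (0:ℝ) 1) (hb : b ∈ Ioo (0:ℝ) 1) :
    G a = G b := by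
  have key : ∀ A B, 0 < A → 0 < B → A + B < 1 → G A = G B := by
    intro A B hA hB hAB
    have h1 := h A (1 - B) ⟨hA, by simp only; linarith, by simp only; linarith⟩
    have h2 := h B (1 - A) ⟨hB, by simp only; linarith, by simp only; linarith⟩
    simp only [sub_sub_cancel] at h1 h2
    have : B * A / ((1 - A) * (1 - B)) = A * B / ((1 - B) * (1 - A)) := by
      rw [mul_comm B, mul_comm (1 - A)]
    rw [this] at h2
    linarith
  have hm : 0 < min (1 - a) (1 - b) := lt_min (by linarith [ha.2]) (by linarith [hb.2])
  have m1 := min_le_left (1 - a) (1 - b)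
  have m2 := min_le_right (1 - a) (1 - b)
  rw [key a (min (1 - a) (1 - b) / 2) ha.1 (by linarith) (by linarith),
    key b (min (1 - a) (1 - b) / 2) hb.1 (by linarith) (by linarith)]

lemma d5_add (L M : ℝ → ℝ) (p : ℝ × ℝ) : d5 (fun x => L x + M x) p = d5 L p + d5 M p := by
  unfold d5; ring

lemma d5_const (m : ℝ) (p : ℝ × ℝ) : d5 (fun _ => m) p = - m := by
  unfold d5; ring

/-- the separated case -/
lemma sep_case (R : ℝ × ℝ → ℝ) (hRc : ContinuousOn R P2)
    (h6 : ∀ v x y, 0 < v → v < x → x < y → y < 1 → d6 R v x y = 0)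
    (hs : ∀ v v' y y', (v, y) ∈ P2 → (v', y) ∈ P2 → (v, y') ∈ P2 → (v', y') ∈ P2 →
      R (v, y) - R (v', y) = R (v, y') - R (v', y')) :
    ∃ L : ℝ → ℝ, ContinuousOn L (Ioo 0 1) ∧ ∀ p ∈ P2, d5 L p = R p := by
  set f : ℝ → ℝ := fun v => R (v, (max v (1/2) + 1) / 2) - R (1/2, (max v (1/2) + 1) / 2) with hf
  have hx : ∀ v ∈ Ioo (0:ℝ) 1, (v, (max v (1/2) + 1) / 2) ∈ P2 ∧ (1/2, (max v (1/2) + 1) / 2) ∈ P2 := by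
    intro v hv
    have m1 := le_max_left v (1/2)
    have m2 := le_max_right v (1/2)
    have m3 : max v (1/2) < 1 := max_lt hv.2 (by norm_num)
    refine ⟨⟨hv.1, ?_, ?_⟩, ⟨by norm_num, ?_, ?_⟩⟩ <;> simp only <;> linarith
  have hfc : ContinuousOn f (Ioo 0 1) := by
    refine ContinuousOn.sub ?_ ?_
    · exact hRc.comp (f := fun v => (v, (max v (1/2) + 1) / 2)) (by fun_prop) (fun v hv => (hx v hv).1)
    · exact hRc.comp (f := fun v => (1/2, (max v (1/2) + 1) / 2)) (by fun_prop) (fun v hv => (hx v hv).2)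
  have hf1 : ∀ v y, (v, y) ∈ P2 → 1/2 < y → R (v, y) - R (1/2, y) = f v := by
    intro v y hv hy
    have hv' : v ∈ Ioo (0:ℝ) 1 := ⟨hv.1, hv.2.1.trans hv.2.2⟩
    exact hs _ _ _ _ hv ⟨by norm_num, hy, hv.2.2⟩ (hx v hv').1 (hx v hv').2
  have hf2 : ∀ v v' y, (v, y) ∈ P2 → (v', y) ∈ P2 → R (v, y) - R (v', y) = f v - f v' := by
    intro v v' y hv hv'
    have m1 := le_max_left y (1/2)
    have m2 := le_max_right y (1/2)
    have m3 : max y (1/2) < 1 := max_lt hv.2.2 (by norm_num)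
    have hh : 1/2 < (max y (1/2) + 1) / 2 := by linarith
    have b1 : (v, (max y (1/2) + 1) / 2) ∈ P2 := ⟨hv.1, by have := hv.2.1; simp only at *; linarith, by simp only; linarith⟩
    have b2 : (v', (max y (1/2) + 1) / 2) ∈ P2 := ⟨hv'.1, by have := hv'.2.1; simp only at *; linarith, by simp only; linarith⟩
    rw [hs _ _ _ _ hv hv' b1 b2, ← hf1 v _ b1 hh, ← hf1 v' _ b2 hh]
    ring
  set g : ℝ → ℝ := fun y => R (y / 2, y) - f (y / 2) with hg
  have hRfg : ∀ v y, (v, y) ∈ P2 → R (v, y) = f v + g y := by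
    intro v y hv
    have hy : 0 < y := hv.1.trans hv.2.1
    have := hf2 v (y / 2) y hv ⟨by simp only; linarith, by simp only; linarith, hv.2.2⟩
    simp only [hg]; linarith
  set κ : ℝ → ℝ → ℝ := fun v y => f (v / y) + f ((1 - y) / (1 - v)) - f (v * (1 - y) / (y * (1 - v))) with hκ
  have hk1 : ∀ v x y, 0 < v → v < x → x < y → y < 1 → κ v y = g x + f x - g (x / y) - g ((1 - y) / (1 - x))
      + g (x * (1 - y) / (y * (1 - x))) := by
    intro v x y hv hx hy h1
    have := h6 v x y hv hx hy h1
    unfold d6 at this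
    rw [hRfg _ _ (mp_div hv hx hy), hRfg _ _ (mp_phi hx hy h1), hRfg _ _ (mp_psi hv hx hy h1),
      hRfg v x ⟨hv, hx, hy.trans h1⟩, hRfg v y ⟨hv, hx.trans hy, h1⟩, hRfg x y ⟨hv.trans hx, hy, h1⟩] at this
    simp only [hκ]; linarith
  have hk2 : ∀ v y, (v, y) ∈ P2 → κ v y = κ (y / 2) y := by
    intro v y hv
    have hy : 0 < y := hv.1.trans hv.2.1
    have hvy : v < y := hv.2.1
    have m1 := le_max_left v (y/2)
    have m2 := le_max_right v (y/2)
    have m3 : max v (y/2) < y := max_lt hvy (by linarith)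
    rw [hk1 v ((max v (y/2) + y)/2) y hv.1 (by linarith) (by linarith) hv.2.2,
      hk1 (y/2) ((max v (y/2) + y)/2) y (by linarith) (by linarith) (by linarith) hv.2.2]
  set G : ℝ → ℝ := fun y => g y + f y + κ (y / 2) y with hG
  have hRG : ∀ x y, (x, y) ∈ P2 → R (x, y) - d5 f (x, y) = G y := by
    intro x y h
    have := hk2 x y h
    rw [hRfg x y h]
    simp only [hκ] at this
    simp only [d5, hG, hκ]
    linarith
  have hGG : ∀ x y, (x, y) ∈ P2 → G x - G (x / y) - G ((1 - y) / (1 - x))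
    + G (x * (1 - y) / (y * (1 - x))) = 0 := by
    intro x y h
    have hv : 0 < x / 2 := by have := h.1; simp only at this; linarith
    have hx : x / 2 < x := by linarith
    have hy : x < y := h.2.1
    have h1 : y < 1 := h.2.2
    have h0 : d6 (fun p => R p - d5 f p) (x/2) x y = 0 := by
      rw [d6_sub, h6 _ _ _ hv hx hy h1, d6_d5 _ _ _ _ hv hx hy h1]; ring
    unfold d6 at h0
    simp only at h0
    rw [hRG _ _ (mp_div hv hx hy), hRG _ _ (mp_phi hx hy h1), hRG _ _ (mp_psi hv hx hy h1),
      hRG _ x ⟨hv, hx, hy.trans h1⟩, hRG _ y ⟨hv, hx.trans hy, h1⟩, hRG x y ⟨hv.trans hx, hy, h1⟩] at h0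
    linarith
  refine ⟨fun x => f x + (- G (1/2)), hfc.add continuousOn_const, ?_⟩
  rintro ⟨x, y⟩ h
  rw [d5_add, d5_const]
  have := hRG x y h
  rw [G_const G hGG (a := y) (b := 1/2) ⟨h.1.trans h.2.1, h.2.2⟩ ⟨by norm_num, by norm_num⟩] at this
  linarith

lemma W_coord {s t : ℝ} (hs : s ∈ Ioo (0:ℝ) 1) (ht : t ∈ Ioo (0:ℝ) 1) :
    (t * (1 - s) / (1 - s * t), (1 - s) / (1 - s * t)) ∈ P2 := by
  have h1 : 0 < 1 - s := by linarith [hs.2]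
  have h2 : 0 < 1 - t := by linarith [ht.2]
  have h0 := hs.1
  have h0' := ht.1
  have h3 : 0 < 1 - s * t := by nlinarith
  refine ⟨by simp only; positivity, ?_, ?_⟩
  · simp only
    rw [div_lt_div_iff_of_pos_right h3]; nlinarith
  · simp only
    rw [div_lt_one h3]; nlinarith

lemma W_coord_inv {w : ℝ × ℝ → ℝ} {v x : ℝ} (h : (v, x) ∈ P2) {s t : ℝ} (hs : s = (1 - x) / (1 - v)) (ht : t = v / x) :
    w (t * (1 - s) / (1 - s * t), (1 - s) / (1 - s * t)) = w (v, x) := by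
  have h1 := h.1; have h2 := h.2.1; have h3 := h.2.2
  simp only at h1 h2 h3
  have a1 : 1 - v ≠ 0 := by linarith
  have a2 : 1 - x ≠ 0 := by linarith
  have a3 : x - v ≠ 0 := by linarith
  have a4 : x ≠ 0 := by linarith
  have e1 : 1 - s = (x - v) / (1 - v) := by rw [hs]; field_simp; ring
  have e2 : 1 - s * t = (x - v) / (x * (1 - v)) := by rw [hs, ht]; field_simp; ring
  rw [e1, e2, ht]
  congr 1
  ext
  · simp only; field_simp
  · simp only; field_simp

lemma W_cocycle (w : ℝ × ℝ → ℝ)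
    (h : ∀ v x y, 0 < v → v < x → x < y → y < 1 → w (v, x) = w (v / y, x / y)
      + w ((1 - y) / (1 - v), (1 - y) / (1 - x))
      - w (v * (1 - y) / (y * (1 - v)), x * (1 - y) / (y * (1 - x)))) 
    (W : ℝ → ℝ → ℝ) (hW : ∀ s t, W s t = w (t * (1 - s) / (1 - s * t), (1 - s) / (1 - s * t)))
    {a b c : ℝ} (ha : a ∈ Ioo (0:ℝ) 1) (hb : b ∈ Ioo (0:ℝ) 1) (hc : c ∈ Ioo (0:ℝ) 1) :
    W b c - W (a * b) c + W a (b * c) - W a b = 0 := by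
  have hP := W_coord hb hc
  have hbe : b = (1 - (1 - b) / (1 - b * c)) / (1 - c * (1 - b) / (1 - b * c)) ∧
     c = c * (1 - b) / (1 - b * c) / ((1 - b) / (1 - b * c)) := by
    have h1 : 1 - b ≠ 0 := by linarith [hb.2]
    have h2 : 1 - c ≠ 0 := by linarith [hc.2]
    have h3 : 1 - b * c ≠ 0 := by nlinarith [hb.1, hb.2, hc.1, hc.2]
    have h4 : 1 - c * b ≠ 0 := by rwa [mul_comm]
    have e1 : 1 - (1 - b) / (1 - b * c) = b * (1 - c) / (1 - b * c) := by field_simp; ring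
    have e2 : 1 - c * (1 - b) / (1 - b * c) = (1 - c) / (1 - b * c) := by field_simp; ring
    rw [e1, e2]
    constructor <;> field_simp
  obtain ⟨v, hv⟩ : ∃ v, v = c * (1 - b) / (1 - b * c) := ⟨_, rfl⟩
  obtain ⟨x, hx⟩ : ∃ x, x = (1 - b) / (1 - b * c) := ⟨_, rfl⟩
  rw [← hv, ← hx] at hP hbe
  obtain ⟨hb', hc'⟩ := hbe
  have p1 : 0 < v := hP.1
  have p2 : v < x := hP.2.1
  have p3 : x < 1 := hP.2.2
  have hab : a * b ∈ Ioo (0:ℝ) 1 := ⟨mul_pos ha.1 hb.1, by nlinarith [ha.1, ha.2, hb.1, hb.2]⟩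
  obtain ⟨y, hy⟩ : ∃ y, y = (x - a * b * v) / (1 - a * b) := ⟨_, rfl⟩
  have q1 : 0 < 1 - a * b := by linarith [hab.2]
  have q0 : 0 < 1 - v := by linarith
  have hbv : b * (1 - v) = 1 - x := by
    rw [hb']; field_simp
  have p4 : x < y := by
    rw [hy, lt_div_iff₀ q1]; nlinarith [hab.1]
  have p5 : y < 1 := by
    rw [hy, div_lt_one q1]
    have : a * (1 - x) < 1 - x := by nlinarith [ha.2]
    have h2 : a * b * (1 - v) < 1 - x := by rw [mul_assoc, hbv]; exact this
    nlinarith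
  have hY : a * b = (y - x) / (y - v) := by
    have e : y - v = (x - v) / (1 - a * b) := by rw [hy]; field_simp; ring
    have e2 : y - x = a * b * (x - v) / (1 - a * b) := by rw [hy]; field_simp; ring
    have : x - v ≠ 0 := by linarith
    rw [e, e2]; field_simp
  have a1 : 1 - v ≠ 0 := by linarith
  have a2 : 1 - x ≠ 0 := by linarith
  have a3 : 1 - y ≠ 0 := by linarith
  have a4 : y - x ≠ 0 := by linarith
  have a5 : y - v ≠ 0 := by linarith
  have a6 : x ≠ 0 := by linarith
  have a7 : y ≠ 0 := by linarith
  have a8 : v ≠ 0 := by linarith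
  have hA : a = (y - x) * (1 - v) / ((1 - x) * (y - v)) := by
    have hb0 : b ≠ 0 := hb.1.ne'
    have : a = a * b / b := by field_simp
    rw [this, hY, hb']; field_simp
  have b1 : 1 - v / y = (y - v) / y := by field_simp
  have b2 : 1 - x / y = (y - x) / y := by field_simp
  have b3 : 1 - (1 - y) / (1 - v) = (y - v) / (1 - v) := by field_simp; ring
  have b4 : 1 - (1 - y) / (1 - x) = (y - x) / (1 - x) := by field_simp; ring
  have b5 : 1 - v * (1 - y) / (y * (1 - v)) = (y - v) / (y * (1 - v)) := by field_simp; ring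
  have b6 : 1 - x * (1 - y) / (y * (1 - x)) = (y - x) / (y * (1 - x)) := by field_simp; ring
  have w1 : W b c = w (v, x) := by rw [hW]; exact W_coord_inv hP hb' hc'
  have w2 : W (a * b) c = w (v / y, x / y) := by
    rw [hW]
    refine W_coord_inv (mp_div p1 p2 p4) ?_ ?_
    · rw [b1, b2, hY]; field_simp
    · rw [hc']; field_simp
  have w3 : W a b = w ((1 - y) / (1 - v), (1 - y) / (1 - x)) := by
    rw [hW]
    refine W_coord_inv (mp_phi p2 p4 p5) ?_ ?_
    · rw [b3, b4, hA]; field_simp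
    · rw [hb']; field_simp
  have w4 : W a (b * c) = w (v * (1 - y) / (y * (1 - v)), x * (1 - y) / (y * (1 - x))) := by
    rw [hW]
    refine W_coord_inv (mp_psi p1 p2 p4 p5) ?_ ?_
    · rw [b5, b6, hA]; field_simp
    · rw [hb', hc']; field_simp
  rw [w1, w2, w3, w4, h v x y p1 p2 p4 p5]
  ring


/-- the smooth case of the main theorem -/
lemma smooth_case (R R1 R2 ω : ℝ × ℝ → ℝ) (hRc : ContinuousOn R P2)
    (hR1 : ∀ x y, (x, y) ∈ P2 → HasDerivAt (fun x => R (x, y)) (R1 (x, y)) x)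
    (hR2 : ∀ x y, (x, y) ∈ P2 → HasDerivAt (fun y => R (x, y)) (R2 (x, y)) y)
    (hω : ∀ x y, (x, y) ∈ P2 → HasDerivAt (fun x => R2 (x, y)) (ω (x, y)) x)
    (hωc : ContinuousOn ω P2)
    (h6 : ∀ v x y, 0 < v → v < x → x < y → y < 1 → d6 R v x y = 0) :
    ∃ L : ℝ → ℝ, ContinuousOn L (Ioo 0 1) ∧ ∀ p ∈ P2, d5 L p = R p := by
  -- first derivative
  have hRcomp : ∀ (R R2 : ℝ × ℝ → ℝ), (∀ x y, (x, y) ∈ P2 → HasDerivAt (fun y => R (x, y)) (R2 (x, y)) y) →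
      ∀ (u : ℝ) (g : ℝ → ℝ) (g' z : ℝ), (u, g z) ∈ P2 → HasDerivAt g g' z →
      HasDerivAt (fun z => R (u, g z)) (R2 (u, g z) * g') z := by
    intro R R2 hR2 u g g' z h hg
    exact (hR2 u (g z) h).comp z hg
  have hRcomp1 : ∀ (R R2 : ℝ × ℝ → ℝ), (∀ x y, (x, y) ∈ P2 → HasDerivAt (fun x => R (x, y)) (R2 (x, y)) x) →
      ∀ (u : ℝ) (g : ℝ → ℝ) (g' z : ℝ), (g z, u) ∈ P2 → HasDerivAt g g' z →
      HasDerivAt (fun z => R (g z, u)) (R2 (g z, u) * g') z := by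
    intro R R2 hR2 u g g' z h hg
    exact (hR2 (g z) u h).comp z hg
  have D1 : ∀ v x y, 0 < v → v < x → x < y → y < 1 →
      R2 (v, x) + R1 (x, y) - R2 (v / y, x / y) * (1 / y)
      - R2 ((1 - y) / (1 - v), (1 - y) / (1 - x)) * ((1 - y) / (1 - x) ^ 2)
      + R2 (v * (1 - y) / (y * (1 - v)), x * (1 - y) / (y * (1 - x))) * ((1 - y) / (y * (1 - x) ^ 2)) = 0 := by
    intro v x y hv hx hy h1
    have a2 : 1 - x ≠ 0 := by linarith
    have a3 : y ≠ 0 := by linarith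
    refine hd_zero_of_eventually (f := fun x => d6 R v x y) (a := v) (b := y) ⟨hx, hy⟩ 
      (fun z hz => h6 v z y hv hz.1 hz.2 h1) ?_
    have t1 := hR2 v x ⟨hv, hx, hy.trans h1⟩
    have t2 := hR1 x y ⟨hv.trans hx, hy, h1⟩
    have t3 := hRcomp R R2 hR2 (v / y) (fun x => x / y) _ x (mp_div hv hx hy) (hd_div1 x y)
    have t4 := hRcomp R R2 hR2 ((1 - y) / (1 - v)) _ _ x (mp_phi hx hy h1) (hd_phi1 x y a2)
    have t5 := hRcomp R R2 hR2 (v * (1 - y) / (y * (1 - v))) _ _ x (mp_psi hv hx hy h1) (hd_psi1 x y a2 a3)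
    exact (((((t1.sub_const (R (v, y))).add t2).sub t3).sub t4).add t5)
  have D2 : ∀ v x y, 0 < v → v < x → x < y → y < 1 →
      ω (v, x) - ω (v / y, x / y) * (1 / y) * (1 / y)
      - ω ((1 - y) / (1 - v), (1 - y) / (1 - x)) * ((1 - y) / (1 - v) ^ 2) * ((1 - y) / (1 - x) ^ 2)
      + ω (v * (1 - y) / (y * (1 - v)), x * (1 - y) / (y * (1 - x))) * ((1 - y) / (y * (1 - v) ^ 2))
         * ((1 - y) / (y * (1 - x) ^ 2)) = 0 := by
    intro v x y hv hx hy h1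
    have a2 : 1 - v ≠ 0 := by linarith
    have a3 : y ≠ 0 := by linarith
    refine hd_zero_of_eventually (a := 0) (b := x) ⟨hv, hx⟩ 
      (fun z hz => D1 z x y hz.1 hz.2 hy h1) ?_
    have t1 := hω v x ⟨hv, hx, hy.trans h1⟩
    have t3 := hRcomp1 R2 ω hω (x / y) (fun x => x / y) _ v (mp_div hv hx hy) (hd_div1 v y)
    have t4 := hRcomp1 R2 ω hω ((1 - y) / (1 - x)) _ _ v (mp_phi hx hy h1) (hd_phi1 v y a2)
    have t5 := hRcomp1 R2 ω hω (x * (1 - y) / (y * (1 - x))) _ _ v (mp_psi hv hx hy h1) (hd_psi1 v y a2 a3)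
    exact ((((t1.add_const (R1 (x, y))).sub (t3.mul_const _)).sub (t4.mul_const _)).add (t5.mul_const _))
  set w : ℝ × ℝ → ℝ := fun p => (p.2 - p.1) ^ 2 * ω p with hw
  have hwc : ContinuousOn w P2 := by
    refine ContinuousOn.mul (by fun_prop) hωc
  have hw3 : ∀ v x y, 0 < v → v < x → x < y → y < 1 → w (v, x) = w (v / y, x / y)
      + w ((1 - y) / (1 - v), (1 - y) / (1 - x))
      - w (v * (1 - y) / (y * (1 - v)), x * (1 - y) / (y * (1 - x))) := by
    intro v x y hv hx hy h1
    have := D2 v x y hv hx hy h1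
    have a1 : 1 - v ≠ 0 := by linarith
    have a2 : 1 - x ≠ 0 := by linarith
    have a7 : y ≠ 0 := by linarith
    simp only [hw]
    have e1 : (x / y - v / y) ^ 2 = (x - v) ^ 2 * ((1 / y) * (1 / y)) := by field_simp
    have e2 : ((1 - y) / (1 - x) - (1 - y) / (1 - v)) ^ 2 = (x - v) ^ 2 *
      (((1 - y) / (1 - v) ^ 2) * ((1 - y) / (1 - x) ^ 2)) := by field_simp; ring
    have e3 : (x * (1 - y) / (y * (1 - x)) - v * (1 - y) / (y * (1 - v))) ^ 2 = (x - v) ^ 2 *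
      (((1 - y) / (y * (1 - v) ^ 2)) * ((1 - y) / (y * (1 - x) ^ 2))) := by field_simp; ring
    rw [e1, e2, e3]
    linear_combination (x - v) ^ 2 * this
  set W : ℝ → ℝ → ℝ := fun s t => w (t * (1 - s) / (1 - s * t), (1 - s) / (1 - s * t)) with hW
  have hexp : ∀ a : ℝ, 0 < a → Real.exp (-a) ∈ Ioo (0:ℝ) 1 := fun a ha =>
    ⟨Real.exp_pos _, by rw [Real.exp_lt_one_iff]; linarith⟩
  obtain ⟨n, hnc, hn⟩ := coc_trivial (fun a b => W (Real.exp (-a)) (Real.exp (-b))) (by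
      simp only [hW]
      refine hwc.comp (f := fun p : ℝ × ℝ => (Real.exp (-p.2) * (1 - Real.exp (-p.1)) / (1 - Real.exp (-p.1) * Real.exp (-p.2)), (1 - Real.exp (-p.1)) / (1 - Real.exp (-p.1) * Real.exp (-p.2)))) ?_ ?_
      · rintro p ⟨h1, h2⟩
        have m1 := hexp _ h1
        have m2 := hexp _ h2
        have : 1 - Real.exp (-p.1) * Real.exp (-p.2) ≠ 0 := by
          nlinarith [m1.1, m1.2, m2.1, m2.2]
        apply ContinuousAt.continuousWithinAt
        fun_prop (disch := assumption)
      · rintro p ⟨h1, h2⟩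
        exact W_coord (hexp _ h1) (hexp _ h2)) (by
      intro a b c ha hb hc
      have := W_cocycle w hw3 W (fun s t => rfl) (hexp a ha) (hexp b hb) (hexp c hc)
      rw [← Real.exp_add, ← Real.exp_add, ← neg_add, ← neg_add] at this
      exact this)
  set N : ℝ → ℝ := fun t => n (- Real.log t) with hN
  have hlog : ∀ t ∈ Ioo (0:ℝ) 1, 0 < - Real.log t := fun t ht => by
    have := Real.log_neg ht.1 ht.2; linarith
  have hNc : ContinuousOn N (Ioo 0 1) := by
    refine hnc.comp (f := fun t => - Real.log t) ?_ (fun t ht => hlog t ht)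
    exact (Real.continuousOn_log.mono (fun x hx => (ne_of_gt hx.1))).neg
  have hNW : ∀ s ∈ Ioo (0:ℝ) 1, ∀ t ∈ Ioo (0:ℝ) 1, N t + N s - N (s * t) = W s t := by
    intro s hs t ht
    have := hn _ _ (hlog s hs) (hlog t ht)
    simp only [neg_neg, Real.exp_log hs.1, Real.exp_log ht.1] at this
    rw [← this]
    simp only [hN, Real.log_mul hs.1.ne' ht.1.ne', neg_add]
    ring
  have half : (1/2 : ℝ) ∈ Ioo (0:ℝ) 1 := by norm_num
  set m : ℝ → ℝ := fun t => ∫ z in (1/2 : ℝ)..t, N z / (1 - z) ^ 2 with hm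
  have hmd : ∀ t ∈ Ioo (0:ℝ) 1, HasDerivAt m (N t / (1 - t) ^ 2) t := by
    intro t ht
    refine prim_hasDeriv (f := fun z => N z / (1 - z) ^ 2) ?_ half ht
    refine hNc.div (by fun_prop) ?_
    intro z hz; have : 1 - z ≠ 0 := by linarith [hz.2]
    positivity
  have hmc : ContinuousOn m (Ioo 0 1) := fun t ht => (hmd t ht).continuousAt.continuousWithinAt
  set L : ℝ → ℝ := fun t => ∫ z in (1/2 : ℝ)..t, m z / z with hL
  have hLd : ∀ t ∈ Ioo (0:ℝ) 1, HasDerivAt L (m t / t) t := by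
    intro t ht
    refine prim_hasDeriv (f := fun z => m z / z) ?_ half ht
    exact hmc.div (by fun_prop) (fun z hz => hz.1.ne')
  have hLc : ContinuousOn L (Ioo 0 1) := fun t ht => (hLd t ht).continuousAt.continuousWithinAt
  have hd5c : ContinuousOn (d5 L) P2 := by
    unfold d5
    have i1 : ContinuousOn (fun p : ℝ × ℝ => L p.1) P2 :=
      hLc.comp (f := fun p : ℝ × ℝ => p.1) (by fun_prop) (fun p hp => ⟨hp.1, hp.2.1.trans hp.2.2⟩)
    have i2 : ContinuousOn (fun p : ℝ × ℝ => L p.2) P2 :=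
      hLc.comp (f := fun p : ℝ × ℝ => p.2) (by fun_prop) (fun p hp => ⟨hp.1.trans hp.2.1, hp.2.2⟩)
    have i3 : ContinuousOn (fun p : ℝ × ℝ => L (p.1 / p.2)) P2 := by
      refine hLc.comp (f := fun p : ℝ × ℝ => p.1 / p.2) ?_ (fun p hp => p2_div hp)
      exact ContinuousOn.div (by fun_prop) (by fun_prop) (fun p hp => (hp.1.trans hp.2.1).ne')
    have i4 : ContinuousOn (fun p : ℝ × ℝ => L ((1 - p.2) / (1 - p.1))) P2 := by
      refine hLc.comp (f := fun p : ℝ × ℝ => (1 - p.2) / (1 - p.1)) ?_ (fun p hp => p2_phi hp)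
      exact ContinuousOn.div (by fun_prop) (by fun_prop) (fun p hp => by linarith [hp.2.1, hp.2.2])
    have i5 : ContinuousOn (fun p : ℝ × ℝ => L (p.1 * (1 - p.2) / (p.2 * (1 - p.1)))) P2 := by
      refine hLc.comp (f := fun p : ℝ × ℝ => p.1 * (1 - p.2) / (p.2 * (1 - p.1))) ?_ (fun p hp => p2_psi hp)
      exact ContinuousOn.div (by fun_prop) (by fun_prop) (fun p hp =>
        mul_ne_zero (hp.1.trans hp.2.1).ne' (by linarith [hp.2.1, hp.2.2]))
    exact (((i1.sub i2).sub i3).sub i4).add i5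
  -- mixed derivative of `R - d5 L` vanishes
  set T : ℝ × ℝ → ℝ := fun p => R2 p - (- (m p.2 / p.2) + m (p.1 / p.2) * (1 / p.2)
    + m ((1 - p.2) / (1 - p.1)) * (1 / (1 - p.2))
    - m (p.1 * (1 - p.2) / (p.2 * (1 - p.1))) * (1 / (p.2 * (1 - p.2)))) with hT
  have hTd : ∀ x y, (x, y) ∈ P2 → HasDerivAt (fun y => R (x, y) - d5 L (x, y)) (T (x, y)) y := by
    intro x y h
    have := (hR2 x y h).sub (d5_deriv2 hLd h)
    refine this.congr_deriv ?_
    have h1 := h.1; have h2 := h.2.1; have h3 := h.2.2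
    simp only at h1 h2 h3
    have a1 : 1 - x ≠ 0 := by linarith
    have a2 : 1 - y ≠ 0 := by linarith
    have a3 : x ≠ 0 := by linarith
    have a4 : y ≠ 0 := by linarith
    simp only [hT]
    field_simp
    ring
  have hT0 : ∀ x y, (x, y) ∈ P2 → HasDerivAt (fun x => T (x, y)) 0 x := by
    intro x y h
    have h1 := h.1; have h2 := h.2.1; have h3 := h.2.2
    simp only at h1 h2 h3
    have a1 : 1 - x ≠ 0 := by linarith
    have a2 : 1 - y ≠ 0 := by linarith
    have a3 : x ≠ 0 := by linarith
    have a4 : y ≠ 0 := by linarith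
    have a5 : y - x ≠ 0 := by linarith
    have b2 : 1 - x / y = (y - x) / y := by field_simp
    have b4 : 1 - (1 - y) / (1 - x) = (y - x) / (1 - x) := by field_simp; ring
    have b6 : 1 - x * (1 - y) / (y * (1 - x)) = (y - x) / (y * (1 - x)) := by field_simp; ring
    have t0 := hω x y h
    have t1 := ((hmd _ (p2_div h)).comp x (hd_div1 x y)).mul_const (1 / y)
    have t2 := ((hmd _ (p2_phi h)).comp x (hd_phi1 x y a1)).mul_const (1 / (1 - y))
    have t3 := ((hmd _ (p2_psi h)).comp x (hd_psi1 x y a1 a4)).mul_const (1 / (y * (1 - y)))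
    have := t0.sub (((t1.const_add (-(m y / y))).add t2).sub t3)
    refine this.congr_deriv ?_
    have key := hNW _ (p2_phi h) _ (p2_div h)
    have e5 : (1 - y) / (1 - x) * (x / y) = x * (1 - y) / (y * (1 - x)) := by field_simp
    have hWw : W ((1 - y) / (1 - x)) (x / y) = w (x, y) := W_coord_inv (w := w) h rfl rfl
    simp only at key
    rw [e5, hWw] at key
    have hNpsi : N (x * (1 - y) / (y * (1 - x))) = N (x / y) + N ((1 - y) / (1 - x)) - (y - x) ^ 2 * ω (x, y) := by
      have : w (x, y) = (y - x) ^ 2 * ω (x, y) := rfl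
      rw [← this]; linarith
    simp only [b2, b4, b6, hNpsi]
    field_simp
    ring
  have hTc : ∀ x x' y, (x, y) ∈ P2 → (x', y) ∈ P2 → T (x, y) = T (x', y) := by
    intro x x' y h h'
    exact const_of_deriv (f := fun x => T (x, y)) (a := 0) (b := y)
      (fun z hz => hT0 z y ⟨hz.1, hz.2, h.2.2⟩) ⟨h.1, h.2.1⟩ ⟨h'.1, h'.2.1⟩
  obtain ⟨f, hfc, hf⟩ := sep_case (fun p => R p - d5 L p) (hRc.sub hd5c) (by
      intro v x y hv hx hy h1
      rw [d6_sub, h6 _ _ _ hv hx hy h1, d6_d5 _ _ _ _ hv hx hy h1]; ring) (by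
      intro v v' y y' h1 h2 h3 h4
      refine const_of_deriv (f := fun y => (R (v, y) - d5 L (v, y)) - (R (v', y) - d5 L (v', y)))
        (a := max v v') (b := 1) ?_ ⟨max_lt h1.2.1 h2.2.1, h1.2.2⟩ ⟨max_lt h3.2.1 h4.2.1, h3.2.2⟩
      intro z hz
      have m1 := le_max_left v v'
      have m2 := le_max_right v v'
      have z1 : (v, z) ∈ P2 := ⟨h1.1, lt_of_le_of_lt m1 hz.1, hz.2⟩
      have z2 : (v', z) ∈ P2 := ⟨h2.1, lt_of_le_of_lt m2 hz.1, hz.2⟩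
      refine ((hTd v z z1).sub (hTd v' z z2)).congr_deriv ?_
      rw [hTc v v' z z1 z2]; ring)
  refine ⟨fun x => L x + f x, hLc.add hfc, ?_⟩
  intro p hp
  rw [d5_add, hf p hp]; ring



open scoped ContDiff NNReal ENNReal

/-- families of Möbius maps -/
structure Mob where
  a : ℝ × ℝ → ℝ
  b : ℝ × ℝ → ℝ
  c : ℝ × ℝ → ℝ
  d : ℝ × ℝ → ℝ

namespace Mob

noncomputable def ev (M : Mob) (p : ℝ × ℝ) (v : ℝ) : ℝ := (M.a p * v + M.b p) / (M.c p * v + M.d p)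

def den (M : Mob) (p : ℝ × ℝ) (v : ℝ) : ℝ := M.c p * v + M.d p

def det (M : Mob) (p : ℝ × ℝ) : ℝ := M.a p * M.d p - M.b p * M.c p

structure Good (M : Mob) : Prop where
  ha : ContDiffOn ℝ ∞ M.a P2
  hb : ContDiffOn ℝ ∞ M.b P2
  hc : ContDiffOn ℝ ∞ M.c P2
  hd : ContDiffOn ℝ ∞ M.d P2
  hdet : ∀ p ∈ P2, M.det p ≠ 0

def comp (M N : Mob) : Mob where
  a := fun p => M.a p * N.a p + M.b p * N.c p
  b := fun p => M.a p * N.b p + M.b p * N.d p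
  c := fun p => M.c p * N.a p + M.d p * N.c p
  d := fun p => M.c p * N.b p + M.d p * N.d p

lemma Good.comp {M N : Mob} (hM : M.Good) (hN : N.Good) : (M.comp N).Good where
  ha := (hM.ha.mul hN.ha).add (hM.hb.mul hN.hc)
  hb := (hM.ha.mul hN.hb).add (hM.hb.mul hN.hd)
  hc := (hM.hc.mul hN.ha).add (hM.hd.mul hN.hc)
  hd := (hM.hc.mul hN.hb).add (hM.hd.mul hN.hd)
  hdet := fun p hp => by
    have := mul_ne_zero (hM.hdet p hp) (hN.hdet p hp)
    convert this using 1
    simp only [det, Mob.comp]; ring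

lemma ev_comp (M N : Mob) (p : ℝ × ℝ) (v : ℝ) (h : N.den p v ≠ 0) :
    (M.comp N).ev p v = M.ev p (N.ev p v) := by
  simp only [ev, comp, den] at *
  have e1 : M.a p * ((N.a p * v + N.b p) / (N.c p * v + N.d p)) + M.b p =
    ((M.a p * N.a p + M.b p * N.c p) * v + (M.a p * N.b p + M.b p * N.d p)) / (N.c p * v + N.d p) := by
    rw [eq_div_iff h, add_mul, mul_assoc, div_mul_cancel₀ _ h]; ring
  have e2 : M.c p * ((N.a p * v + N.b p) / (N.c p * v + N.d p)) + M.d p =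
    ((M.c p * N.a p + M.d p * N.c p) * v + (M.c p * N.b p + M.d p * N.d p)) / (N.c p * v + N.d p) := by
    rw [eq_div_iff h, add_mul, mul_assoc, div_mul_cancel₀ _ h]; ring
  rw [e1, e2, div_div_div_cancel_right₀ h]

lemma den_comp (M N : Mob) (p : ℝ × ℝ) (v : ℝ) (h : N.den p v ≠ 0) :
    (M.comp N).den p v = M.den p (N.ev p v) * N.den p v := by
  simp only [ev, comp, den] at *
  field_simp; ring

/-- kernel -/
noncomputable def ker (M : Mob) (ν : ℝ → ℝ) (p : ℝ × ℝ) (s : ℝ) : ℝ :=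
  ν ((M.d p * s - M.b p) / (M.a p - M.c p * s)) * (|M.det p| / (M.a p - M.c p * s) ^ 2)

lemma integral_ker (M : Mob) (ν g : ℝ → ℝ) (p : ℝ × ℝ) (h : M.det p ≠ 0) :
    ∫ v, ν v * g (M.ev p v) = ∫ s, M.ker ν p s * g s := by
  set a := M.a p with ha
  set b := M.b p with hb
  set c := M.c p with hc
  set d := M.d p with hd
  have hdet : a * d - b * c ≠ 0 := h
  set T : Set ℝ := {s | a - c * s ≠ 0} with hT
  have hTo : MeasurableSet T := by
    apply IsOpen.measurableSet
    exact isOpen_ne_fun (by fun_prop) (by fun_prop)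
  have hsub : ∀ (α β : ℝ), (α ≠ 0 ∨ β ≠ 0) → ({s : ℝ | α - β * s = 0}).Subsingleton := by
    intro α β hab s hs t ht
    simp only [Set.mem_ofPred_eq] at hs ht
    by_cases hβ : β = 0
    · subst hβ; simp_all
    · apply mul_left_cancel₀ hβ; linarith
  have hTc : volume Tᶜ = 0 := by
    have : Tᶜ = {s : ℝ | a - c * s = 0} := by ext; simp [hT]
    rw [this]
    apply (hsub a c ?_).measure_zero
    by_contra! hh
    apply hdet; rw [hh.1, hh.2]; ring
  set G : ℝ → ℝ := fun s => (d * s - b) / (a - c * s) with hG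
  set G' : ℝ → ℝ := fun s => (a * d - b * c) / (a - c * s) ^ 2 with hG'
  have hder : ∀ s ∈ T, HasDerivWithinAt G (G' s) T s := by
    intro s hs
    have hs' : a - c * s ≠ 0 := hs
    have h1 : HasDerivAt (fun s => d * s - b) d s := by
      simpa using ((hasDerivAt_id s).const_mul d).sub_const b
    have h2 : HasDerivAt (fun s => a - c * s) (-c) s := by
      simpa using ((hasDerivAt_id s).const_mul c).const_sub a
    refine ((h1.div h2 hs').congr_deriv ?_).hasDerivWithinAt
    simp only [hG']; congr 1; ring
  have hev : ∀ s ∈ T, M.ev p (G s) = s := by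
    intro s hs
    have hs' : a - c * s ≠ 0 := hs
    simp only [ev, hG, ← ha, ← hb, ← hc, ← hd]
    have e1 : a * ((d * s - b) / (a - c * s)) + b = (a * d - b * c) * s / (a - c * s) := by
      rw [eq_div_iff hs', add_mul, mul_assoc, div_mul_cancel₀ _ hs']; ring
    have e2 : c * ((d * s - b) / (a - c * s)) + d = (a * d - b * c) / (a - c * s) := by
      field_simp; ring
    rw [e1, e2, div_div_div_cancel_right₀ hs', mul_div_cancel_left₀ _ hdet]
  have hinj : InjOn G T := by
    intro s hs t ht hst
    rw [← hev s hs, ← hev t ht, hst]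
  have hIc : volume (G '' T)ᶜ = 0 := by
    have : (G '' T)ᶜ ⊆ {v : ℝ | d - (-c) * v = 0} := by
      intro v hv
      simp only [Set.mem_ofPred_eq]
      by_contra hne
      apply hv
      have hne' : c * v + d ≠ 0 := by intro h0; apply hne; linarith
      have e1 : a - c * ((a * v + b) / (c * v + d)) = (a * d - b * c) / (c * v + d) := by
        field_simp; ring
      have e2 : d * ((a * v + b) / (c * v + d)) - b = (a * d - b * c) * v / (c * v + d) := by
        rw [eq_div_iff hne', sub_mul, mul_assoc, div_mul_cancel₀ _ hne']; ring
      refine ⟨(a * v + b) / (c * v + d), ?_, ?_⟩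
      · show a - c * ((a * v + b) / (c * v + d)) ≠ 0
        rw [e1]; exact div_ne_zero hdet hne'
      · simp only [hG]
        rw [e1, e2, div_div_div_cancel_right₀ hne', mul_div_cancel_left₀ _ hdet]
    apply measure_mono_null this
    apply (hsub d (-c) ?_).measure_zero
    by_contra! hh
    apply hdet
    have : c = 0 := by linarith [hh.2]
    rw [hh.1, this]; ring
  have key := integral_image_eq_integral_abs_deriv_smul hTo hder hinj (fun v => ν v * g (M.ev p v))
  have r1 : volume.restrict (G '' T) = volume := by
    rw [Measure.restrict_eq_self_of_ae_mem]; exact hIc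
  have r2 : volume.restrict T = volume := by
    rw [Measure.restrict_eq_self_of_ae_mem]; exact hTc
  rw [r1] at key
  rw [key, setIntegral_congr_fun hTo (g := fun s => M.ker ν p s * g s), r2]
  intro s hs
  show |G' s| • (ν (G s) * g (M.ev p (G s))) = _
  rw [hev s hs]
  simp only [ker, det, smul_eq_mul, hG', abs_div, hG, ← ha, ← hb, ← hc, ← hd]
  rw [abs_of_nonneg (sq_nonneg (a - c * s))]
  ring

lemma ker_smooth (M : Mob) (hM : M.Good) (ν : ℝ → ℝ) (hν : ContDiff ℝ ∞ ν)
    (hs : HasCompactSupport ν) :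
    ContDiffOn ℝ ∞ (fun z : (ℝ × ℝ) × ℝ => M.ker ν z.1 z.2) (P2 ×ˢ univ) := by
  rintro ⟨p0, s0⟩ ⟨hp, -⟩
  apply ContDiffAt.contDiffWithinAt
  have hn := isOpen_P2.mem_nhds hp
  have A : ContDiffAt ℝ ∞ (fun z : (ℝ × ℝ) × ℝ => M.a z.1) (p0, s0) :=
    ContDiffAt.comp (p0, s0) (hM.ha.contDiffAt hn) contDiffAt_fst
  have B : ContDiffAt ℝ ∞ (fun z : (ℝ × ℝ) × ℝ => M.b z.1) (p0, s0) :=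
    ContDiffAt.comp (p0, s0) (hM.hb.contDiffAt hn) contDiffAt_fst
  have C : ContDiffAt ℝ ∞ (fun z : (ℝ × ℝ) × ℝ => M.c z.1) (p0, s0) :=
    ContDiffAt.comp (p0, s0) (hM.hc.contDiffAt hn) contDiffAt_fst
  have D : ContDiffAt ℝ ∞ (fun z : (ℝ × ℝ) × ℝ => M.d z.1) (p0, s0) :=
    ContDiffAt.comp (p0, s0) (hM.hd.contDiffAt hn) contDiffAt_fst
  have S : ContDiffAt ℝ ∞ (fun z : (ℝ × ℝ) × ℝ => z.2) (p0, s0) := contDiffAt_snd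
  have U := A.sub (C.mul S)
  have V := (D.mul S).sub B
  by_cases h0 : M.a p0 - M.c p0 * s0 = 0
  · obtain ⟨K, hK⟩ := hs.isCompact.isBounded.exists_norm_le
    have : (fun z : (ℝ × ℝ) × ℝ => M.ker ν z.1 z.2) =ᶠ[nhds (p0, s0)] fun _ => 0 := by
      have hpos : K * |M.a p0 - M.c p0 * s0| < |M.d p0 * s0 - M.b p0| := by
        rw [h0, abs_zero, mul_zero, abs_pos]
        intro h1
        apply hM.hdet p0 hp
        simp only [det]
        linear_combination (M.c p0) * h1 + (M.d p0) * h0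
      have hc1 : ContinuousAt (fun z : (ℝ × ℝ) × ℝ => K * |M.a z.1 - M.c z.1 * z.2|) (p0, s0) :=
        continuousAt_const.mul U.continuousAt.abs
      have hc2 : ContinuousAt (fun z : (ℝ × ℝ) × ℝ => |M.d z.1 * z.2 - M.b z.1|) (p0, s0) :=
        V.continuousAt.abs
      filter_upwards [hc1.eventually_lt hc2 hpos] with z hz
      simp only [ker]
      by_cases h1 : M.a z.1 - M.c z.1 * z.2 = 0
      · rw [h1]; simp
      · have : ν ((M.d z.1 * z.2 - M.b z.1) / (M.a z.1 - M.c z.1 * z.2)) = 0 := by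
          by_contra h2
          have := hK _ (subset_tsupport _ h2)
          rw [Real.norm_eq_abs, abs_div, div_le_iff₀ (abs_pos.2 h1)] at this
          linarith
        rw [this, zero_mul]
    exact contDiffAt_const.congr_of_eventuallyEq this
  · have E : ContDiffAt ℝ ∞ (fun z : (ℝ × ℝ) × ℝ => M.det z.1) (p0, s0) :=
      (A.mul D).sub (B.mul C)
    have E' : ContDiffAt ℝ ∞ (fun z : (ℝ × ℝ) × ℝ => |M.det z.1|) (p0, s0) :=
      ContDiffAt.comp (p0, s0) (contDiffAt_abs (hM.hdet p0 hp)) E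
    exact (ContDiffAt.comp (p0, s0) hν.contDiffAt (V.div U h0)).mul (E'.div (U.pow 2) (pow_ne_zero 2 h0))

end Mob


lemma Mob.ev_meas (M : Mob) (p : ℝ × ℝ) : Measurable (M.ev p) := by
  unfold Mob.ev; fun_prop

lemma SM_integrable (M1 M2 : Mob) (ν μ : ℝ → ℝ)
    (hν : ContDiff ℝ ∞ ν) (hνs : HasCompactSupport ν) (hμ : ContDiff ℝ ∞ μ) (hμs : HasCompactSupport μ)
    (f : ℝ × ℝ → ℝ) (hf : Measurable f) (B : ℝ) (hB : ∀ w, |f w| ≤ B) (p : ℝ × ℝ) :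
    Integrable (fun z : ℝ × ℝ => ν z.1 * μ z.2 * f (M1.ev p z.1, M2.ev p z.2)) := by
  have h1 : Integrable (fun z : ℝ × ℝ => ν z.1 * μ z.2) :=
    (hν.continuous.integrable_of_hasCompactSupport hνs).mul_prod
      (hμ.continuous.integrable_of_hasCompactSupport hμs)
  refine h1.mul_bdd (c := B) ?_ ?_
  · have := M1.ev_meas p
    have := M2.ev_meas p
    have h2 : Measurable (fun z : ℝ × ℝ => f (M1.ev p z.1, M2.ev p z.2)) :=
      hf.comp (((M1.ev_meas p).comp measurable_fst).prodMk ((M2.ev_meas p).comp measurable_snd))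
    exact h2.aestronglyMeasurable
  · exact Filter.Eventually.of_forall fun z => hB _

lemma SM (M1 M2 : Mob) (h1 : M1.Good) (h2 : M2.Good) (ν μ : ℝ → ℝ)
    (hν : ContDiff ℝ ∞ ν) (hνs : HasCompactSupport ν) (hμ : ContDiff ℝ ∞ μ) (hμs : HasCompactSupport μ)
    (f : ℝ × ℝ → ℝ) (hf : Measurable f) (B : ℝ) (hB : ∀ w, |f w| ≤ B) (K : Set (ℝ × ℝ))
    (hK : IsCompact K) (hfK : ∀ w, w ∉ K → f w = 0) :
    ContDiffOn ℝ ∞ (fun p => ∫ z : ℝ × ℝ, ν z.1 * μ z.2 * f (M1.ev p z.1, M2.ev p z.2)) P2 := by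
  have k1 := M1.ker_smooth h1 ν hν hνs
  have k2 := M2.ker_smooth h2 μ hμ hμs
  obtain ⟨r, hr0, hr⟩ : ∃ r : ℝ, 0 < r ∧ K ⊆ Metric.closedBall 0 r := by
    obtain ⟨r, hr⟩ := hK.isBounded.subset_closedBall 0
    exact ⟨max r 1, by positivity, hr.trans (Metric.closedBall_subset_closedBall (le_max_left _ _))⟩
  let χ : ContDiffBump (0 : ℝ × ℝ) := ⟨r, r + 1, hr0, by linarith⟩
  have hχ1 : ∀ w, f w ≠ 0 → χ w = 1 := fun w hw =>
    χ.one_of_mem_closedBall (hr (by by_contra hh; exact hw (hfK w hh)))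
  have hint : Integrable f := by
    have : IntegrableOn f K := by
      refine Measure.integrableOn_of_bounded (M := B) hK.measure_lt_top.ne hf.aestronglyMeasurable ?_
      exact Filter.Eventually.of_forall fun z => hB _
    rw [← integrableOn_iff_integrable_of_support_subset (s := K)]
    · exact this
    · intro w hw; by_contra hh; exact hw (hfK w hh)
  let g : ℝ × ℝ → ℝ × ℝ → ℝ := fun p x =>
    χ (-x) * (M1.ker ν p (-x.1) * M2.ker μ p (-x.2))
  have hgs : ContDiffOn ℝ ∞ (Function.uncurry g) (P2 ×ˢ (univ : Set (ℝ × ℝ))) := by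
    have e1 : ContDiffOn ℝ ∞ (fun z : (ℝ × ℝ) × (ℝ × ℝ) => M1.ker ν z.1 (-z.2.1)) (P2 ×ˢ univ) :=
      k1.comp (f := fun z : (ℝ × ℝ) × (ℝ × ℝ) => (z.1, -z.2.1)) (by fun_prop)
        (fun z hz => ⟨hz.1, trivial⟩)
    have e2 : ContDiffOn ℝ ∞ (fun z : (ℝ × ℝ) × (ℝ × ℝ) => M2.ker μ z.1 (-z.2.2)) (P2 ×ˢ univ) :=
      k2.comp (f := fun z : (ℝ × ℝ) × (ℝ × ℝ) => (z.1, -z.2.2)) (by fun_prop)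
        (fun z hz => ⟨hz.1, trivial⟩)
    have e3 : ContDiffOn ℝ ∞ (fun z : (ℝ × ℝ) × (ℝ × ℝ) => χ (-z.2)) (P2 ×ˢ univ) :=
      (χ.contDiff.comp (f := fun z : (ℝ × ℝ) × (ℝ × ℝ) => -z.2) (by fun_prop)).contDiffOn
    exact e3.mul (e1.mul e2)
  have main := contDiffOn_convolution_right_with_param_comp (𝕜 := ℝ) (μ := (volume : Measure (ℝ × ℝ)))
    (n := ⊤) (ContinuousLinearMap.mul ℝ ℝ) (s := P2) (v := fun _ => (0 : ℝ × ℝ)) contDiffOn_const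
    (f := f) (g := g) (k := Metric.closedBall 0 (r + 1)) isOpen_P2
    (isCompact_closedBall _ _) (fun p x _ hx => by
      have : χ (-x) = 0 := by
        apply χ.zero_of_le_dist
        have : ¬ dist x 0 ≤ r + 1 := hx
        rw [dist_zero_right] at this ⊢
        rw [norm_neg]
        exact (not_le.1 this).le
      simp only [g, this, zero_mul]) hint.locallyIntegrable hgs
  refine main.congr fun p hp => ?_
  have kc1 : Continuous (M1.ker ν p) := by
    rw [← continuousOn_univ]
    exact k1.continuousOn.comp (f := fun s => (p, s)) (by fun_prop) (fun s _ => ⟨hp, trivial⟩)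
  have kc2 : Continuous (M2.ker μ p) := by
    rw [← continuousOn_univ]
    exact k2.continuousOn.comp (f := fun s => (p, s)) (by fun_prop) (fun s _ => ⟨hp, trivial⟩)
  simp only [convolution, ContinuousLinearMap.mul_apply', g, zero_sub, neg_neg, Prod.fst_neg,
    Prod.snd_neg]
  have hwi : Integrable (fun w : ℝ × ℝ => f w * (χ w * (M1.ker ν p w.1 * M2.ker μ p w.2))) := by
    refine Integrable.bdd_mul (c := B) ?_ hf.aestronglyMeasurable
      (Filter.Eventually.of_forall fun z => hB _)
    refine Continuous.integrable_of_hasCompactSupport ?_ ?_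
    · have := χ.continuous
      fun_prop
    · exact χ.hasCompactSupport.mul_right
  have hwe : (fun w : ℝ × ℝ => f w * (χ w * (M1.ker ν p w.1 * M2.ker μ p w.2))) =
      fun w => M1.ker ν p w.1 * (M2.ker μ p w.2 * f w) := by
    funext w
    by_cases hw : f w = 0
    · simp [hw]
    · rw [hχ1 w hw]; ring
  rw [hwe] at hwi ⊢
  have hzi := SM_integrable M1 M2 ν μ hν hνs hμ hμs f hf B hB p
  rw [Measure.volume_eq_prod] at hzi hwi ⊢
  rw [integral_prod _ hzi, integral_prod _ hwi]
  simp only [mul_assoc, integral_const_mul]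
  rw [M1.integral_ker ν (fun s => ∫ θ, μ θ * f (s, M2.ev p θ)) p (h1.hdet p hp)]
  congr 1
  funext s
  rw [M2.integral_ker μ (fun t => f (s, t)) p (h2.hdet p hp)]

noncomputable def hatR (R : ℝ × ℝ → ℝ) (w : ℝ × ℝ) : ℝ :=
  if w.1 < w.2 then R w else - R (w.2, w.1)

def Om : Set (ℝ × ℝ) := {w | w.1 ∈ Ioo (0:ℝ) 1 ∧ w.2 ∈ Ioo (0:ℝ) 1 ∧ w.1 ≠ w.2}

lemma isOpen_Om : IsOpen Om := by
  have : Om = (Ioo (0:ℝ) 1 ×ˢ Ioo (0:ℝ) 1) ∩ {w | w.1 ≠ w.2} := by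
    ext w; simp only [Om, Set.mem_ofPred_eq, mem_inter_iff, mem_prod]; tauto
  rw [this]
  exact (isOpen_Ioo.prod isOpen_Ioo).inter (isOpen_ne_fun (by fun_prop) (by fun_prop))

lemma hatR_meas {R : ℝ × ℝ → ℝ} (hR : Measurable R) : Measurable (hatR R) := by
  refine Measurable.ite (measurableSet_lt measurable_fst measurable_snd) hR ?_
  exact (hR.comp measurable_swap).neg

/-- bounded on compact sets -/
def LB (R : ℝ × ℝ → ℝ) : Prop := ∀ K : Set (ℝ × ℝ), IsCompact K → K ⊆ P2 → ∃ B, ∀ p ∈ K, |R p| ≤ B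

lemma hatR_LB {R : ℝ × ℝ → ℝ} (hR : LB R) (K : Set (ℝ × ℝ)) (hK : IsCompact K) (hs : K ⊆ Om) :
    ∃ B, ∀ p ∈ K, |hatR R p| ≤ B := by
  obtain ⟨B1, h1⟩ := hR (K ∩ {p | p.1 ≤ p.2})
    (hK.inter_right (isClosed_le continuous_fst continuous_snd)) (fun p hp => by
      obtain ⟨a, b, c⟩ := hs hp.1
      exact ⟨a.1, lt_of_le_of_ne hp.2 c, b.2⟩)
  obtain ⟨B2, h2⟩ := hR (Prod.swap '' (K ∩ {p | p.2 ≤ p.1}))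
    ((hK.inter_right (isClosed_le continuous_snd continuous_fst)).image continuous_swap) (by
      rintro _ ⟨p, hp, rfl⟩
      obtain ⟨a, b, c⟩ := hs hp.1
      exact ⟨b.1, lt_of_le_of_ne hp.2 (Ne.symm c), a.2⟩)
  refine ⟨max B1 B2, fun p hp => ?_⟩
  unfold hatR
  split_ifs with hlt
  · exact (h1 p ⟨hp, le_of_lt hlt⟩).trans (le_max_left _ _)
  · rw [abs_neg]
    exact (h2 _ ⟨p, ⟨hp, not_lt.1 hlt⟩, rfl⟩).trans (le_max_right _ _)

lemma SM' (M1 M2 : Mob) (h1 : M1.Good) (h2 : M2.Good) (R : ℝ × ℝ → ℝ) (hR : Measurable R) (hl : LB R)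
    (p0 : ℝ × ℝ) (hp0 : p0 ∈ P2) (Kv Kt : Set ℝ) (hKv : IsCompact Kv) (hKt : IsCompact Kt)
    (h : ∀ v ∈ Kv, ∀ t ∈ Kt, M1.den p0 v ≠ 0 ∧ M2.den p0 t ≠ 0 ∧ (M1.ev p0 v, M2.ev p0 t) ∈ Om)
    (ν μ : ℝ → ℝ)
    (hν : ContDiff ℝ ∞ ν) (hνs : tsupport ν ⊆ Kv) (hμ : ContDiff ℝ ∞ μ) (hμs : tsupport μ ⊆ Kt) :
    ∃ U, IsOpen U ∧ p0 ∈ U ∧ U ⊆ P2 ∧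
      ContDiffOn ℝ ∞ (fun p => ∫ z : ℝ × ℝ, ν z.1 * μ z.2 * hatR R (M1.ev p z.1, M2.ev p z.2)) U ∧
      (∀ p ∈ U, Integrable (fun z : ℝ × ℝ => ν z.1 * μ z.2 * hatR R (M1.ev p z.1, M2.ev p z.2))) ∧
      ∀ p ∈ U, ∀ v ∈ Kv, ∀ t ∈ Kt, M1.den p v ≠ 0 := by
  have hνc : HasCompactSupport ν := hKv.of_isClosed_subset (isClosed_tsupport _) hνs
  have hμc : HasCompactSupport μ := hKt.of_isClosed_subset (isClosed_tsupport _) hμs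
  set W0 : Set ((ℝ × ℝ) × (ℝ × ℝ)) := {q | q.1 ∈ P2 ∧ M1.den q.1 q.2.1 * M2.den q.1 q.2.2 ≠ 0} with hW0
  have cf : ∀ g : ℝ × ℝ → ℝ, ContDiffOn ℝ ∞ g P2 →
      ContinuousOn (fun q : (ℝ × ℝ) × (ℝ × ℝ) => g q.1) (P2 ×ˢ univ) := fun g hg =>
    hg.continuousOn.comp continuousOn_fst (fun q hq => hq.1)
  have a1 := cf _ h1.ha
  have b1 := cf _ h1.hb
  have c1 := cf _ h1.hc
  have d1 := cf _ h1.hd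
  have a2 := cf _ h2.ha
  have b2 := cf _ h2.hb
  have c2 := cf _ h2.hc
  have d2 := cf _ h2.hd
  have den1 : ContinuousOn (fun q : (ℝ × ℝ) × (ℝ × ℝ) => M1.den q.1 q.2.1) (P2 ×ˢ univ) := by
    unfold Mob.den; exact (c1.mul (by fun_prop)).add d1
  have den2 : ContinuousOn (fun q : (ℝ × ℝ) × (ℝ × ℝ) => M2.den q.1 q.2.2) (P2 ×ˢ univ) := by
    unfold Mob.den; exact (c2.mul (by fun_prop)).add d2
  have hW0o : IsOpen W0 := by
    have := (den1.mul den2).isOpen_inter_preimage (isOpen_P2.prod isOpen_univ)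
      (isOpen_compl_singleton (x := (0:ℝ)))
    convert this using 1
    ext q
    simp [hW0]
  have hsub : W0 ⊆ P2 ×ˢ univ := fun q hq => ⟨hq.1, trivial⟩
  set Φ : (ℝ × ℝ) × (ℝ × ℝ) → ℝ × ℝ := fun q => (M1.ev q.1 q.2.1, M2.ev q.1 q.2.2) with hΦ
  have hΦc : ContinuousOn Φ W0 := by
    refine ContinuousOn.prodMk ?_ ?_
    · refine ContinuousOn.div (((a1.mul (by fun_prop)).add b1).mono hsub) (den1.mono hsub) ?_
      intro q hq; exact (mul_ne_zero_iff.1 hq.2).1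
    · refine ContinuousOn.div (((a2.mul (by fun_prop)).add b2).mono hsub) (den2.mono hsub) ?_
      intro q hq; exact (mul_ne_zero_iff.1 hq.2).2
  have hWo : IsOpen (W0 ∩ Φ ⁻¹' Om) := hΦc.isOpen_inter_preimage hW0o isOpen_Om
  obtain ⟨U, V, hU, hV, hpU, hKV, hUV⟩ := generalized_tube_lemma (isCompact_singleton (x := p0))
    (hKv.prod hKt) hWo (by
      rintro ⟨p, z⟩ ⟨hp, hz⟩
      rw [mem_singleton_iff] at hp
      obtain ⟨e1, e2, e3⟩ := h z.1 hz.1 z.2 hz.2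
      simp only at hp
      subst hp
      exact ⟨⟨hp0, mul_ne_zero e1 e2⟩, e3⟩)
  obtain ⟨N, hN, hpN, hNU⟩ := exists_compact_subset (hU.inter isOpen_P2)
    (show p0 ∈ U ∩ P2 from ⟨hpU rfl, hp0⟩)
  have hNW : N ×ˢ (Kv ×ˢ Kt) ⊆ W0 ∩ Φ ⁻¹' Om := fun q hq => hUV ⟨(hNU hq.1).1, hKV hq.2⟩
  set K := Φ '' (N ×ˢ (Kv ×ˢ Kt)) with hK
  have hKc : IsCompact K := (hN.prod (hKv.prod hKt)).image_of_continuousOn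
    (hΦc.mono (hNW.trans inter_subset_left))
  have hKO : K ⊆ Om := by
    rintro _ ⟨q, hq, rfl⟩
    exact (hNW hq).2
  obtain ⟨B, hB⟩ := hatR_LB hl K hKc hKO
  set f := K.indicator (hatR R) with hf
  have hfm : Measurable f := (hatR_meas hR).indicator hKc.measurableSet
  have hfB : ∀ w, |f w| ≤ max B 0 := by
    intro w
    by_cases hw : w ∈ K
    · rw [hf, indicator_of_mem hw]; exact (hB w hw).trans (le_max_left _ _)
    · rw [hf, indicator_of_notMem hw, abs_zero]; exact le_max_right _ _
  have hfK : ∀ w, w ∉ K → f w = 0 := fun w hw => indicator_of_notMem hw _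
  have heq : ∀ p ∈ N, (fun z : ℝ × ℝ => ν z.1 * μ z.2 * hatR R (M1.ev p z.1, M2.ev p z.2)) =
      (fun z : ℝ × ℝ => ν z.1 * μ z.2 * f (M1.ev p z.1, M2.ev p z.2)) := by
    intro p hp
    funext z
    by_cases e1 : ν z.1 = 0
    · simp [e1]
    by_cases e2 : μ z.2 = 0
    · simp [e2]
    have : (M1.ev p z.1, M2.ev p z.2) ∈ K :=
      ⟨(p, z), ⟨hp, hνs (subset_tsupport _ e1), hμs (subset_tsupport _ e2)⟩, rfl⟩
    rw [hf, indicator_of_mem this]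
  refine ⟨interior N, isOpen_interior, hpN, ?_, ?_, ?_, ?_⟩
  · exact interior_subset.trans (hNU.trans inter_subset_right)
  · refine ((SM M1 M2 h1 h2 ν μ hν hνc hμ hμc f hfm _ hfB K hKc hfK).mono
      (interior_subset.trans (hNU.trans inter_subset_right))).congr fun p hp => ?_
    rw [heq p (interior_subset hp)]
  · intro p hp
    rw [heq p (interior_subset hp)]
    exact SM_integrable M1 M2 ν μ hν hνc hμ hμc f hfm _ hfB p
  · intro p hp v hv t ht
    have := hNW (show (p, (v, t)) ∈ N ×ˢ (Kv ×ˢ Kt) from ⟨interior_subset hp, hv, ht⟩)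
    exact (mul_ne_zero_iff.1 this.1.2).1


noncomputable def DD (R : ℝ × ℝ → ℝ) (v w q : ℝ) : ℝ :=
  hatR R (v, w) - hatR R (v / q, w / q) - hatR R ((1 - q) / (1 - v), (1 - q) / (1 - w))
    + hatR R (v * (1 - q) / (q * (1 - v)), w * (1 - q) / (q * (1 - w)))

def mS (q : ℝ × ℝ → ℝ) : Mob := ⟨q, fun _ => 0, fun _ => 0, fun _ => 1⟩
def mD (q : ℝ × ℝ → ℝ) : Mob := ⟨fun _ => 1, fun _ => 0, fun _ => 0, q⟩
def mF (q : ℝ × ℝ → ℝ) : Mob := ⟨fun _ => 0, fun p => 1 - q p, fun _ => -1, fun _ => 1⟩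
def mP (q : ℝ × ℝ → ℝ) : Mob := ⟨fun p => 1 - q p, fun _ => 0, fun p => - q p, q⟩

section
variable {q : ℝ × ℝ → ℝ} (hq : ContDiffOn ℝ ∞ q P2) (hq1 : ∀ p ∈ P2, 0 < q p ∧ q p < 1)

lemma mS_good (hq : ContDiffOn ℝ ∞ q P2) (hq1 : ∀ p ∈ P2, 0 < q p ∧ q p < 1) : (mS q).Good :=
  ⟨hq, contDiffOn_const, contDiffOn_const, contDiffOn_const, fun p hp => by
    simp [mS, Mob.det]; linarith [hq1 p hp]⟩
lemma mD_good (hq : ContDiffOn ℝ ∞ q P2) (hq1 : ∀ p ∈ P2, 0 < q p ∧ q p < 1) : (mD q).Good :=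
  ⟨contDiffOn_const, contDiffOn_const, contDiffOn_const, hq, fun p hp => by
    simp [mD, Mob.det]; linarith [hq1 p hp]⟩
lemma mF_good (hq : ContDiffOn ℝ ∞ q P2) (hq1 : ∀ p ∈ P2, 0 < q p ∧ q p < 1) : (mF q).Good :=
  ⟨contDiffOn_const, contDiffOn_const.sub hq, contDiffOn_const, contDiffOn_const, fun p hp => by
    simp [mF, Mob.det]; linarith [hq1 p hp]⟩
lemma mP_good (hq : ContDiffOn ℝ ∞ q P2) (hq1 : ∀ p ∈ P2, 0 < q p ∧ q p < 1) : (mP q).Good :=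
  ⟨contDiffOn_const.sub hq, contDiffOn_const, hq.neg, hq, fun p hp => by
    have := hq1 p hp
    simp only [mP, Mob.det, zero_mul, sub_zero]
    exact mul_ne_zero (by linarith) (by linarith)⟩

lemma mS_ev (p : ℝ × ℝ) (t : ℝ) : (mS q).ev p t = t * q p := by simp [mS, Mob.ev]; ring
lemma mD_ev (p : ℝ × ℝ) (t : ℝ) : (mD q).ev p t = t / q p := by simp [mD, Mob.ev]
lemma mF_ev (p : ℝ × ℝ) (t : ℝ) : (mF q).ev p t = (1 - q p) / (1 - t) := by
  simp [mF, Mob.ev]; congr 1; ring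
lemma mP_ev (p : ℝ × ℝ) (t : ℝ) : (mP q).ev p t = t * (1 - q p) / (q p * (1 - t)) := by
  simp [mP, Mob.ev]; congr 1 <;> ring
lemma mS_den (p : ℝ × ℝ) (t : ℝ) : (mS q).den p t = 1 := by simp [mS, Mob.den]
end

/-- the images of the three Möbius maps -/
lemma Om_div {v w q : ℝ} (hv : 0 < v) (hvq : v < q) (hw : 0 < w) (hwq : w < q) (h : v ≠ w) :
    (v / q, w / q) ∈ Om := by
  rcases lt_or_gt_of_ne h with h | h
  · have := mp_div hv h hwq
    exact ⟨⟨this.1, this.2.1.trans this.2.2⟩, ⟨this.1.trans this.2.1, this.2.2⟩, this.2.1.ne⟩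
  · have := mp_div hw h hvq
    exact ⟨⟨this.1.trans this.2.1, this.2.2⟩, ⟨this.1, this.2.1.trans this.2.2⟩, this.2.1.ne'⟩

lemma Om_phi {v w q : ℝ} (hvq : v < q) (hwq : w < q) (hq : q < 1) (h : v ≠ w) :
    ((1 - q) / (1 - v), (1 - q) / (1 - w)) ∈ Om := by
  rcases lt_or_gt_of_ne h with h | h
  · have := mp_phi h hwq hq
    exact ⟨⟨this.1, this.2.1.trans this.2.2⟩, ⟨this.1.trans this.2.1, this.2.2⟩, this.2.1.ne⟩
  · have := mp_phi h hvq hq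
    exact ⟨⟨this.1.trans this.2.1, this.2.2⟩, ⟨this.1, this.2.1.trans this.2.2⟩, this.2.1.ne'⟩

lemma Om_psi {v w q : ℝ} (hv : 0 < v) (hvq : v < q) (hw : 0 < w) (hwq : w < q) (hq : q < 1) (h : v ≠ w) :
    (v * (1 - q) / (q * (1 - v)), w * (1 - q) / (q * (1 - w))) ∈ Om := by
  rcases lt_or_gt_of_ne h with h | h
  · have := mp_psi hv h hwq hq
    exact ⟨⟨this.1, this.2.1.trans this.2.2⟩, ⟨this.1.trans this.2.1, this.2.2⟩, this.2.1.ne⟩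
  · have := mp_psi hw h hvq hq
    exact ⟨⟨this.1.trans this.2.1, this.2.2⟩, ⟨this.1, this.2.1.trans this.2.2⟩, this.2.1.ne'⟩

lemma int4 {α : Type*} [MeasurableSpace α] {m : Measure α} {f g h k : α → ℝ} (hf : Integrable f m)
    (hg : Integrable g m) (hh : Integrable h m) (hk : Integrable k m) :
    ∫ z, (f z - g z - h z + k z) ∂m = ∫ z, f z ∂m - ∫ z, g z ∂m - ∫ z, h z ∂m + ∫ z, k z ∂m := by
  rw [integral_add (f := fun z => f z - g z - h z) ((hf.sub hg).sub hh) hk,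
    integral_sub (f := fun z => f z - g z) (hf.sub hg) hh, integral_sub hf hg]

def Kt : Set ℝ := Icc (49/100) (51/100)

lemma lemH (A : Mob) (hA : A.Good) {q : ℝ × ℝ → ℝ} (hq : ContDiffOn ℝ ∞ q P2)
    (hq1 : ∀ p ∈ P2, 0 < q p ∧ q p < 1) (R : ℝ × ℝ → ℝ) (hR : Measurable R) (hl : LB R)
    (p0 : ℝ × ℝ) (hp0 : p0 ∈ P2) (Kv : Set ℝ) (hKv : IsCompact Kv)
    (h : ∀ v ∈ Kv, A.den p0 v ≠ 0 ∧ 0 < A.ev p0 v ∧ A.ev p0 v < q p0 ∧ A.ev p0 v / q p0 ∉ Kt)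
    (ν μ : ℝ → ℝ)
    (hν : ContDiff ℝ ∞ ν) (hνs : tsupport ν ⊆ Kv) (hμ : ContDiff ℝ ∞ μ) (hμs : tsupport μ ⊆ Kt) :
    ∃ U, IsOpen U ∧ p0 ∈ U ∧ U ⊆ P2 ∧
      ContDiffOn ℝ ∞ (fun p => ∫ z : ℝ × ℝ, ν z.1 * μ z.2 * DD R (A.ev p z.1) (z.2 * q p) (q p)) U ∧
      ∀ p ∈ U, Integrable (fun z : ℝ × ℝ => ν z.1 * μ z.2 * DD R (A.ev p z.1) (z.2 * q p) (q p)) := by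
  have hKt : IsCompact Kt := isCompact_Icc
  have hS := mS_good hq hq1
  obtain ⟨q0, q1⟩ := hq1 p0 hp0
  have basic : ∀ v ∈ Kv, ∀ t ∈ Kt, 0 < A.ev p0 v ∧ A.ev p0 v < q p0 ∧ 0 < t * q p0 ∧ t * q p0 < q p0 ∧
      A.ev p0 v ≠ t * q p0 := by
    intro v hv t ht
    obtain ⟨-, b, c, d⟩ := h v hv
    have ht1 : (49/100:ℝ) ≤ t := ht.1
    have ht2 : t ≤ (51/100:ℝ) := ht.2
    refine ⟨b, c, by positivity, by nlinarith, fun he => d ?_⟩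
    rw [he, mul_div_cancel_right₀ _ q0.ne']; exact ht
  have gen : ∀ m : Mob, m.Good → (∀ s, 0 < s → s < q p0 → m.den p0 s ≠ 0) →
      (∀ s t, 0 < s → s < q p0 → 0 < t → t < q p0 → s ≠ t → (m.ev p0 s, m.ev p0 t) ∈ Om) →
      ∃ U, IsOpen U ∧ p0 ∈ U ∧ U ⊆ P2 ∧
      ContDiffOn ℝ ∞ (fun p => ∫ z : ℝ × ℝ, ν z.1 * μ z.2 *
        hatR R ((m.comp A).ev p z.1, (m.comp (mS q)).ev p z.2)) U ∧
      (∀ p ∈ U, Integrable (fun z : ℝ × ℝ => ν z.1 * μ z.2 *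
        hatR R ((m.comp A).ev p z.1, (m.comp (mS q)).ev p z.2))) := by
    intro m hm hden hOm
    obtain ⟨U, a1, a2, a3, a4, a5, -⟩ := SM' (m.comp A) (m.comp (mS q)) (hm.comp hA) (hm.comp hS) R hR hl p0 hp0 Kv Kt hKv hKt
      (fun v hv t ht => by
        obtain ⟨b1, b2, b3, b4, b5⟩ := basic v hv t ht
        have e0 := (h v hv).1
        have e1 : (mS q).den p0 t ≠ 0 := by rw [mS_den]; exact one_ne_zero
        rw [Mob.ev_comp _ _ _ _ e0, Mob.ev_comp _ _ _ _ e1, Mob.den_comp _ _ _ _ e0,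
          Mob.den_comp _ _ _ _ e1, mS_ev]
        exact ⟨mul_ne_zero (hden _ b1 b2) e0, mul_ne_zero (hden _ b3 b4) e1, hOm _ _ b1 b2 b3 b4 b5⟩)
      ν μ hν hνs hμ hμs
    exact ⟨U, a1, a2, a3, a4, a5⟩
  obtain ⟨U0, o0, p0', s0, c0, i0, hden⟩ := SM' A (mS q) hA hS R hR hl p0 hp0 Kv Kt hKv hKt
      (fun v hv t ht => by
        obtain ⟨b1, b2, b3, b4, b5⟩ := basic v hv t ht
        rw [mS_ev, mS_den]
        exact ⟨(h v hv).1, one_ne_zero, ⟨b1, b2.trans q1⟩, ⟨b3, b4.trans q1⟩, b5⟩)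
      ν μ hν hνs hμ hμs
  obtain ⟨U1, o1, p1', s1, c1, i1⟩ := gen (mD q) (mD_good hq hq1)
    (fun s _ _ => by simp [mD, Mob.den]; exact q0.ne')
    (fun s t a b c d e => by rw [mD_ev, mD_ev]; exact Om_div a b c d e)
  obtain ⟨U2, o2, p2', s2, c2, i2⟩ := gen (mF q) (mF_good hq hq1)
    (fun s _ _ => by simp [mF, Mob.den]; linarith)
    (fun s t a b c d e => by rw [mF_ev, mF_ev]; exact Om_phi b d q1 e)
  obtain ⟨U3, o3, p3', s3, c3, i3⟩ := gen (mP q) (mP_good hq hq1)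
    (fun s _ _ => by simp [mP, Mob.den]; nlinarith)
    (fun s t a b c d e => by rw [mP_ev, mP_ev]; exact Om_psi a b c d q1 e)
  have t0 : (49/100:ℝ) ∈ Kt := by constructor <;> norm_num
  have key : ∀ p ∈ U0, (fun z : ℝ × ℝ => ν z.1 * μ z.2 * DD R (A.ev p z.1) (z.2 * q p) (q p)) =
      fun z => ν z.1 * μ z.2 * hatR R (A.ev p z.1, (mS q).ev p z.2)
       - ν z.1 * μ z.2 * hatR R (((mD q).comp A).ev p z.1, ((mD q).comp (mS q)).ev p z.2)
       - ν z.1 * μ z.2 * hatR R (((mF q).comp A).ev p z.1, ((mF q).comp (mS q)).ev p z.2)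
       + ν z.1 * μ z.2 * hatR R (((mP q).comp A).ev p z.1, ((mP q).comp (mS q)).ev p z.2) := by
    intro p hp
    funext z
    by_cases e : ν z.1 = 0
    · simp [e]
    have e0 := hden p hp z.1 (hνs (subset_tsupport _ e)) _ t0
    have e1 : (mS q).den p z.2 ≠ 0 := by rw [mS_den]; exact one_ne_zero
    simp only [Mob.ev_comp _ _ _ _ e0, Mob.ev_comp _ _ _ _ e1, mS_ev, mD_ev, mF_ev, mP_ev, DD]
    ring
  refine ⟨U0 ∩ (U1 ∩ (U2 ∩ U3)), o0.inter (o1.inter (o2.inter o3)), ⟨p0', p1', p2', p3'⟩,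
    inter_subset_left.trans s0, ?_, ?_⟩
  · have := ((((c0.mono (t := U0 ∩ (U1 ∩ (U2 ∩ U3))) (fun p hp => hp.1)).sub
      (c1.mono (fun p hp => hp.2.1))).sub (c2.mono (fun p hp => hp.2.2.1))).add
      (c3.mono (fun p hp => hp.2.2.2)))
    refine this.congr fun p hp => ?_
    obtain ⟨m0, m1, m2, m3⟩ := hp
    rw [key p m0]
    exact int4 (i0 p m0) (i1 p m1) (i2 p m2) (i3 p m3)
  · rintro p ⟨m0, m1, m2, m3⟩
    rw [key p m0]
    exact (((i0 p m0).sub (i1 p m1)).sub (i2 p m2)).add (i3 p m3)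


lemma DD_of_lt (R : ℝ × ℝ → ℝ) {v w q : ℝ} (hv : 0 < v) (h : v < w) (hw : w < q) (hq : q < 1)
    (h6 : d6 R v w q = 0) : R (v, q) - R (w, q) = DD R v w q := by
  have e1 : v / q < w / q := (mp_div hv h hw).2.1
  have e2 : (1 - q) / (1 - v) < (1 - q) / (1 - w) := (mp_phi h hw hq).2.1
  have e3 : v * (1 - q) / (q * (1 - v)) < w * (1 - q) / (q * (1 - w)) := (mp_psi hv h hw hq).2.1
  simp only [DD, hatR, h, e1, e2, e3, if_true]
  unfold d6 at h6
  linarith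

lemma DD_anti (R : ℝ × ℝ → ℝ) {v w q : ℝ} (hv : 0 < v) (h : v < w) (hw : w < q) (hq : q < 1) :
    DD R w v q = - DD R v w q := by
  have e1 : v / q < w / q := (mp_div hv h hw).2.1
  have e2 : (1 - q) / (1 - v) < (1 - q) / (1 - w) := (mp_phi h hw hq).2.1
  have e3 : v * (1 - q) / (q * (1 - v)) < w * (1 - q) / (q * (1 - w)) := (mp_psi hv h hw hq).2.1
  simp only [DD, hatR, h, e1, e2, e3, h.not_gt, e1.not_gt, e2.not_gt, e3.not_gt, if_true, if_false]
  ring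

lemma ae_assoc (Q : ℝ × ℝ × ℝ → Prop) (h : ∀ᵐ t, Q t) :
    ∀ᵐ p : ℝ × ℝ, ∀ᵐ s : ℝ, Q (p.1, p.2, s) := by
  have h1 : ∀ᵐ t : (ℝ × ℝ) × ℝ, Q (t.1.1, t.1.2, t.2) :=
    (MeasureTheory.volume_preserving_prodAssoc (α₁ := ℝ) (β₁ := ℝ) (γ₁ := ℝ)).quasiMeasurePreserving.ae h
  rw [Measure.volume_eq_prod] at h1
  exact Measure.ae_ae_of_ae_prod h1

lemma ae_rot (Q : ℝ × ℝ × ℝ → Prop) (h : ∀ᵐ t, Q t) :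
    ∀ᵐ p : ℝ × ℝ, ∀ᵐ s : ℝ, Q (s, p.1, p.2) := by
  have h1 : ∀ᵐ t : (ℝ × ℝ) × ℝ, Q (t.2, t.1.1, t.1.2) := by
    have : Measure.QuasiMeasurePreserving (Prod.swap : (ℝ × ℝ) × ℝ → ℝ × (ℝ × ℝ)) volume volume :=
      (Measure.measurePreserving_swap (μ := (volume : Measure (ℝ × ℝ))) (ν := (volume : Measure ℝ))).quasiMeasurePreserving
    exact this.ae h
  rw [Measure.volume_eq_prod] at h1
  exact Measure.ae_ae_of_ae_prod h1

lemma DD_ae (R : ℝ × ℝ → ℝ) (h6 : ∀ᵐ p ∂(volume.restrict P3), d6 R p.1 p.2.1 p.2.2 = 0) :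
    ∀ᵐ p ∂(volume.restrict P2), ∀ᵐ t : ℝ, t ∈ Ioo (0:ℝ) 1 → 
      R p - R (t * p.2, p.2) = DD R p.1 (t * p.2) p.2 := by
  rw [ae_restrict_iff' meas_P3] at h6
  set U1 : Set (ℝ × ℝ × ℝ) := {t | (t.1, t.2.2 * t.2.1, t.2.1) ∈ P3} with hU1
  set U2 : Set (ℝ × ℝ × ℝ) := {t | (t.2.2 * t.2.1, t.1, t.2.1) ∈ P3} with hU2
  have m1 : MeasurableSet U1 := meas_P3.preimage (by fun_prop)
  have m2 : MeasurableSet U2 := meas_P3.preimage (by fun_prop)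
  have a1 := ae_pull_same volume (fun t : ℝ × ℝ × ℝ => (t.1, t.2.2 * t.2.1, t.2.1))
    (fun t => (t.1, t.2.2, t.2.1 / t.2.2)) U1 P3 m1
    (fun p hp => DifferentiableAt.differentiableWithinAt (by
      have : p.2.2 ≠ 0 := by linarith [hp.1, hp.2.1, hp.2.2.1]
      fun_prop (disch := assumption)))
    (fun p hp => hp) (fun p hp => by
      have : p.2.1 ≠ 0 := by
        have h1 : 0 < p.1 := hp.1
        have h2 : p.1 < p.2.2 * p.2.1 := hp.2.1
        have h3 : p.2.2 * p.2.1 < p.2.1 := hp.2.2.1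
        linarith
      ext <;> simp [this]) (fun p => d6 R p.1 p.2.1 p.2.2 = 0) h6
  have a2 := ae_pull_same volume (fun t : ℝ × ℝ × ℝ => (t.2.2 * t.2.1, t.1, t.2.1))
    (fun t => (t.2.1, t.2.2, t.1 / t.2.2)) U2 P3 m2
    (fun p hp => DifferentiableAt.differentiableWithinAt (by
      have : p.2.2 ≠ 0 := by linarith [hp.1, hp.2.1, hp.2.2.1]
      fun_prop (disch := assumption)))
    (fun p hp => hp) (fun p hp => by
      have : p.2.1 ≠ 0 := by
        have h1 : 0 < p.2.2 * p.2.1 := hp.1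
        have h2 : p.2.2 * p.2.1 < p.1 := hp.2.1
        have h3 : p.1 < p.2.1 := hp.2.2.1
        linarith
      ext <;> simp [this]) (fun p => d6 R p.1 p.2.1 p.2.2 = 0) h6
  rw [ae_restrict_iff' m1] at a1
  rw [ae_restrict_iff' m2] at a2
  rw [ae_restrict_iff' meas_P2]
  filter_upwards [ae_assoc _ a1, ae_assoc _ a2] with p b1 b2 hp
  have hne : ∀ᵐ t : ℝ, t ≠ p.1 / p.2 := by
    simp [ae_iff, measure_singleton]
  filter_upwards [b1, b2, hne] with t c1 c2 c3 ht
  obtain ⟨x, y⟩ := p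
  obtain ⟨p1, p2, p3⟩ := hp
  simp only at p1 p2 p3 c1 c2 c3 ⊢
  have hy : 0 < y := p1.trans p2
  have ht1 : t * y < y := by nlinarith [ht.2]
  have ht0 : 0 < t * y := mul_pos ht.1 hy
  rcases lt_trichotomy x (t * y) with h | h | h
  · exact DD_of_lt R p1 h ht1 p3 (c1 ⟨p1, h, ht1, p3⟩)
  · exact absurd (by rw [h]; field_simp) c3
  · rw [DD_anti R ht0 h p2 p3, ← DD_of_lt R ht0 h p2 p3 (c2 ⟨ht0, h, p2, p3⟩)]
    ring

noncomputable def c2 (μ : ℝ → ℝ) (R : ℝ × ℝ → ℝ) (q : ℝ) : ℝ := ∫ t, μ t * R (t * q, q)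

noncomputable def Sp (μ : ℝ → ℝ) (R : ℝ × ℝ → ℝ) (v q : ℝ) : ℝ := ∫ t, μ t * DD R v (t * q) q

lemma c2_meas (μ : ℝ → ℝ) (hμ : Continuous μ) (R : ℝ × ℝ → ℝ) (hR : Measurable R) : Measurable (c2 μ R) := by
  have : StronglyMeasurable (fun z : ℝ × ℝ => μ z.2 * R (z.2 * z.1, z.1)) := by
    apply Measurable.stronglyMeasurable
    have := hμ.measurable
    fun_prop
  exact this.integral_prod_right'.measurable

lemma Sp_ae (μ : ℝ → ℝ) (hμ : ContDiff ℝ ∞ μ) (hμs : tsupport μ ⊆ Kt) (hμ1 : ∫ t, μ t = 1)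
    (R : ℝ × ℝ → ℝ) (hR : Measurable R) (hl : LB R)
    (h6 : ∀ᵐ p ∂(volume.restrict P3), d6 R p.1 p.2.1 p.2.2 = 0) :
    ∀ᵐ p ∂(volume.restrict P2), R p - c2 μ R p.2 = Sp μ R p.1 p.2 := by
  have hμc : HasCompactSupport μ := isCompact_Icc.of_isClosed_subset (isClosed_tsupport _) hμs
  have hint := hμ.continuous.integrable_of_hasCompactSupport hμc (μ := volume)
  filter_upwards [DD_ae R h6, ae_P2 (Q := fun p => p ∈ P2) (fun p hp => hp)] with p h hp
  have e : ∫ t, μ t * DD R p.1 (t * p.2) p.2 = ∫ t, (μ t * R p - μ t * R (t * p.2, p.2)) := by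
    apply integral_congr_ae
    filter_upwards [h] with t ht
    by_cases h0 : μ t = 0
    · simp [h0]
    have := hμs (subset_tsupport _ h0)
    rw [← ht ⟨by linarith [this.1], by linarith [this.2]⟩]; ring
  have hq : 0 < p.2 := hp.1.trans hp.2.1
  obtain ⟨B, hB⟩ := hl ((fun t => (t * p.2, p.2)) '' Kt) (isCompact_Icc.image (by fun_prop)) (by
    rintro _ ⟨t, ht, rfl⟩
    have h1 := ht.1; have h2 := ht.2
    exact ⟨by simp only; positivity, by simp only; nlinarith, hp.2.2⟩)
  have hi2 : Integrable (fun t => μ t * R (t * p.2, p.2)) := by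
    refine (hint.norm.mul_const B).mono ?_ ?_
    · have := hμ.continuous.measurable
      exact Measurable.aestronglyMeasurable (by fun_prop)
    · refine Filter.Eventually.of_forall fun t => ?_
      by_cases h0 : μ t = 0
      · simp [h0]
      have := hB _ ⟨t, hμs (subset_tsupport _ h0), rfl⟩
      simp only [norm_mul, Real.norm_eq_abs, abs_abs]
      exact mul_le_mul_of_nonneg_left (this.trans (le_abs_self _)) (abs_nonneg _)
  rw [Sp, e, integral_sub (hint.mul_const _) hi2, integral_mul_const, hμ1, one_mul]
  rfl

lemma R2_ae (μ : ℝ → ℝ) (hμ : ContDiff ℝ ∞ μ) (hμs : tsupport μ ⊆ Kt) (hμ1 : ∫ t, μ t = 1)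
    (R : ℝ × ℝ → ℝ) (hR : Measurable R) (hl : LB R)
    (h6 : ∀ᵐ p ∂(volume.restrict P3), d6 R p.1 p.2.1 p.2.2 = 0) :
    ∀ᵐ p ∂(volume.restrict P3), R (p.2.1, p.2.2) + d5 (c2 μ R) (p.2.1, p.2.2) =
      - Sp μ R p.1 p.2.1 + Sp μ R p.1 p.2.2 + Sp μ R (p.1 / p.2.2) (p.2.1 / p.2.2)
      + Sp μ R ((1 - p.2.2) / (1 - p.1)) ((1 - p.2.2) / (1 - p.2.1))
      - Sp μ R (p.1 * (1 - p.2.2) / (p.2.2 * (1 - p.1))) (p.2.1 * (1 - p.2.2) / (p.2.2 * (1 - p.2.1))) := by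
  have h := Sp_ae μ hμ hμs hμ1 R hR hl h6
  filter_upwards [h6, pl_12 _ h, pl_13 _ h, pl_div _ h, pl_phi _ h, pl_psi _ h] with p h0 h1 h2 h3 h4 h5
  rw [← h1, ← h2, ← h3, ← h4, ← h5]
  unfold d6 at h0
  unfold d5
  linarith

lemma choice_v (x y : ℝ) (hx : 0 < x) (hy : x < y) (h1 : y < 1) : ∃ v, 0 < v ∧ v < x ∧
    v / x ∉ Kt ∧ v / y ∉ Kt ∧ (1 - x) / (1 - v) ∉ Kt ∧ v * (1 - x) / (x * (1 - v)) ∉ Kt := by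
  have hKo : IsOpen Ktᶜ := isClosed_Icc.isOpen_compl
  have k0 : (0:ℝ) ∈ Ktᶜ := fun h => by have := h.1; norm_num at this
  have k1 : (1:ℝ) ∈ Ktᶜ := fun h => by have := h.2; norm_num at this
  have ev : ∀ (f : ℝ → ℝ) (a : ℝ), ContinuousAt f a → f a ∈ Ktᶜ → ∀ᶠ v in nhds a, f v ∉ Kt :=
    fun f a hf ha => hf.eventually (hKo.mem_nhds ha)
  by_cases c1 : 1 - x ∈ Kt
  · by_cases c3 : x / y ∈ Kt
    · have a1 : (49/100:ℝ) ≤ 1 - x := c1.1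
      have a2 : 1 - x ≤ (51/100:ℝ) := c1.2
      have b1 : (49/100:ℝ) ≤ x / y := c3.1
      have b2 : x / y ≤ (51/100:ℝ) := c3.2
      refine ⟨3/4 * x, by positivity, by linarith, ?_, ?_, ?_, ?_⟩
      · intro h
        have := h.2
        rw [mul_div_assoc, div_self hx.ne'] at this
        norm_num at this
      · intro h
        have := h.1
        rw [mul_div_assoc] at this
        linarith
      · intro h
        have := h.2
        rw [div_le_iff₀ (by linarith)] at this
        linarith
      · intro h
        have := h.2
        rw [div_le_iff₀ (by nlinarith)] at this
        nlinarith
    · have hx0 : x ≠ 0 := hx.ne'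
      have hx1 : 1 - x ≠ 0 := by linarith
      have hxx : x * (1 - x) ≠ 0 := mul_ne_zero hx0 hx1
      have hy0 : y ≠ 0 := by linarith
      have e1 := ev (fun v => v / x) x (by fun_prop (disch := assumption)) (by simpa [hx0] using k1)
      have e2 := ev (fun v => v / y) x (by fun_prop (disch := assumption)) c3
      have e3 := ev (fun v => (1 - x) / (1 - v)) x (by fun_prop (disch := assumption)) (by simpa [hx1] using k1)
      have e4 := ev (fun v => v * (1 - x) / (x * (1 - v))) x (by fun_prop (disch := assumption))
        (by rw [div_self hxx]; exact k1)
      have e5 : ∀ᶠ v in nhds x, 0 < v := lt_mem_nhds hx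
      have e6 : ∀ᶠ v in nhdsWithin x (Iio x), v < x := self_mem_nhdsWithin
      obtain ⟨v, hv⟩ := (((e1.and (e2.and (e3.and (e4.and e5)))).filter_mono nhdsWithin_le_nhds).and e6).exists
      exact ⟨v, hv.1.2.2.2.2, hv.2, hv.1.1, hv.1.2.1, hv.1.2.2.1, hv.1.2.2.2.1⟩
  · have hx0 : x ≠ 0 := hx.ne'
    have hy0 : y ≠ 0 := by linarith
    have hh : (1 - (0:ℝ)) ≠ 0 := by norm_num
    have hh2 : x * (1 - (0:ℝ)) ≠ 0 := by simpa
    have e1 := ev (fun v => v / x) 0 (by fun_prop (disch := assumption)) (by simpa [hx0] using k0)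
    have e2 := ev (fun v => v / y) 0 (by fun_prop (disch := assumption)) (by simpa using k0)
    have e3 := ev (fun v => (1 - x) / (1 - v)) 0 (by fun_prop (disch := assumption)) (by simpa using c1)
    have e4 := ev (fun v => v * (1 - x) / (x * (1 - v))) 0 (by fun_prop (disch := assumption))
      (by simpa using k0)
    have e5 : ∀ᶠ v in nhds 0, v < x := gt_mem_nhds hx
    have e6 : ∀ᶠ v in nhdsWithin (0:ℝ) (Ioi 0), 0 < v := self_mem_nhdsWithin
    obtain ⟨v, hv⟩ := (((e1.and (e2.and (e3.and (e4.and e5)))).filter_mono nhdsWithin_le_nhds).and e6).exists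
    exact ⟨v, hv.2, hv.1.2.2.2.2, hv.1.1, hv.1.2.1, hv.1.2.2.1, hv.1.2.2.2.1⟩

/-- a whole interval of admissible `v` -/
lemma choice_ball (x y : ℝ) (hx : 0 < x) (hy : x < y) (h1 : y < 1) : ∃ v0 δ, 0 < δ ∧
    ∀ v ∈ Metric.closedBall v0 δ, 0 < v ∧ v < x ∧
    v / x ∉ Kt ∧ v / y ∉ Kt ∧ (1 - x) / (1 - v) ∉ Kt ∧ v * (1 - x) / (x * (1 - v)) ∉ Kt := by
  obtain ⟨v0, a0, a1, a2, a3, a4, a5⟩ := choice_v x y hx hy h1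
  have hKo : IsOpen Ktᶜ := isClosed_Icc.isOpen_compl
  have ev : ∀ (f : ℝ → ℝ) (a : ℝ), ContinuousAt f a → f a ∈ Ktᶜ → ∀ᶠ v in nhds a, f v ∉ Kt :=
    fun f a hf ha => hf.eventually (hKo.mem_nhds ha)
  have hx0 : x ≠ 0 := hx.ne'
  have hy0 : y ≠ 0 := by linarith
  have hx1 : 1 - v0 ≠ 0 := by linarith
  have hxx : x * (1 - v0) ≠ 0 := mul_ne_zero hx0 hx1
  have e1 := ev (fun v => v / x) v0 (by fun_prop (disch := assumption)) a2
  have e2 := ev (fun v => v / y) v0 (by fun_prop (disch := assumption)) a3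
  have e3 := ev (fun v => (1 - x) / (1 - v)) v0 (by fun_prop (disch := assumption)) a4
  have e4 := ev (fun v => v * (1 - x) / (x * (1 - v))) v0 (by fun_prop (disch := assumption)) a5
  have e5 : ∀ᶠ v in nhds v0, v < x := gt_mem_nhds a1
  have e6 : ∀ᶠ v in nhds v0, 0 < v := lt_mem_nhds a0
  obtain ⟨δ, hδ, h⟩ := Metric.nhds_basis_closedBall.mem_iff.1
    (e6.and (e5.and (e1.and (e2.and (e3.and e4)))))
  exact ⟨v0, δ, hδ, fun v hv => h hv⟩


lemma prodint (ν μ : ℝ → ℝ) (g : ℝ → ℝ → ℝ)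
    (h : Integrable (fun z : ℝ × ℝ => ν z.1 * μ z.2 * g z.1 z.2)) :
    Integrable (fun v => ν v * ∫ t, μ t * g v t) ∧
    ∫ z : ℝ × ℝ, ν z.1 * μ z.2 * g z.1 z.2 = ∫ v, ν v * ∫ t, μ t * g v t := by
  rw [Measure.volume_eq_prod] at h ⊢
  have h1 := h.integral_prod_left
  rw [integral_prod _ h]
  simp only [mul_assoc, integral_const_mul] at h1 ⊢
  exact ⟨h1, trivial⟩

def mI : Mob := ⟨fun _ => 1, fun _ => 0, fun _ => 0, fun _ => 1⟩
lemma mI_good : mI.Good := ⟨contDiffOn_const, contDiffOn_const, contDiffOn_const, contDiffOn_const,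
  fun p hp => by simp [mI, Mob.det]⟩
lemma mI_ev (p : ℝ × ℝ) (t : ℝ) : mI.ev p t = t := by simp [mI, Mob.ev]
lemma mI_den (p : ℝ × ℝ) (t : ℝ) : mI.den p t = 1 := by simp [mI, Mob.den]

lemma int5 {f1 f2 f3 f4 f5 : ℝ → ℝ} (h1 : Integrable f1) (h2 : Integrable f2)
    (h3 : Integrable f3) (h4 : Integrable f4) (h5 : Integrable f5) :
    ∫ z, (-f1 z + f2 z + f3 z + f4 z - f5 z) =
      -(∫ z, f1 z) + (∫ z, f2 z) + (∫ z, f3 z) + (∫ z, f4 z) - (∫ z, f5 z) := by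
  rw [integral_sub (f := fun z => -f1 z + f2 z + f3 z + f4 z) (((h1.neg.add h2).add h3).add h4) h5,
    integral_add (f := fun z => -f1 z + f2 z + f3 z) ((h1.neg.add h2).add h3) h4,
    integral_add (f := fun z => -f1 z + f2 z) (h1.neg.add h2) h3,
    integral_add (f := fun z => -f1 z) h1.neg h2, integral_neg]

lemma local_smooth (μ : ℝ → ℝ) (hμ : ContDiff ℝ ∞ μ) (hμs : tsupport μ ⊆ Kt) (hμ1 : ∫ t, μ t = 1)
    (R : ℝ × ℝ → ℝ) (hR : Measurable R) (hl : LB R)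
    (h6 : ∀ᵐ p ∂(volume.restrict P3), d6 R p.1 p.2.1 p.2.2 = 0) (p0 : ℝ × ℝ) (hp0 : p0 ∈ P2) :
    ∃ U, IsOpen U ∧ p0 ∈ U ∧ U ⊆ P2 ∧ ∃ H : ℝ × ℝ → ℝ, ContDiffOn ℝ ∞ H U ∧
      ∀ᵐ p ∂(volume.restrict U), R p + d5 (c2 μ R) p = H p := by
  obtain ⟨v0, δ, hδ, hv⟩ := choice_ball p0.1 p0.2 hp0.1 hp0.2.1 hp0.2.2
  set Kv := Metric.closedBall v0 δ with hKv
  have hKvc : IsCompact Kv := isCompact_closedBall _ _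
  let χ : ContDiffBump v0 := ⟨δ / 2, δ, by positivity, by linarith⟩
  set ν : ℝ → ℝ := χ.normed volume with hνd
  have hν : ContDiff ℝ ∞ ν := χ.contDiff_normed
  have hνs : tsupport ν ⊆ Kv := by rw [hνd, χ.tsupport_normed_eq]
  have hν1 : ∫ v, ν v = 1 := χ.integral_normed
  have cfst : ContDiffOn ℝ ∞ (fun p : ℝ × ℝ => p.1) P2 := contDiffOn_fst
  have csnd : ContDiffOn ℝ ∞ (fun p : ℝ × ℝ => p.2) P2 := contDiffOn_snd
  have rsnd : ∀ p ∈ P2, 0 < (fun p : ℝ × ℝ => p.2) p ∧ (fun p : ℝ × ℝ => p.2) p < 1 :=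
    fun p hp => ⟨hp.1.trans hp.2.1, hp.2.2⟩
  obtain ⟨x1, x2, x3⟩ := hp0
  have y0 : 0 < p0.2 := x1.trans x2
  obtain ⟨U1, o1, m1, s1, k1, i1⟩ := lemH mI mI_good (q := fun p => p.1) cfst
    (fun p hp => ⟨hp.1, hp.2.1.trans hp.2.2⟩) R hR hl p0 ⟨x1, x2, x3⟩ Kv hKvc
    (fun v h => by
      obtain ⟨b1, b2, b3, b4, b5, b6⟩ := hv v h
      rw [mI_den, mI_ev]; exact ⟨one_ne_zero, b1, b2, b3⟩) ν μ hν hνs hμ hμs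
  obtain ⟨U2, o2, m2, s2, k2, i2⟩ := lemH mI mI_good (q := fun p => p.2) csnd
    rsnd R hR hl p0 ⟨x1, x2, x3⟩ Kv hKvc
    (fun v h => by
      obtain ⟨b1, b2, b3, b4, b5, b6⟩ := hv v h
      rw [mI_den, mI_ev]; exact ⟨one_ne_zero, b1, b2.trans x2, b4⟩) ν μ hν hνs hμ hμs
  obtain ⟨U3, o3, m3, s3, k3, i3⟩ := lemH (mD fun p => p.2) (mD_good csnd rsnd) (q := fun p => p.1 / p.2)
    (cfst.div csnd (fun p hp => (rsnd p hp).1.ne'))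
    (fun p hp => ⟨div_pos hp.1 (rsnd p hp).1, (div_lt_one (rsnd p hp).1).2 hp.2.1⟩)
    R hR hl p0 ⟨x1, x2, x3⟩ Kv hKvc
    (fun v h => by
      obtain ⟨b1, b2, b3, b4, b5, b6⟩ := hv v h
      rw [mD_ev]
      have := mp_div b1 b2 x2
      refine ⟨by simp [mD, Mob.den]; exact y0.ne', this.1, this.2.1, ?_⟩
      rw [div_div_div_cancel_right₀ y0.ne']; exact b3) ν μ hν hνs hμ hμs
  obtain ⟨U4, o4, m4, s4, k4, i4⟩ := lemH (mF fun p => p.2) (mF_good csnd rsnd)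
    (q := fun p => (1 - p.2) / (1 - p.1))
    ((contDiffOn_const.sub csnd).div (contDiffOn_const.sub cfst) (fun p hp => by
      have := hp.2.1.trans hp.2.2; linarith))
    (fun p hp => by
      have e1 : 0 < 1 - p.1 := by have := hp.2.1.trans hp.2.2; linarith
      exact ⟨div_pos (by linarith [hp.2.2]) e1, (div_lt_one e1).2 (by linarith [hp.2.1])⟩)
    R hR hl p0 ⟨x1, x2, x3⟩ Kv hKvc
    (fun v h => by
      obtain ⟨b1, b2, b3, b4, b5, b6⟩ := hv v h
      rw [mF_ev]
      have := mp_phi b2 x2 x3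
      refine ⟨by simp [mF, Mob.den]; linarith, this.1, this.2.1, ?_⟩
      have e1 : 1 - p0.1 ≠ 0 := by linarith
      have e2 : 1 - p0.2 ≠ 0 := by linarith
      have e3 : 1 - v ≠ 0 := by linarith
      have : (1 - p0.2) / (1 - v) / ((1 - p0.2) / (1 - p0.1)) = (1 - p0.1) / (1 - v) := by
        field_simp
      rw [this]; exact b5) ν μ hν hνs hμ hμs
  obtain ⟨U5, o5, m5, s5, k5, i5⟩ := lemH (mP fun p => p.2) (mP_good csnd rsnd)
    (q := fun p => p.1 * (1 - p.2) / (p.2 * (1 - p.1)))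
    ((cfst.mul (contDiffOn_const.sub csnd)).div (csnd.mul (contDiffOn_const.sub cfst)) (fun p hp => by
      have := hp.2.1.trans hp.2.2
      exact mul_ne_zero (rsnd p hp).1.ne' (by linarith)))
    (fun p hp => by
      have := p2_psi hp
      exact this)
    R hR hl p0 ⟨x1, x2, x3⟩ Kv hKvc
    (fun v h => by
      obtain ⟨b1, b2, b3, b4, b5, b6⟩ := hv v h
      rw [mP_ev]
      have := mp_psi b1 b2 x2 x3
      refine ⟨by simp [mP, Mob.den]; nlinarith, this.1, this.2.1, ?_⟩
      have e1 : 1 - p0.1 ≠ 0 := by linarith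
      have e2 : 1 - p0.2 ≠ 0 := by linarith
      have e3 : 1 - v ≠ 0 := by linarith
      have e4 : p0.1 ≠ 0 := by linarith
      have e5 : p0.2 ≠ 0 := by linarith
      have : v * (1 - p0.2) / (p0.2 * (1 - v)) / (p0.1 * (1 - p0.2) / (p0.2 * (1 - p0.1))) =
          v * (1 - p0.1) / (p0.1 * (1 - v)) := by
        field_simp
      rw [this]; exact b6) ν μ hν hνs hμ hμs
  set U6 : Set (ℝ × ℝ) := {p | v0 + δ < p.1} with hU6
  have o6 : IsOpen U6 := isOpen_lt (by fun_prop) (by fun_prop)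
  have m6 : p0 ∈ U6 := by
    have : v0 + δ ∈ Kv := by rw [hKv, Metric.mem_closedBall, Real.dist_eq]; simp [abs_of_pos hδ]
    exact (hv _ this).2.1
  set U := U6 ∩ (U1 ∩ (U2 ∩ (U3 ∩ (U4 ∩ U5)))) with hU
  have hUo : IsOpen U := o6.inter (o1.inter (o2.inter (o3.inter (o4.inter o5))))
  refine ⟨U, hUo, ⟨m6, m1, m2, m3, m4, m5⟩, fun p hp => s1 hp.2.1, _,
    (((((k1.mono (t := U) (fun p hp => hp.2.1)).neg.add (k2.mono (fun p hp => hp.2.2.1))).add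
      (k3.mono (fun p hp => hp.2.2.2.1))).add (k4.mono (fun p hp => hp.2.2.2.2.1))).sub
      (k5.mono (fun p hp => hp.2.2.2.2.2))), ?_⟩
  have hae := R2_ae μ hμ hμs hμ1 R hR hl h6
  rw [ae_restrict_iff' meas_P3] at hae
  rw [ae_restrict_iff' hUo.measurableSet]
  filter_upwards [ae_rot _ hae] with p hp hpU
  obtain ⟨n6, n1, n2, n3, n4, n5⟩ := hpU
  obtain ⟨j1, q1⟩ := prodint ν μ (fun v t => DD R (mI.ev p v) (t * p.1) p.1) (i1 p n1)
  obtain ⟨j2, q2⟩ := prodint ν μ (fun v t => DD R (mI.ev p v) (t * p.2) p.2) (i2 p n2)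
  obtain ⟨j3, q3⟩ := prodint ν μ (fun v t => DD R ((mD fun p => p.2).ev p v) (t * (p.1 / p.2)) (p.1 / p.2)) (i3 p n3)
  obtain ⟨j4, q4⟩ := prodint ν μ (fun v t => DD R ((mF fun p => p.2).ev p v) (t * ((1 - p.2) / (1 - p.1))) ((1 - p.2) / (1 - p.1))) (i4 p n4)
  obtain ⟨j5, q5⟩ := prodint ν μ (fun v t => DD R ((mP fun p => p.2).ev p v) (t * (p.1 * (1 - p.2) / (p.2 * (1 - p.1)))) (p.1 * (1 - p.2) / (p.2 * (1 - p.1)))) (i5 p n5)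
  rw [q1, q2, q3, q4, q5, ← int5 j1 j2 j3 j4 j5]
  have : R p + d5 (c2 μ R) p = ∫ v, ν v * (R p + d5 (c2 μ R) p) := by
    rw [integral_mul_const, hν1, one_mul]
  rw [this]
  apply integral_congr_ae
  filter_upwards [hp] with v hvp
  by_cases h0 : ν v = 0
  · simp [h0]
  have hvK := hνs (subset_tsupport _ h0)
  have hv' := hv v hvK
  have hvx : v < p.1 := by
    have h1 : v ≤ v0 + δ := by
      rw [hKv, Metric.mem_closedBall, Real.dist_eq] at hvK
      linarith [(abs_le.1 hvK).2]
    exact lt_of_le_of_lt h1 n6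
  have hpP := s1 n1
  have := hvp ⟨hv'.1, hvx, hpP.2.1, hpP.2.2⟩
  simp only [Prod.mk.eta] at this
  rw [this]
  simp only [mI_ev, mD_ev, mF_ev, mP_ev, Sp]
  ring

lemma patch (f : ℝ × ℝ → ℝ) (h : ∀ p0 ∈ P2, ∃ U, IsOpen U ∧ p0 ∈ U ∧ U ⊆ P2 ∧ ∃ H : ℝ × ℝ → ℝ,
    ContDiffOn ℝ ∞ H U ∧ ∀ᵐ p ∂(volume.restrict U), f p = H p) :
    ∃ S : ℝ × ℝ → ℝ, ContDiffOn ℝ ∞ S P2 ∧ ∀ᵐ p ∂(volume.restrict P2), f p = S p := by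
  choose! U hUo hU hUP H hH hae using h
  have key : ∀ p0 ∈ P2, ∀ p ∈ U p0, H p p = H p0 p := by
    intro p0 h0 p hp
    have hpP := hUP p0 h0 hp
    have hO := (hUo p0 h0).inter (hUo p hpP)
    have : EqOn (H p) (H p0) (U p0 ∩ U p) := by
      refine Measure.eqOn_open_of_ae_eq (μ := volume) ?_ hO ((hH p hpP).continuousOn.mono inter_subset_right)
        ((hH p0 h0).continuousOn.mono inter_subset_left)
      have e1 := ae_restrict_of_ae_restrict_of_subset (inter_subset_left (s := U p0) (t := U p)) (hae p0 h0)
      have e2 := ae_restrict_of_ae_restrict_of_subset (inter_subset_right (s := U p0) (t := U p)) (hae p hpP)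
      filter_upwards [e1, e2] with z z1 z2
      rw [← z1, ← z2]
    exact this ⟨hp, hU p hpP⟩
  refine ⟨fun p => H p p, ?_, ?_⟩
  · intro p0 h0
    apply ContDiffAt.contDiffWithinAt
    refine ((hH p0 h0).contDiffAt ((hUo p0 h0).mem_nhds (hU p0 h0))).congr_of_eventuallyEq ?_
    filter_upwards [(hUo p0 h0).mem_nhds (hU p0 h0)] with p hp
    exact key p0 h0 p hp
  · rw [ae_restrict_iff' meas_P2, ae_iff]
    apply measure_null_of_locally_null
    intro p0 hp0
    have h0 : p0 ∈ P2 := by by_contra hh; exact hp0 (fun h => absurd h hh)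
    refine ⟨U p0 ∩ {p | ¬ (p ∈ P2 → f p = H p p)}, Filter.inter_mem
      (mem_nhdsWithin_of_mem_nhds ((hUo p0 h0).mem_nhds (hU p0 h0))) self_mem_nhdsWithin, ?_⟩
    have e := hae p0 h0
    rw [ae_restrict_iff' (hUo p0 h0).measurableSet, ae_iff] at e
    apply measure_mono_null ?_ e
    rintro p ⟨a, b⟩ c
    exact b (fun _ => by rw [c a, key p0 h0 p a])

lemma thmA_LB (R : ℝ × ℝ → ℝ) (hR : Measurable R) (hl : LB R)
    (h6 : ∀ᵐ p ∂(volume.restrict P3), d6 R p.1 p.2.1 p.2.2 = 0) :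
    ∃ L, AEMeasurable L (volume.restrict (Ioo (0:ℝ) 1)) ∧ ∀ᵐ p ∂(volume.restrict P2), d5 L p = R p := by
  let χ : ContDiffBump (1/2 : ℝ) := ⟨1/200, 1/100, by norm_num, by norm_num⟩
  set μ : ℝ → ℝ := χ.normed volume with hμd
  have hμ : ContDiff ℝ ∞ μ := χ.contDiff_normed
  have hμs : tsupport μ ⊆ Kt := by
    rw [hμd, χ.tsupport_normed_eq, Real.closedBall_eq_Icc, Kt]
    apply Icc_subset_Icc <;> (show _ ≤ _; simp only [χ]; norm_num)
  have hμ1 : ∫ v, μ v = 1 := χ.integral_normed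
  obtain ⟨S, hS, hae⟩ := patch _ (fun p0 hp0 => local_smooth μ hμ hμs hμ1 R hR hl h6 p0 hp0)
  have hS6 : ∀ᵐ p ∂(volume.restrict P3), d6 S p.1 p.2.1 p.2.2 = 0 := by
    filter_upwards [d6_congr_ae hae, d6_d5_ae (c2 μ R), h6] with p h1 h2 h3
    rw [← h1, d6_add, h2, h3, add_zero]
  have hSc := hS.continuousOn
  have hd6c : ContinuousOn (fun p : ℝ × ℝ × ℝ => d6 S p.1 p.2.1 p.2.2) P3 := by
    have gen : ∀ F : ℝ × ℝ × ℝ → ℝ × ℝ, ContinuousOn F P3 → (∀ p ∈ P3, F p ∈ P2) →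
      ContinuousOn (fun p => S (F p)) P3 := fun F h1 h2 => hSc.comp h1 h2
    have n1 : ∀ p ∈ P3, 1 - p.1 ≠ 0 := fun p hp => by
      obtain ⟨a, b, c, d⟩ := hp; linarith
    have n2 : ∀ p ∈ P3, 1 - p.2.1 ≠ 0 := fun p hp => by
      obtain ⟨a, b, c, d⟩ := hp; linarith
    have n3 : ∀ p ∈ P3, p.2.2 ≠ 0 := fun p hp => by
      obtain ⟨a, b, c, d⟩ := hp; linarith
    have g1 := gen (fun p => (p.1, p.2.1)) (by fun_prop) (fun p hp => ⟨hp.1, hp.2.1, hp.2.2.1.trans hp.2.2.2⟩)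
    have g2 := gen (fun p => (p.1, p.2.2)) (by fun_prop) (fun p hp => ⟨hp.1, hp.2.1.trans hp.2.2.1, hp.2.2.2⟩)
    have g3 := gen (fun p => (p.2.1, p.2.2)) (by fun_prop) (fun p hp => ⟨hp.1.trans hp.2.1, hp.2.2.1, hp.2.2.2⟩)
    have g4 := gen (fun p => (p.1 / p.2.2, p.2.1 / p.2.2))
      (by fun_prop (disch := assumption)) (fun p hp => mp_div hp.1 hp.2.1 hp.2.2.1)
    have g5 := gen (fun p => ((1 - p.2.2) / (1 - p.1), (1 - p.2.2) / (1 - p.2.1)))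
      (by fun_prop (disch := assumption)) (fun p hp => mp_phi hp.2.1 hp.2.2.1 hp.2.2.2)
    have g6 := gen (fun p => (p.1 * (1 - p.2.2) / (p.2.2 * (1 - p.1)), p.2.1 * (1 - p.2.2) / (p.2.2 * (1 - p.2.1))))
      (ContinuousOn.prodMk (ContinuousOn.div (by fun_prop) (by fun_prop) (fun p hp => mul_ne_zero (n3 p hp) (n1 p hp)))
        (ContinuousOn.div (by fun_prop) (by fun_prop) (fun p hp => mul_ne_zero (n3 p hp) (n2 p hp))))
      (fun p hp => mp_psi hp.1 hp.2.1 hp.2.2.1 hp.2.2.2)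
    exact ((((g1.sub g2).add g3).sub g4).sub g5).add g6
  have hzero : EqOn (fun p : ℝ × ℝ × ℝ => d6 S p.1 p.2.1 p.2.2) (fun _ => 0) P3 :=
    Measure.eqOn_open_of_ae_eq (μ := volume) hS6 isOpen_P3 hd6c continuousOn_const
  have hf1 : ContDiffOn ℝ ∞ (fderiv ℝ S) P2 := hS.fderiv_of_isOpen isOpen_P2 (by simp)
  set S1 : ℝ × ℝ → ℝ := fun p => fderiv ℝ S p (1, 0) with hS1
  set S2 : ℝ × ℝ → ℝ := fun p => fderiv ℝ S p (0, 1) with hS2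
  have hS2s : ContDiffOn ℝ ∞ S2 P2 := hf1.clm_apply contDiffOn_const
  have hf2 : ContDiffOn ℝ ∞ (fderiv ℝ S2) P2 := hS2s.fderiv_of_isOpen isOpen_P2 (by simp)
  have dx : ∀ (F : ℝ × ℝ → ℝ), ContDiffOn ℝ ∞ F P2 → ∀ x y, (x, y) ∈ P2 →
      HasDerivAt (fun x => F (x, y)) (fderiv ℝ F (x, y) (1, 0)) x := by
    intro F hF x y hp
    have h1 := ((hF.contDiffAt (isOpen_P2.mem_nhds hp)).differentiableAt (by simp)).hasFDerivAt
    have h2 : HasDerivAt (fun x : ℝ => (x, y)) ((1:ℝ), (0:ℝ)) x :=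
      (hasDerivAt_id x).prodMk (hasDerivAt_const x y)
    exact h1.comp_hasDerivAt x h2
  have dy : ∀ (F : ℝ × ℝ → ℝ), ContDiffOn ℝ ∞ F P2 → ∀ x y, (x, y) ∈ P2 →
      HasDerivAt (fun y => F (x, y)) (fderiv ℝ F (x, y) (0, 1)) y := by
    intro F hF x y hp
    have h1 := ((hF.contDiffAt (isOpen_P2.mem_nhds hp)).differentiableAt (by simp)).hasFDerivAt
    have h2 : HasDerivAt (fun y : ℝ => (x, y)) ((0:ℝ), (1:ℝ)) y :=
      (hasDerivAt_const y x).prodMk (hasDerivAt_id y)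
    exact h1.comp_hasDerivAt y h2
  obtain ⟨L, hLc, hL⟩ := smooth_case S S1 S2 (fun p => fderiv ℝ S2 p (1, 0)) hSc
    (dx S hS) (dy S hS) (dx S2 hS2s) (hf2.clm_apply contDiffOn_const).continuousOn
    (fun v x y a b c d => hzero (show (v, x, y) ∈ P3 from ⟨a, b, c, d⟩))
  refine ⟨fun t => L t - c2 μ R t, ?_, ?_⟩
  · exact (hLc.aemeasurable measurableSet_Ioo).sub (c2_meas μ hμ.continuous R hR).aemeasurable
  · filter_upwards [hae, ae_P2 hL] with p h1 h2
    have : d5 (fun t => L t - c2 μ R t) p = d5 L p - d5 (c2 μ R) p := by unfold d5; ring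
    rw [this, h2, ← h1]; ring


lemma Vgen {X : Type*} [MetricSpace X] [MeasurableSpace X] [BorelSpace X] [Nonempty X] (d : ℕ) (f : X → X) (S E : Set X) (B e : ℝ)
    (hB : 0 ≤ B) (h : ∀ x ∈ S, ∀ y ∈ S, dist x y ≤ B * dist (f x) (f y))
    (hE : Measure.hausdorffMeasure (d:ℝ) E ≤ ENNReal.ofReal e) :
    Measure.hausdorffMeasure (d:ℝ) (S ∩ f ⁻¹' E) ≤ ENNReal.ofReal (B ^ d * e) := by
  set k := Function.invFunOn f S with hk
  let b : ℝ≥0 := ⟨B, hB⟩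
  have inj : InjOn f S := fun x hx y hy hxy => by
    have := h x hx y hy
    rw [hxy, dist_self, mul_zero] at this
    exact dist_le_zero.1 this
  have hkf : ∀ x ∈ S, k (f x) = x := fun x hx => inj.leftInvOn_invFunOn hx
  have hl : LipschitzOnWith b k (f '' S) := by
    apply LipschitzOnWith.of_dist_le_mul
    rintro _ ⟨x, hx, rfl⟩ _ ⟨y, hy, rfl⟩
    rw [hkf x hx, hkf y hy]
    exact h x hx y hy
  have hsub : S ∩ f ⁻¹' E ⊆ k '' (f '' S ∩ E) := by
    rintro x ⟨hx, hxE⟩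
    exact ⟨f x, ⟨⟨x, hx, rfl⟩, hxE⟩, hkf x hx⟩
  calc _ ≤ _ := measure_mono hsub
    _ ≤ _ := (hl.mono inter_subset_left).hausdorffMeasure_image_le (Nat.cast_nonneg d)
    _ ≤ (b : ℝ≥0∞) ^ (d:ℝ) * ENNReal.ofReal e := by
      gcongr
      exact (measure_mono inter_subset_right).trans hE
    _ = _ := by
      rw [ENNReal.rpow_natCast, ENNReal.ofReal_mul (by positivity), ENNReal.ofReal_pow hB]
      congr 2
      exact (ENNReal.ofReal_eq_coe_nnreal hB).symm

lemma V1 (f : ℝ → ℝ) (S E : Set ℝ) (B e : ℝ)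
    (hB : 0 ≤ B) (h : ∀ x ∈ S, ∀ y ∈ S, |x - y| ≤ B * |f x - f y|)
    (hE : volume E ≤ ENNReal.ofReal e) :
    volume (S ∩ f ⁻¹' E) ≤ ENNReal.ofReal (B * e) := by
  have := Vgen 1 f S E B e hB h (by simpa [hausdorffMeasure_real] using hE)
  simpa [hausdorffMeasure_real] using this

lemma V2 (f : ℝ → ℝ) (E : Set (ℝ × ℝ)) (B e : ℝ)
    (hB : 0 ≤ B) (h : ∀ x ∈ Ioo (0:ℝ) 1, ∀ y ∈ Ioo (0:ℝ) 1, |x - y| ≤ B * |f x - f y|)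
    (hE : volume E ≤ ENNReal.ofReal e) :
    volume {z : ℝ × ℝ | z.1 ∈ Ioo (0:ℝ) 1 ∧ z.2 ∈ Ioo (0:ℝ) 1 ∧ (f z.1, f z.2) ∈ E} ≤ ENNReal.ofReal (B ^ 2 * e) := by
  have := Vgen 2 (fun z : ℝ × ℝ => (f z.1, f z.2)) (Ioo (0:ℝ) 1 ×ˢ Ioo (0:ℝ) 1) E B e hB (by
    rintro x ⟨hx1, hx2⟩ y ⟨hy1, hy2⟩
    rw [Prod.dist_eq, Prod.dist_eq]
    have h1 := h _ hx1 _ hy1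
    have h2 := h _ hx2 _ hy2
    simp only [Real.dist_eq]
    refine max_le (h1.trans ?_) (h2.trans ?_)
    · gcongr; exact le_max_left _ _
    · gcongr; exact le_max_right _ _) (by simpa [hausdorffMeasure_prod_real] using hE)
  simp only [Nat.cast_ofNat, hausdorffMeasure_prod_real] at this
  refine (measure_mono ?_).trans this
  rintro z ⟨a, b, c⟩
  exact ⟨⟨a, b⟩, c⟩

/-- tail function -/
lemma tail (R : ℝ × ℝ → ℝ) (hR : Measurable R) : ∃ g : ℕ → ℝ, (∀ n, 0 ≤ g n) ∧ Filter.Tendsto g Filter.atTop (nhds 0) ∧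
    ∀ n : ℕ, volume {w : ℝ × ℝ | w.1 ∈ Ioo (0:ℝ) 1 ∧ w.2 ∈ Ioo (0:ℝ) 1 ∧ (n:ℝ) < |hatR R w|} ≤ ENNReal.ofReal (g n) := by
  set T : ℕ → Set (ℝ × ℝ) := fun n => {w : ℝ × ℝ | w.1 ∈ Ioo (0:ℝ) 1 ∧ w.2 ∈ Ioo (0:ℝ) 1 ∧ (n:ℝ) < |hatR R w|} with hT
  have hTs : ∀ n, T n ⊆ Ioo (0:ℝ) 1 ×ˢ Ioo (0:ℝ) 1 := fun n w hw => ⟨hw.1, hw.2.1⟩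
  have hfin : ∀ n, volume (T n) ≠ ⊤ := fun n => by
    refine ne_top_of_le_ne_top ?_ (measure_mono (hTs n))
    rw [Measure.volume_eq_prod, Measure.prod_prod]
    simp
  have hm : ∀ n, MeasurableSet (T n) := fun n => by
    have := hatR_meas hR
    have e : T n = (Ioo (0:ℝ) 1 ×ˢ Ioo (0:ℝ) 1) ∩ {w | (n:ℝ) < |hatR R w|} := by
      ext w; simp only [hT, mem_inter_iff, mem_prod, Set.mem_ofPred_eq]; tauto
    rw [e]
    exact (measurableSet_Ioo.prod measurableSet_Ioo).inter (measurableSet_lt measurable_const (by fun_prop))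
  have ht : Filter.Tendsto (fun n => volume (T n)) Filter.atTop (nhds 0) := by
    have := tendsto_measure_iInter_atTop (μ := volume) (s := T) (fun n => (hm n).nullMeasurableSet)
      (fun m n hmn w hw => ⟨hw.1, hw.2.1, lt_of_le_of_lt (by exact_mod_cast hmn) hw.2.2⟩) ⟨0, hfin 0⟩
    have e : ⋂ n, T n = ∅ := by
      rw [eq_empty_iff_forall_notMem]
      intro w hw
      rw [mem_iInter] at hw
      obtain ⟨n, hn⟩ := exists_nat_gt |hatR R w|
      exact absurd (hw n).2.2 (not_lt.2 hn.le)
    rwa [e, measure_empty] at this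
  refine ⟨fun n => (volume (T n)).toReal, fun n => ENNReal.toReal_nonneg, ?_, fun n => ?_⟩
  · have := (ENNReal.tendsto_toReal ENNReal.zero_ne_top).comp ht
    simpa [Function.comp_def] using this
  · rw [ENNReal.ofReal_toReal (hfin n)]

lemma DD_ae2 (R : ℝ × ℝ → ℝ) (h6 : ∀ᵐ p ∂(volume.restrict P3), d6 R p.1 p.2.1 p.2.2 = 0) :
    ∀ᵐ q : ℝ, q ∈ Ioo (0:ℝ) 1 → ∀ᵐ z : ℝ × ℝ, z.1 ∈ Ioo (0:ℝ) 1 → z.2 ∈ Ioo (0:ℝ) 1 →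
      R (z.1 * q, q) - R (z.2 * q, q) = DD R (z.1 * q) (z.2 * q) q ∨ z.1 = z.2 := by
  rw [ae_restrict_iff' meas_P3] at h6
  set U1 : Set (ℝ × ℝ × ℝ) := {t | (t.2.1 * t.1, t.2.2 * t.1, t.1) ∈ P3} with hU1
  set U2 : Set (ℝ × ℝ × ℝ) := {t | (t.2.2 * t.1, t.2.1 * t.1, t.1) ∈ P3} with hU2
  have m1 : MeasurableSet U1 := meas_P3.preimage (by fun_prop)
  have m2 : MeasurableSet U2 := meas_P3.preimage (by fun_prop)
  have a1 := ae_pull_same volume (fun t : ℝ × ℝ × ℝ => (t.2.1 * t.1, t.2.2 * t.1, t.1))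
    (fun t => (t.2.2, t.1 / t.2.2, t.2.1 / t.2.2)) U1 P3 m1
    (fun p hp => DifferentiableAt.differentiableWithinAt (by
      have : p.2.2 ≠ 0 := by linarith [hp.1, hp.2.1, hp.2.2.1]
      fun_prop (disch := assumption)))
    (fun p hp => hp) (fun p hp => by
      have : p.1 ≠ 0 := by
        have h1 : 0 < p.2.1 * p.1 := hp.1
        intro h; rw [h] at h1; simp at h1
      ext <;> simp [this]) (fun p => d6 R p.1 p.2.1 p.2.2 = 0) h6
  have a2 := ae_pull_same volume (fun t : ℝ × ℝ × ℝ => (t.2.2 * t.1, t.2.1 * t.1, t.1))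
    (fun t => (t.2.2, t.2.1 / t.2.2, t.1 / t.2.2)) U2 P3 m2
    (fun p hp => DifferentiableAt.differentiableWithinAt (by
      have : p.2.2 ≠ 0 := by linarith [hp.1, hp.2.1, hp.2.2.1]
      fun_prop (disch := assumption)))
    (fun p hp => hp) (fun p hp => by
      have : p.1 ≠ 0 := by
        have h1 : 0 < p.2.2 * p.1 := hp.1
        intro h; rw [h] at h1; simp at h1
      ext <;> simp [this]) (fun p => d6 R p.1 p.2.1 p.2.2 = 0) h6
  rw [ae_restrict_iff' m1] at a1
  rw [ae_restrict_iff' m2] at a2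
  rw [Measure.volume_eq_prod] at a1 a2
  filter_upwards [Measure.ae_ae_of_ae_prod a1, Measure.ae_ae_of_ae_prod a2] with q b1 b2 hq
  filter_upwards [b1, b2] with z c1 c2 hz1 hz2
  have z1 : 0 < z.1 * q := mul_pos hz1.1 hq.1
  have z2 : 0 < z.2 * q := mul_pos hz2.1 hq.1
  have z3 : z.1 * q < q := by nlinarith [hz1.2, hq.1]
  have z4 : z.2 * q < q := by nlinarith [hz2.2, hq.1]
  rcases lt_trichotomy z.1 z.2 with h | h | h
  · left
    have h' : z.1 * q < z.2 * q := mul_lt_mul_of_pos_right h hq.1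
    exact DD_of_lt R z1 h' z4 hq.2 (c1 ⟨z1, h', z4, hq.2⟩)
  · right; exact h
  · left
    have h' : z.2 * q < z.1 * q := mul_lt_mul_of_pos_right h hq.1
    rw [DD_anti R z2 h' z3 hq.2, ← DD_of_lt R z2 h' z3 hq.2 (c2 ⟨z2, h', z3, hq.2⟩)]
    ring


lemma median (R : ℝ × ℝ → ℝ) (hR : Measurable R) : ∃ c : ℝ → ℝ, Measurable c ∧ ∀ q,
    (1/2 : ℝ≥0∞) ≤ volume {t : ℝ | t ∈ Ioo (0:ℝ) 1 ∧ R (t * q, q) ≤ c q} ∧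
    (1/2 : ℝ≥0∞) ≤ volume {t : ℝ | t ∈ Ioo (0:ℝ) 1 ∧ c q - 1 ≤ R (t * q, q)} := by
  set F : ℝ → ℤ → ℝ≥0∞ := fun q m => volume {t : ℝ | t ∈ Ioo (0:ℝ) 1 ∧ R (t * q, q) ≤ m} with hF
  have hFm : ∀ m, Measurable (fun q => F q m) := fun m => by
    have : MeasurableSet {z : ℝ × ℝ | z.2 ∈ Ioo (0:ℝ) 1 ∧ R (z.2 * z.1, z.1) ≤ m} :=
      (measurableSet_Ioo.preimage measurable_snd).inter
        (measurableSet_le (f := fun z : ℝ × ℝ => R (z.2 * z.1, z.1)) (by fun_prop) measurable_const)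
    exact measurable_measure_prodMk_left this
  have hms : ∀ q (m : ℝ), MeasurableSet {t : ℝ | t ∈ Ioo (0:ℝ) 1 ∧ R (t * q, q) ≤ m} := fun q m =>
    measurableSet_Ioo.inter (measurableSet_le (f := fun t : ℝ => R (t * q, q)) (by fun_prop) measurable_const)
  have hmono : ∀ q, Monotone (F q) := fun q m n hmn => measure_mono fun t ht =>
    ⟨ht.1, ht.2.trans (by exact_mod_cast hmn)⟩
  have hex : ∀ q, ∃ m : ℤ, 1/2 ≤ F q m ∧ F q (m - 1) < 1/2 := by
    intro q
    have h1 : ∃ m : ℤ, 1/2 ≤ F q m := by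
      have := tendsto_measure_iUnion_atTop (μ := volume) (s := fun n : ℕ => {t : ℝ | t ∈ Ioo (0:ℝ) 1 ∧ R (t * q, q) ≤ n})
        (fun m n hmn t ht => ⟨ht.1, ht.2.trans (by exact_mod_cast hmn)⟩)
      have e : ⋃ n : ℕ, {t : ℝ | t ∈ Ioo (0:ℝ) 1 ∧ R (t * q, q) ≤ n} = Ioo 0 1 := by
        ext t
        simp only [mem_iUnion, Set.mem_ofPred_eq]
        refine ⟨fun ⟨n, h, _⟩ => h, fun h => ?_⟩
        obtain ⟨n, hn⟩ := exists_nat_ge (R (t * q, q))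
        exact ⟨n, h, hn⟩
      rw [e, Real.volume_Ioo, sub_zero, ENNReal.ofReal_one] at this
      obtain ⟨n, hn⟩ := (this.eventually (lt_mem_nhds (show (1/2 : ℝ≥0∞) < 1 by simp))).exists
      exact ⟨n, by simpa [hF] using hn.le⟩
    have h2 : ∃ m : ℤ, F q m < 1/2 := by
      have := tendsto_measure_iInter_atTop (μ := volume) (s := fun n : ℕ => {t : ℝ | t ∈ Ioo (0:ℝ) 1 ∧ R (t * q, q) ≤ -(n:ℝ)})
        (fun n => (hms q _).nullMeasurableSet)
        (fun m n hmn t ht => ⟨ht.1, ht.2.trans (by have : (m:ℝ) ≤ n := by exact_mod_cast hmn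
                                                   linarith)⟩) ⟨0, by
          refine ne_top_of_le_ne_top ?_ (measure_mono (t := Ioo (0:ℝ) 1) fun t ht => ht.1)
          simp⟩
      have e : ⋂ n : ℕ, {t : ℝ | t ∈ Ioo (0:ℝ) 1 ∧ R (t * q, q) ≤ -(n:ℝ)} = ∅ := by
        rw [eq_empty_iff_forall_notMem]
        intro t ht
        rw [mem_iInter] at ht
        obtain ⟨n, hn⟩ := exists_nat_gt (- R (t * q, q))
        have := (ht n).2
        linarith
      rw [e, measure_empty] at this
      obtain ⟨n, hn⟩ := (this.eventually (gt_mem_nhds (show (0 : ℝ≥0∞) < 1/2 by simp))).exists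
      exact ⟨-n, by simpa [hF] using hn⟩
    obtain ⟨b, hb⟩ := h2
    obtain ⟨m, hm1, hm2⟩ := Int.exists_least_of_bdd (P := fun m => 1/2 ≤ F q m) ⟨b, fun z hz => by
      by_contra hlt
      exact absurd (hz.trans (hmono q (not_le.1 hlt).le)) (not_le.2 hb)⟩ h1
    refine ⟨m, hm1, ?_⟩
    by_contra hh
    have := hm2 _ (not_lt.1 hh)
    omega
  choose c hc1 hc2 using hex
  have hcm : Measurable c := by
    apply measurable_to_countable'
    intro m
    have : c ⁻¹' {m} = {q | 1/2 ≤ F q m} ∩ {q | F q (m - 1) < 1/2} := by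
      ext q
      constructor
      · rintro rfl
        exact ⟨hc1 q, hc2 q⟩
      · rintro ⟨h1, h2⟩
        have k1 : ¬ c q ≤ m - 1 := fun h => absurd ((hc1 q).trans (hmono q h)) (not_le.2 h2)
        have k2 : ¬ m ≤ c q - 1 := fun h => absurd (le_trans h1 (hmono q h)) (not_le.2 (hc2 q))
        show c q = m
        omega
    rw [this]
    exact (measurableSet_le measurable_const (hFm m)).inter (measurableSet_lt (hFm _) measurable_const)
  refine ⟨fun q => (c q : ℝ), (measurable_from_top (f := fun m : ℤ => (m:ℝ))).comp hcm, fun q => ⟨hc1 q, ?_⟩⟩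
  have hu : (1:ℝ≥0∞) ≤ F q (c q - 1) + volume {t : ℝ | t ∈ Ioo (0:ℝ) 1 ∧ (c q : ℝ) - 1 ≤ R (t * q, q)} := by
    refine le_trans ?_ (measure_union_le _ _)
    have : volume (Ioo (0:ℝ) 1) = 1 := by simp
    rw [← this]
    apply measure_mono
    intro t ht
    rcases le_total (R (t * q, q)) ((c q : ℝ) - 1) with h | h
    · left; exact ⟨ht, by push_cast; exact h⟩
    · right; exact ⟨ht, h⟩
  by_contra hh
  have h3 := ENNReal.add_lt_add (hc2 q) (not_le.1 hh)
  rw [ENNReal.add_halves] at h3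
  exact absurd hu (not_le.2 h3)

lemma anti_phi {q t s : ℝ} (hq : q ∈ Ioo (0:ℝ) 1) (ht : t ∈ Ioo (0:ℝ) 1) (hs : s ∈ Ioo (0:ℝ) 1) :
    |t - s| ≤ 1 / (q * (1 - q)) * |(1 - q) / (1 - t * q) - (1 - q) / (1 - s * q)| := by
  obtain ⟨q0, q1⟩ := hq; obtain ⟨t0, t1⟩ := ht; obtain ⟨s0, s1⟩ := hs
  have e1 : 0 < 1 - t * q := by nlinarith
  have e2 : 0 < 1 - s * q := by nlinarith
  have e3 : 0 < 1 - q := by linarith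
  have e1' : 1 - q * t ≠ 0 := by rw [mul_comm]; exact e1.ne'
  have e2' : 1 - q * s ≠ 0 := by rw [mul_comm]; exact e2.ne'
  have : (1 - q) / (1 - t * q) - (1 - q) / (1 - s * q) = (q * (1 - q)) * ((t - s) / ((1 - t * q) * (1 - s * q))) := by
    field_simp; ring
  rw [this, abs_mul, abs_of_pos (mul_pos q0 e3), ← mul_assoc, one_div, inv_mul_cancel₀ (mul_pos q0 e3).ne', one_mul,
    abs_div, abs_of_pos (mul_pos e1 e2), le_div_iff₀ (mul_pos e1 e2)]
  have : (1 - t * q) * (1 - s * q) ≤ 1 := by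
    have := mul_pos t0 q0; have := mul_pos s0 q0
    nlinarith
  nlinarith [abs_nonneg (t - s)]

lemma anti_psi {q t s : ℝ} (hq : q ∈ Ioo (0:ℝ) 1) (ht : t ∈ Ioo (0:ℝ) 1) (hs : s ∈ Ioo (0:ℝ) 1) :
    |t - s| ≤ 1 / (q * (1 - q)) * |t * q * (1 - q) / (q * (1 - t * q)) - s * q * (1 - q) / (q * (1 - s * q))| := by
  obtain ⟨q0, q1⟩ := hq; obtain ⟨t0, t1⟩ := ht; obtain ⟨s0, s1⟩ := hs
  have e1 : 0 < 1 - t * q := by nlinarith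
  have e2 : 0 < 1 - s * q := by nlinarith
  have e3 : 0 < 1 - q := by linarith
  have e1' : 1 - q * t ≠ 0 := by rw [mul_comm]; exact e1.ne'
  have e2' : 1 - q * s ≠ 0 := by rw [mul_comm]; exact e2.ne'
  have : t * q * (1 - q) / (q * (1 - t * q)) - s * q * (1 - q) / (q * (1 - s * q)) = (q * (1 - q)) * ((t - s) / (q * ((1 - t * q) * (1 - s * q)))) := by
    field_simp; ring
  have e4 : 0 < q * ((1 - t * q) * (1 - s * q)) := by positivity
  rw [this, abs_mul, abs_of_pos (mul_pos q0 e3), ← mul_assoc, one_div, inv_mul_cancel₀ (mul_pos q0 e3).ne', one_mul,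
    abs_div, abs_of_pos e4, le_div_iff₀ e4]
  have h1 : (1 - t * q) * (1 - s * q) ≤ 1 := by
    have := mul_pos t0 q0; have := mul_pos s0 q0
    nlinarith
  have h2 : q * ((1 - t * q) * (1 - s * q)) ≤ 1 := by
    have := mul_pos e1 e2
    nlinarith
  nlinarith [abs_nonneg (t - s)]

lemma DD_tight (R : ℝ × ℝ → ℝ) {q : ℝ} (hq : q ∈ Ioo (0:ℝ) 1) (K e : ℝ)
    (hE : volume {w : ℝ × ℝ | w.1 ∈ Ioo (0:ℝ) 1 ∧ w.2 ∈ Ioo (0:ℝ) 1 ∧ K < |hatR R w|} ≤ ENNReal.ofReal e) (he : 0 ≤ e) :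
    volume {z : ℝ × ℝ | z.1 ∈ Ioo (0:ℝ) 1 ∧ z.2 ∈ Ioo (0:ℝ) 1 ∧ 4 * K < |DD R (z.1 * q) (z.2 * q) q|} ≤
      ENNReal.ofReal (4 * (1 / (q * (1 - q))) ^ 2 * e) := by
  have q0 := hq.1
  have q1 : 0 < 1 - q := by linarith [hq.2]
  have qq : 0 < q * (1 - q) := mul_pos q0 q1
  have q2 : q * (1 - q) ≤ q := by nlinarith
  have hB : (0:ℝ) ≤ 1 / (q * (1 - q)) := by positivity
  have v1 := V2 (fun t => t * q) _ _ e hB (fun x hx y hy => by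
    rw [← sub_mul, abs_mul, abs_of_pos q0, one_div_mul_eq_div, le_div_iff₀ qq]
    gcongr) hE
  have v2 := V2 (fun t => t * q / q) _ _ e hB (fun x hx y hy => by
    rw [mul_div_cancel_right₀ _ q0.ne', mul_div_cancel_right₀ _ q0.ne', one_div_mul_eq_div, le_div_iff₀ qq]
    have := abs_nonneg (x - y)
    nlinarith [hq.2]) hE
  have v3 := V2 (fun t => (1 - q) / (1 - t * q)) _ _ e hB (fun x hx y hy => anti_phi hq hx hy) hE
  have v4 := V2 (fun t => t * q * (1 - q) / (q * (1 - t * q))) _ _ e hB (fun x hx y hy => anti_psi hq hx hy) hE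
  have hpos : 0 ≤ (1 / (q * (1 - q))) ^ 2 * e := by positivity
  have : ENNReal.ofReal (4 * (1 / (q * (1 - q))) ^ 2 * e) = 
    ENNReal.ofReal ((1 / (q * (1 - q))) ^ 2 * e) + ENNReal.ofReal ((1 / (q * (1 - q))) ^ 2 * e) +
    ENNReal.ofReal ((1 / (q * (1 - q))) ^ 2 * e) + ENNReal.ofReal ((1 / (q * (1 - q))) ^ 2 * e) := by
    rw [← ENNReal.ofReal_add hpos hpos, ← ENNReal.ofReal_add (by linarith) hpos, ← ENNReal.ofReal_add (by linarith) hpos]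
    congr 1; ring
  rw [this]
  refine le_trans ?_ (add_le_add (add_le_add (add_le_add v1 v2) v3) v4)
  refine le_trans ?_ (add_le_add_left (add_le_add_left (measure_union_le _ _) _) _)
  refine le_trans ?_ (add_le_add_left (measure_union_le _ _) _)
  refine le_trans ?_ (measure_union_le _ _)
  apply measure_mono
  rintro ⟨t, s⟩ ⟨ht, hs, h⟩
  simp only at ht hs h
  have rg : ∀ t ∈ Ioo (0:ℝ) 1, t * q ∈ Ioo (0:ℝ) 1 ∧ t * q / q ∈ Ioo (0:ℝ) 1 ∧ (1 - q) / (1 - t * q) ∈ Ioo (0:ℝ) 1 ∧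
      t * q * (1 - q) / (q * (1 - t * q)) ∈ Ioo (0:ℝ) 1 := by
    intro t ht
    have : (t * q, q) ∈ P2 := ⟨mul_pos ht.1 q0, by simp only; nlinarith [ht.2], hq.2⟩
    exact ⟨⟨this.1, this.2.1.trans this.2.2⟩, p2_div this, p2_phi this, p2_psi this⟩
  obtain ⟨a1, a2, a3, a4⟩ := rg t ht
  obtain ⟨b1, b2, b3, b4⟩ := rg s hs
  by_contra hcon
  simp only [mem_union, Set.mem_ofPred_eq, not_or, not_and, not_lt] at hcon
  obtain ⟨⟨⟨c1, c2⟩, c3⟩, c4⟩ := hcon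
  have d1 := abs_le.1 (c1 ht hs a1 b1)
  have d2 := abs_le.1 (c2 ht hs a2 b2)
  have d3 := abs_le.1 (c3 ht hs a3 b3)
  have d4 := abs_le.1 (c4 ht hs a4 b4)
  rw [lt_abs] at h
  unfold DD at h
  rcases h with h | h <;> linarith [d1.1, d2.1, d3.1, d4.1, d1.2, d2.2, d3.2, d4.2]

lemma tight (R : ℝ × ℝ → ℝ) (c : ℝ → ℝ) {q : ℝ} (hq : q ∈ Ioo (0:ℝ) 1) (K e : ℝ) (he : 0 ≤ e) (hK : 0 ≤ K)
    (hE : volume {w : ℝ × ℝ | w.1 ∈ Ioo (0:ℝ) 1 ∧ w.2 ∈ Ioo (0:ℝ) 1 ∧ K < |hatR R w|} ≤ ENNReal.ofReal e)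
    (hc : (1/2 : ℝ≥0∞) ≤ volume {t : ℝ | t ∈ Ioo (0:ℝ) 1 ∧ R (t * q, q) ≤ c q} ∧
      (1/2 : ℝ≥0∞) ≤ volume {t : ℝ | t ∈ Ioo (0:ℝ) 1 ∧ c q - 1 ≤ R (t * q, q)})
    (hD : ∀ᵐ z : ℝ × ℝ, z.1 ∈ Ioo (0:ℝ) 1 → z.2 ∈ Ioo (0:ℝ) 1 →
      R (z.1 * q, q) - R (z.2 * q, q) = DD R (z.1 * q) (z.2 * q) q ∨ z.1 = z.2) :
    volume {t : ℝ | t ∈ Ioo (0:ℝ) 1 ∧ 4 * K + 1 < |R (t * q, q) - c q|} ≤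
      ENNReal.ofReal (16 * (1 / (q * (1 - q))) ^ 2 * e) := by
  have hT := DD_tight R hq K e hE he
  set T := {z : ℝ × ℝ | z.1 ∈ Ioo (0:ℝ) 1 ∧ z.2 ∈ Ioo (0:ℝ) 1 ∧ 4 * K < |DD R (z.1 * q) (z.2 * q) q|} with hTd
  set r := 4 * (1 / (q * (1 - q))) ^ 2 * e with hr
  have hr0 : 0 ≤ r := by positivity
  have key : ∀ A C : Set ℝ, A ⊆ Ioo 0 1 → C ⊆ Ioo 0 1 → (1/2 : ℝ≥0∞) ≤ volume C →
      (∀ t ∈ A, ∀ s ∈ C, 4 * K < |R (t * q, q) - R (s * q, q)|) → volume A ≤ ENNReal.ofReal (2 * r) := by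
    intro A C hA hC hC2 h
    have h1 : volume (A ×ˢ C) ≤ volume T := by
      apply measure_mono_ae
      filter_upwards [hD] with z hz hzA
      have za := hA hzA.1
      have zc := hC hzA.2
      have hlt := h _ hzA.1 _ hzA.2
      rcases hz za zc with h | h
      · exact ⟨za, zc, by rw [← h]; exact hlt⟩
      · rw [h, sub_self, abs_zero] at hlt
        linarith
    rw [Measure.volume_eq_prod, Measure.prod_prod] at h1
    have h2 : volume A * (1/2) ≤ ENNReal.ofReal r := by
      refine le_trans (by gcongr) (h1.trans (by rw [← Measure.volume_eq_prod]; exact hT))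
    rw [ENNReal.ofReal_mul (by norm_num), ENNReal.ofReal_ofNat]
    calc volume A = 2 * (volume A * (1/2)) := by
          rw [mul_comm, mul_assoc, one_div, ENNReal.inv_mul_cancel (by norm_num) (by norm_num), mul_one]
      _ ≤ _ := by gcongr
  have k1 := key {t : ℝ | t ∈ Ioo (0:ℝ) 1 ∧ 4 * K + 1 < R (t * q, q) - c q} _ (fun t ht => ht.1) (fun t ht => ht.1) hc.1
    (fun t ht s hs => by
      have := ht.2; have := hs.2
      rw [lt_abs]; left; linarith)
  have k2 := key {t : ℝ | t ∈ Ioo (0:ℝ) 1 ∧ 4 * K + 1 < -(R (t * q, q) - c q)} _ (fun t ht => ht.1) (fun t ht => ht.1) hc.2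
    (fun t ht s hs => by
      have := ht.2; have := hs.2
      rw [lt_abs]; right; linarith)
  have : ENNReal.ofReal (16 * (1 / (q * (1 - q))) ^ 2 * e) = ENNReal.ofReal (2 * r) + ENNReal.ofReal (2 * r) := by
    rw [← ENNReal.ofReal_add (by linarith) (by linarith)]
    congr 1; rw [hr]; ring
  rw [this]
  refine le_trans ?_ (add_le_add k1 k2)
  refine le_trans (measure_mono ?_) (measure_union_le _ _)
  rintro t ⟨ht, h⟩
  rcases lt_abs.1 h with h | h
  · left; exact ⟨ht, h⟩
  · right; exact ⟨ht, h⟩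


lemma anti_a {x v w : ℝ} (x1 : x < 1) (hv : v ∈ Ioo 0 x) (hw : w ∈ Ioo 0 x) {y : ℝ} (hy0 : 0 < y) (hy : y < 1) :
    |v - w| ≤ 1 / (1 - x) * |v / y - w / y| := by
  have e3 : 0 < 1 - x := by linarith
  have hx0 : 0 < x := hv.1.trans hv.2
  rw [← sub_div, abs_div, abs_of_pos hy0, one_div_mul_eq_div, le_div_iff₀ e3, le_div_iff₀ hy0]
  have : (1 - x) * y ≤ 1 := by nlinarith
  nlinarith [abs_nonneg (v - w)]

lemma anti_b {x v w : ℝ} (x1 : x < 1) (hv : v ∈ Ioo 0 x) (hw : w ∈ Ioo 0 x) :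
    |v - w| ≤ 1 / (1 - x) * |(1 - x) / (1 - v) - (1 - x) / (1 - w)| := by
  have hv0 := hv.1; have hv1 := hv.2; have hw0 := hw.1; have hw1 := hw.2
  have e1 : 0 < 1 - v := by linarith
  have e2 : 0 < 1 - w := by linarith
  have e3 : 0 < 1 - x := by linarith
  have e1' := e1.ne'
  have e2' := e2.ne'
  have : (1 - x) / (1 - v) - (1 - x) / (1 - w) = (1 - x) * ((v - w) / ((1 - v) * (1 - w))) := by
    field_simp; ring
  rw [this, abs_mul, abs_of_pos e3, ← mul_assoc, one_div, inv_mul_cancel₀ e3.ne', one_mul,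
    abs_div, abs_of_pos (mul_pos e1 e2), le_div_iff₀ (mul_pos e1 e2)]
  have : (1 - v) * (1 - w) ≤ 1 := by nlinarith
  nlinarith [abs_nonneg (v - w)]

lemma anti_c {x v w : ℝ} (x1 : x < 1) (hv : v ∈ Ioo 0 x) (hw : w ∈ Ioo 0 x) :
    |v - w| ≤ 1 / (1 - x) * |v * (1 - x) / (x * (1 - v)) - w * (1 - x) / (x * (1 - w))| := by
  have hv0 := hv.1; have hv1 := hv.2; have hw0 := hw.1; have hw1 := hw.2
  have hx0 : 0 < x := by linarith
  have e1 : 0 < 1 - v := by linarith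
  have e2 : 0 < 1 - w := by linarith
  have e3 : 0 < 1 - x := by linarith
  have e1' := e1.ne'
  have e2' := e2.ne'
  have : v * (1 - x) / (x * (1 - v)) - w * (1 - x) / (x * (1 - w)) = (1 - x) * ((v - w) / (x * ((1 - v) * (1 - w)))) := by
    field_simp; ring
  have e4 : 0 < x * ((1 - v) * (1 - w)) := by positivity
  rw [this, abs_mul, abs_of_pos e3, ← mul_assoc, one_div, inv_mul_cancel₀ e3.ne', one_mul,
    abs_div, abs_of_pos e4, le_div_iff₀ e4]
  have h1 : (1 - v) * (1 - w) ≤ 1 := by nlinarith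
  have h2 : x * ((1 - v) * (1 - w)) ≤ 1 := by
    have := mul_pos e1 e2
    nlinarith
  nlinarith [abs_nonneg (v - w)]

noncomputable def bq (q : ℝ) : ℝ := 16 * (1 / (q * (1 - q))) ^ 2

noncomputable def HH (p : ℝ × ℝ) : ℝ := 1 / (1 - p.1) * (bq p.2 + bq p.1 + bq (p.1 / p.2) + 
  bq ((1 - p.2) / (1 - p.1)) + bq (p.1 * (1 - p.2) / (p.2 * (1 - p.1))))

lemma bq_cont : ContinuousOn bq (Ioo 0 1) := by
  unfold bq
  refine ContinuousOn.mul continuousOn_const (ContinuousOn.pow (ContinuousOn.div continuousOn_const (by fun_prop) ?_) 2)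
  intro q hq
  exact mul_ne_zero hq.1.ne' (by linarith [hq.2])

lemma HH_cont : ContinuousOn HH P2 := by
  have n1 : ∀ p ∈ P2, 1 - p.1 ≠ 0 := fun p hp => by
    have := hp.2.1.trans hp.2.2; linarith
  have n2 : ∀ p ∈ P2, p.2 ≠ 0 := fun p hp => by
    have := hp.1.trans hp.2.1; linarith
  have gen : ∀ F : ℝ × ℝ → ℝ, ContinuousOn F P2 → (∀ p ∈ P2, F p ∈ Ioo (0:ℝ) 1) →
      ContinuousOn (fun p => bq (F p)) P2 := fun F h1 h2 => bq_cont.comp h1 h2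
  have g1 := gen (fun p => p.2) (by fun_prop) (fun p hp => ⟨hp.1.trans hp.2.1, hp.2.2⟩)
  have g2 := gen (fun p => p.1) (by fun_prop) (fun p hp => ⟨hp.1, hp.2.1.trans hp.2.2⟩)
  have g3 := gen (fun p => p.1 / p.2) (by fun_prop (disch := assumption)) (fun p hp => p2_div hp)
  have g4 := gen (fun p => (1 - p.2) / (1 - p.1)) (by fun_prop (disch := assumption)) (fun p hp => p2_phi hp)
  have g5 := gen (fun p => p.1 * (1 - p.2) / (p.2 * (1 - p.1)))
    (ContinuousOn.div (by fun_prop) (by fun_prop) (fun p hp => mul_ne_zero (n2 p hp) (n1 p hp))) (fun p hp => p2_psi hp)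
  exact (ContinuousOn.div continuousOn_const (by fun_prop) n1).mul ((((g1.add g2).add g3).add g4).add g5)

lemma good_pt {I Bad : Set ℝ} {Q : ℝ → Prop} (hU : volume Bad < volume I) (h0 : ∀ᵐ v, Q v) :
    ∃ v ∈ I \ Bad, Q v := by
  have hdiff : volume (I \ Bad) ≠ 0 := by
    intro h
    have := measure_mono_ae (ae_le_set.2 h)
    exact absurd this (not_le.2 hU)
  by_contra hcon
  push Not at hcon
  exact hdiff (measure_mono_null (fun v hv => hcon v hv) h0)

/-- the a.e. pointwise bound -/
lemma bound_ae (R : ℝ × ℝ → ℝ) (c : ℝ → ℝ) (K : ℝ) (e : ℝ) (he : 0 ≤ e)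
    (h6 : ∀ᵐ p ∂(volume.restrict P3), d6 R p.1 p.2.1 p.2.2 = 0)
    (hA : ∀ᵐ q ∂(volume.restrict (Ioo (0:ℝ) 1)), 
      volume {t : ℝ | t ∈ Ioo (0:ℝ) 1 ∧ K < |R (t * q, q) - c q|} ≤ ENNReal.ofReal (bq q * e)) :
    ∀ᵐ p ∂(volume.restrict P2), HH p * e < p.1 → |R p + d5 c p| ≤ 5 * K := by
  have h6' := h6
  rw [ae_restrict_iff' meas_P3] at h6'
  filter_upwards [ae_restrict_of_ae (ae_rot _ h6'), pq_1 _ hA, pq_2 _ hA, pq_div _ hA, pq_phi _ hA, pq_psi _ hA,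
    ae_P2 (Q := fun p => p ∈ P2) (fun p hp => hp)] with p h0 h1 h2 h3 h4 h5 hp hlt
  obtain ⟨x, y⟩ := p
  obtain ⟨p0, p1, p2⟩ := id hp
  simp only at h0 h1 h2 h3 h4 h5 p0 p1 p2 hlt
  have x1 : x < 1 := p1.trans p2
  have y0 : 0 < y := p0.trans p1
  have e3 : 0 < 1 - x := by linarith
  have e4 : 0 < 1 - y := by linarith
  have hB : 0 ≤ 1 / (1 - x) := by positivity
  have w1 := V1 (fun v => v / y) (Ioo 0 x) _ _ _ hB (fun v hv w hw => anti_a x1 hv hw y0 p2) h2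
  have w2 := V1 (fun v => v / x) (Ioo 0 x) _ _ _ hB (fun v hv w hw => anti_a x1 hv hw p0 x1) h1
  have w3 := V1 (fun v => v / x) (Ioo 0 x) _ _ _ hB (fun v hv w hw => anti_a x1 hv hw p0 x1) h3
  have w4 := V1 (fun v => (1 - x) / (1 - v)) (Ioo 0 x) _ _ _ hB (fun v hv w hw => anti_b x1 hv hw) h4
  have w5 := V1 (fun v => v * (1 - x) / (x * (1 - v))) (Ioo 0 x) _ _ _ hB (fun v hv w hw => anti_c x1 hv hw) h5
  have b0 : ∀ q, 0 ≤ 1 / (1 - x) * (bq q * e) := fun q => by unfold bq; positivity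
  have hsum := add_le_add (add_le_add (add_le_add (add_le_add w1 w2) w3) w4) w5
  rw [← ENNReal.ofReal_add (b0 _) (b0 _), ← ENNReal.ofReal_add (add_nonneg (b0 _) (b0 _)) (b0 _),
    ← ENNReal.ofReal_add (add_nonneg (add_nonneg (b0 _) (b0 _)) (b0 _)) (b0 _),
    ← ENNReal.ofReal_add (add_nonneg (add_nonneg (add_nonneg (b0 _) (b0 _)) (b0 _)) (b0 _)) (b0 _)] at hsum
  have hlt' : ∀ {a}, a ≤ ENNReal.ofReal (1 / (1 - x) * (bq y * e) + 1 / (1 - x) * (bq x * e) + 1 / (1 - x) * (bq (x / y) * e) +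
     1 / (1 - x) * (bq ((1 - y) / (1 - x)) * e) + 1 / (1 - x) * (bq (x * (1 - y) / (y * (1 - x))) * e)) → a < volume (Ioo 0 x) := by
    intro a ha
    refine lt_of_le_of_lt ha ?_
    rw [Real.volume_Ioo, sub_zero, ENNReal.ofReal_lt_ofReal_iff p0]
    refine lt_of_eq_of_lt ?_ hlt
    simp only [HH]; ring
  have hlt2 := hlt' hsum
  have hU := lt_of_le_of_lt ((measure_union_le _ _).trans (add_le_add_left ((measure_union_le _ _).trans
    (add_le_add_left ((measure_union_le _ _).trans (add_le_add_left (measure_union_le _ _) _)) _)) _)) hlt2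
  have := good_pt hU h0
  obtain ⟨v, ⟨hv, hvB⟩, hd⟩ := this
  have hd := hd ⟨hv.1, hv.2, p1, p2⟩
  have v0 := hv.1
  have vx := hv.2
  have e5 : 0 < 1 - v := by linarith
  simp only [mem_union, mem_inter_iff, mem_preimage, Set.mem_ofPred_eq, not_or, not_and, not_lt] at hvB
  obtain ⟨⟨⟨⟨c1, c2⟩, c3⟩, c4⟩, c5⟩ := hvB
  have r1 := c1 hv ⟨by positivity, (div_lt_one y0).2 (vx.trans p1)⟩
  have rx : v / x ∈ Ioo (0:ℝ) 1 := ⟨by positivity, (div_lt_one p0).2 vx⟩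
  have r2 := c2 hv rx
  have r3 := c3 hv rx
  have r4 := c4 hv ⟨by positivity, (div_lt_one e5).2 (by linarith)⟩
  have r5 := c5 hv ⟨by positivity, (div_lt_one (by positivity)).2 (by nlinarith)⟩
  have y0' := y0.ne'
  have p0' := p0.ne'
  have e3' := e3.ne'
  have e4' := e4.ne'
  have e5' := e5.ne'
  have s1 : v / y * y = v := by field_simp
  have s2 : v / x * x = v := by field_simp
  have s3 : v / x * (x / y) = v / y := by field_simp
  have s4 : (1 - x) / (1 - v) * ((1 - y) / (1 - x)) = (1 - y) / (1 - v) := by field_simp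
  have s5 : v * (1 - x) / (x * (1 - v)) * (x * (1 - y) / (y * (1 - x))) = v * (1 - y) / (y * (1 - v)) := by field_simp
  rw [s1, abs_le] at r1
  rw [s2, abs_le] at r2
  rw [s3, abs_le] at r3
  rw [s4, abs_le] at r4
  rw [s5, abs_le] at r5
  unfold d6 at hd
  unfold d5
  simp only
  rw [abs_le]
  constructor <;> linarith [r1.1, r1.2, r2.1, r2.2, r3.1, r3.2, r4.1, r4.2, r5.1, r5.2]

lemma step1 (R : ℝ × ℝ → ℝ) (hR : Measurable R) (h6 : ∀ᵐ p ∂(volume.restrict P3), d6 R p.1 p.2.1 p.2.2 = 0) :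
    ∃ c R1, Measurable c ∧ Measurable R1 ∧ LB R1 ∧ ∀ᵐ p ∂(volume.restrict P2), R1 p = R p + d5 c p := by
  obtain ⟨c, hcm, hc⟩ := median R hR
  obtain ⟨g, g0, gt, hg⟩ := tail R hR
  have hD := DD_ae2 R h6
  have hb : ∀ᵐ p ∂(volume.restrict P2), ∀ n : ℕ, HH p * g n < p.1 → |R p + d5 c p| ≤ 5 * (4 * n + 1) := by
    rw [ae_all_iff]
    intro n
    apply bound_ae R c _ (g n) (g0 n) h6
    rw [ae_restrict_iff' measurableSet_Ioo]
    filter_upwards [hD] with q hq hq01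
    exact tight R c hq01 n (g n) (g0 n) (Nat.cast_nonneg n) (hg n) (hc q) (hq hq01)
  rw [ae_restrict_iff' meas_P2, ae_iff] at hb
  obtain ⟨N, hN, hNm, hN0⟩ := exists_measurable_superset_of_null hb
  refine ⟨c, Nᶜ.indicator (fun p => R p + d5 c p), hcm, ?_, ?_, ?_⟩
  · apply Measurable.indicator _ hNm.compl
    unfold d5
    fun_prop
  · intro K hK hKP
    by_cases hne : K.Nonempty
    swap
    · exact ⟨0, fun p hp => absurd ⟨p, hp⟩ hne⟩
    have hcont : ContinuousOn (fun p => HH p / p.1) K :=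
      (HH_cont.mono hKP).div (by fun_prop) (fun p hp => (hKP hp).1.ne')
    obtain ⟨M, hM⟩ := hK.exists_bound_of_continuousOn hcont
    have ht2 : Filter.Tendsto (fun n => M * g n) Filter.atTop (nhds 0) := by simpa using gt.const_mul M
    obtain ⟨n, hn⟩ := (ht2.eventually (gt_mem_nhds (show (0:ℝ) < 1 by norm_num))).exists
    refine ⟨5 * (4 * n + 1), fun p hp => ?_⟩
    by_cases hpN : p ∈ N
    · rw [indicator_of_notMem (by simpa using hpN)]
      simp only [abs_zero]; positivity
    rw [indicator_of_mem hpN]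
    have hh : p ∈ P2 → ∀ n : ℕ, HH p * g n < p.1 → |R p + d5 c p| ≤ 5 * (4 * n + 1) := by
      by_contra hcon
      exact hpN (hN hcon)
    refine hh (hKP hp) n ?_
    have h1 := (le_abs_self _).trans (hM p hp)
    have p0 := (hKP hp).1
    rw [div_le_iff₀ p0] at h1
    have := mul_le_mul_of_nonneg_right h1 (g0 n)
    nlinarith
  · apply ae_restrict_of_ae
    have : ∀ᵐ p : ℝ × ℝ, p ∉ N := by rw [ae_iff]; simpa using hN0
    filter_upwards [this] with p hp
    rw [indicator_of_mem hp]

lemma thmA (R : ℝ × ℝ → ℝ) (hR : Measurable R) (h6 : ∀ᵐ p ∂(volume.restrict P3), d6 R p.1 p.2.1 p.2.2 = 0) :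
    ∃ L, AEMeasurable L (volume.restrict (Ioo (0:ℝ) 1)) ∧ ∀ᵐ p ∂(volume.restrict P2), d5 L p = R p := by
  obtain ⟨c, R1, hc, hR1, hl, hae⟩ := step1 R hR h6
  obtain ⟨L, hL, hL2⟩ := thmA_LB R1 hR1 hl (by
    filter_upwards [d6_congr_ae hae, d6_d5_ae c, h6] with p h1 h2 h3
    rw [h1, d6_add, h2, h3, add_zero])
  refine ⟨fun t => L t - c t, hL.sub hc.aemeasurable, ?_⟩
  filter_upwards [hae, hL2] with p h1 h2
  have : d5 (fun t => L t - c t) p = d5 L p - d5 c p := by unfold d5; ring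
  rw [this, h2, h1]; ring

/-- **Existence** for the perturbed Spence–Abel system: a measurable a.e. solution with data
`(R, C)` exists if and only if `R` satisfies the 6-term equation and the symmetry equation
almost everywhere. -/
theorem perturbed_spence_abel_existence (R : ℝ × ℝ → ℝ)
    (hR : AEMeasurable R (volume.restrict P2)) (C : ℝ) :
    (∃ L : ℝ → ℝ, AEMeasurable L (volume.restrict (Set.Ioo (0:ℝ) 1)) ∧ SolvesAE R C L) ↔
      (SixTermAE R ∧ SymmAE R) := by
  exact ⟨fun ⟨L, _, h⟩ => forward R C L h, fun h => backward thmA R hR C h.1 h.2⟩
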